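/- arXiv:1106.4714 — 2 statements merged into one kernel-verified Lean document; each statement's English description precedes it below -/
import Mathlib

section
/- For every β ≥ 0, c ≥ 0, N ∈ ℕ, and every discrete random spin structure 𝓛 ∈ 𝒮, the quenched pressure satisfies the replica symmetry breaking bound p_N(β,c) ≤ G_N^(1)(β,c,𝓛) − G_N^(2)(β,c,𝓛). -/
open MeasureTheory Filter

/-- Poisson probability mass function with parameter `lam`. -/
noncomputable def poissonPMF (lam : ℝ) (k : ℕ) : ℝ :=
  Real.exp (-lam) * lam ^ k / (Nat.factorial k)

/-- Potts Hamiltonian `H_N(σ, J) = Σ_{i,j} J_{ij} δ(σ_i, σ_j)`. -/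
noncomputable def potts.H (q N : ℕ) (σ : Fin N → Fin q) (J : Fin N → Fin N → ℝ) : ℝ :=
  ∑ i, ∑ j, J i j * (if σ i = σ j then (1 : ℝ) else 0)

/-- Partition function `Z_N(J)`. -/
noncomputable def potts.Z (q N : ℕ) (J : Fin N → Fin N → ℝ) : ℝ :=
  ∑ σ : Fin N → Fin q, Real.exp (- potts.H q N σ J)

/-- Expectation over the Poissonian disorder: the entries `J_{ij}` are independent
Poisson random variables with means `c_{ij} / (2N)`. -/
noncomputable def potts.E (N : ℕ) (c : Fin N → Fin N → ℝ)
    (g : (Fin N → Fin N → ℕ) → ℝ) : ℝ :=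
  ∑' J : Fin N → Fin N → ℕ,
    (∏ i, ∏ j, poissonPMF (c i j / (2 * N)) (J i j)) * g J

/-- Quenched pressure for a general nonnegative connectivity matrix `c`. -/
noncomputable def potts.pmat (q N : ℕ) (β : ℝ) (c : Fin N → Fin N → ℝ) : ℝ :=
  potts.E N c (fun J => (1 / N) * Real.log (potts.Z q N (fun i j => β * (J i j : ℝ))))

/-- Quenched pressure for the constant connectivity matrix `c_{ij} ≡ c`. -/
noncomputable def potts.p (q N : ℕ) (β c : ℝ) : ℝ :=
  potts.pmat q N β (fun _ _ => c)

/-- Annealed pressure `𝒫(β, c) = ln q + (c/2) ln(1 - (1 - e^{-β})/q)`. -/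
noncomputable def potts.annealed (q : ℕ) (β c : ℝ) : ℝ :=
  Real.log q + (c / 2) * Real.log (1 - (1 - Real.exp (-β)) / q)

/-- The space `Δ × [q]^{ℕ×ℕ}` of (weights, replicas); `Δ`-membership is imposed
via the measure below. -/
abbrev SpinStruct (q : ℕ) := (ℕ → ℝ) × (ℕ → ℕ → Fin q)

/-- A discrete random spin structure: a Borel probability measure on
`Δ × [q]^{ℕ×ℕ}` concentrated on `Δ₁` (nonnegative, nonincreasing weights summing
to one), invariant under the simultaneous action on all replicas of every
finitely supported bijection of the spin index. -/
def IsRSS (q : ℕ) (L : Measure (SpinStruct q)) : Prop :=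
  IsProbabilityMeasure L ∧
  L {p : SpinStruct q | (∀ n, 0 ≤ p.1 n) ∧ Antitone p.1 ∧ HasSum p.1 1} = 1 ∧
  ∀ π : Equiv.Perm ℕ, {n | π n ≠ n}.Finite →
    Measure.map (fun p : SpinStruct q => (p.1, fun α k => p.2 α (π k))) L = L

/-- The interaction term `G_N^{(1)}(β, c, 𝓛)` of the cavity field functional. -/
noncomputable def G1 (q N : ℕ) (β c : ℝ) (L : Measure (SpinStruct q)) : ℝ :=
  ∫ p, (∑' k : ℕ, (poissonPMF (c * N) k / (N : ℝ) ^ k) *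
    ∑ I : Fin k → Fin N, (1 / (N : ℝ)) *
      Real.log (∑' α : ℕ, p.1 α *
        ∑ σ : Fin N → Fin q, Real.exp (-β *
          ∑ i : Fin k, (if p.2 α i.1 = σ (I i) then (1 : ℝ) else 0)))) ∂L

/-- The self-energy term `G_N^{(2)}(β, c, 𝓛)` of the cavity field functional. -/
noncomputable def G2 (q N : ℕ) (β c : ℝ) (L : Measure (SpinStruct q)) : ℝ :=
  ∫ p, (∑' K : ℕ, (poissonPMF (c * N / 2) K / (N : ℝ)) *
    Real.log (∑' α : ℕ, p.1 α *
      Real.exp (-β * ∑ k : Fin K,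
        (if p.2 α (2 * k.1) = p.2 α (2 * k.1 + 1) then (1 : ℝ) else 0)))) ∂L




namespace RSB

/-- Gram kernels: powers are positive semidefinite. -/
lemma pow_psd {X ι : Type*} [Fintype ι] {q : ℕ} (w : X → ℝ) (hw : ∀ x, 0 ≤ w x)
    (hs : Summable w) (f : ι → X → Fin q) (r : ℕ) :
    ∀ c : ι → ℝ, 0 ≤ ∑ u, ∑ v, c u * c v *
      (∑' x, w x * (if f u x = f v x then (1:ℝ) else 0)) ^ r := by
  induction r with
  | zero =>
    intro c
    simp only [pow_zero, mul_one]
    rw [← Finset.sum_mul_sum]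
    exact mul_self_nonneg _
  | succ r ih =>
    intro c
    have hsum : ∀ u v, Summable fun x => w x * (if f u x = f v x then (1:ℝ) else 0) := by
      intro u v
      refine Summable.of_nonneg_of_le (fun x => ?_) (fun x => ?_) hs
      · have := hw x; split_ifs <;> simp [this]
      · have := hw x; split_ifs <;> simp [this]
    set y : ι → ι → ℝ := fun u v => ∑' x, w x * (if f u x = f v x then (1:ℝ) else 0) with hy
    have key : ∀ x, 0 ≤ ∑ u, ∑ v, c u * c v * y u v ^ r *
        (w x * (if f u x = f v x then (1:ℝ) else 0)) := by
      intro x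
      have : ∑ u, ∑ v, c u * c v * y u v ^ r * (w x * (if f u x = f v x then (1:ℝ) else 0))
          = w x * ∑ s : Fin q, ∑ u, ∑ v, (c u * if f u x = s then (1:ℝ) else 0) *
            (c v * if f v x = s then (1:ℝ) else 0) * y u v ^ r := by
        simp_rw [Finset.mul_sum]
        symm
        rw [Finset.sum_comm]
        refine Finset.sum_congr rfl fun u _ => ?_
        rw [Finset.sum_comm]
        refine Finset.sum_congr rfl fun v _ => ?_
        rw [Finset.sum_eq_single (f u x)]
        · by_cases h : f u x = f v x
          · simp [h]; ring
          · simp [h, Ne.symm h]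
        · intro s _ hs'
          simp [Ne.symm hs']
        · simp
      rw [this]
      exact mul_nonneg (hw x) (Finset.sum_nonneg fun s _ => ih _)
    have : ∑ u, ∑ v, c u * c v * y u v ^ (r+1) = ∑' x, ∑ u, ∑ v, c u * c v * y u v ^ r *
        (w x * (if f u x = f v x then (1:ℝ) else 0)) := by
      rw [Summable.tsum_finsetSum]
      · refine Finset.sum_congr rfl fun u _ => ?_
        rw [Summable.tsum_finsetSum]
        · refine Finset.sum_congr rfl fun v _ => ?_
          rw [tsum_mul_left, pow_succ, mul_assoc (c u * c v)]
        · intro v _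
          exact (hsum u v).mul_left _
      · intro u _
        exact summable_sum fun v _ => (hsum u v).mul_left _
    rw [this]
    exact tsum_nonneg key

lemma log_nd {X ι : Type*} [Fintype ι] {q : ℕ} (β : ℝ) (hβ : 0 ≤ β) (w : X → ℝ)
    (hw : ∀ x, 0 ≤ w x) (hs : Summable w) (hZ : 0 < ∑' x, w x) (f : ι → X → Fin q)
    (c : ι → ℝ) (hc : ∑ u, c u = 0) :
    ∑ u, ∑ v, c u * c v *
      Real.log (∑' x, w x * Real.exp (-β * (if f u x = f v x then (1:ℝ) else 0))) ≤ 0 := by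
  set Z := ∑' x, w x with hZd
  set b := 1 - Real.exp (-β) with hb
  have hb0 : 0 ≤ b := by rw [hb]; simp [hβ]
  have hb1 : b < 1 := by rw [hb]; linarith [Real.exp_pos (-β)]
  let g : X → ℝ := fun x => w x / Z
  have hg : ∀ x, 0 ≤ g x := fun x => div_nonneg (hw x) hZ.le
  have hgs : Summable g := hs.div_const _
  have hg1 : ∑' x, g x = 1 := by
    simp only [g]; rw [tsum_div_const]; exact div_self hZ.ne'
  let y : ι → ι → ℝ := fun u v => ∑' x, g x * (if f u x = f v x then (1:ℝ) else 0)
  have hsum : ∀ u v, Summable fun x => g x * (if f u x = f v x then (1:ℝ) else 0) := by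
    intro u v
    refine Summable.of_nonneg_of_le (fun x => ?_) (fun x => ?_) hgs
    · have := hg x; split_ifs <;> simp [this]
    · have := hg x; split_ifs <;> simp [this]
  have hy0 : ∀ u v, 0 ≤ y u v := fun u v => tsum_nonneg fun x => by
    have := hg x; split_ifs <;> simp [this]
  have hy1 : ∀ u v, y u v ≤ 1 := fun u v => by
    rw [← hg1]
    refine Summable.tsum_le_tsum (fun x => ?_) (hsum u v) hgs
    have := hg x; split_ifs <;> simp [this]
  have hby : ∀ u v, |b * y u v| < 1 := fun u v => by
    rw [abs_of_nonneg (mul_nonneg hb0 (hy0 u v))]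
    nlinarith [hy0 u v, hy1 u v]
  have hlog : ∀ u v, Real.log (∑' x, w x * Real.exp (-β * (if f u x = f v x then (1:ℝ) else 0)))
      = Real.log Z + Real.log (1 - b * y u v) := by
    intro u v
    have h1 : 0 < 1 - b * y u v := by
      have := (abs_lt.1 (hby u v)).2; linarith
    rw [← Real.log_mul hZ.ne' h1.ne']
    congr 1
    have : ∀ x, w x * Real.exp (-β * (if f u x = f v x then (1:ℝ) else 0))
        = w x - Z * b * (g x * (if f u x = f v x then (1:ℝ) else 0)) := by
      intro x
      have : w x = Z * g x := by simp only [g]; field_simp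
      rw [this]
      split_ifs
      · simp [hb]; ring
      · simp
    rw [tsum_congr this, Summable.tsum_sub hs ((hsum u v).mul_left _), tsum_mul_left]
    simp only [y]; ring
  have hS : HasSum (fun n : ℕ => ∑ u, ∑ v, c u * c v * ((b * y u v) ^ (n+1) / ((n:ℝ)+1)))
      (∑ u, ∑ v, c u * c v * (-Real.log (1 - b * y u v))) := by
    refine hasSum_sum fun u _ => hasSum_sum fun v _ => ?_
    exact (Real.hasSum_pow_div_log_of_abs_lt_one (hby u v)).mul_left _
  have hnn : 0 ≤ ∑ u, ∑ v, c u * c v * (-Real.log (1 - b * y u v)) := by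
    refine hS.nonneg fun n => ?_
    have := pow_psd g hg hgs f (n+1) c
    have h2 : ∑ u, ∑ v, c u * c v * ((b * y u v) ^ (n+1) / ((n:ℝ)+1))
        = b^(n+1)/((n:ℝ)+1) * ∑ u, ∑ v, c u * c v * y u v ^ (n+1) := by
      rw [Finset.mul_sum]
      refine Finset.sum_congr rfl fun u _ => ?_
      rw [Finset.mul_sum]
      refine Finset.sum_congr rfl fun v _ => ?_
      rw [mul_pow]; ring
    rw [h2]
    exact mul_nonneg (by positivity) this
  have hfin : ∑ u, ∑ v, c u * c v * (Real.log Z + Real.log (1 - b * y u v))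
      = - ∑ u, ∑ v, c u * c v * (-Real.log (1 - b * y u v)) := by
    have h0 : ∑ u, ∑ v, c u * c v * Real.log Z = 0 := by
      simp_rw [← Finset.sum_mul, ← Finset.mul_sum]
      simp [hc]
    simp only [mul_add, Finset.sum_add_distrib, h0, mul_neg, Finset.sum_neg_distrib]
    ring
  simp_rw [hlog]
  rw [hfin]
  linarith

end RSB



namespace RSB

/-- good configurations -/
def Good {q : ℕ} (p : SpinStruct q) : Prop :=
  (∀ n, 0 ≤ p.1 n) ∧ Antitone p.1 ∧ HasSum p.1 1

lemma good_ae {q : ℕ} {L : Measure (SpinStruct q)} (hL : IsRSS q L) : ∀ᵐ p ∂L, Good p := by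
  obtain ⟨hP, h1, -⟩ := hL
  have hset : {p : SpinStruct q | (∀ n, 0 ≤ p.1 n) ∧ Antitone p.1 ∧ HasSum p.1 1} =
      (⋂ n, {p : SpinStruct q | 0 ≤ p.1 n}) ∩ (⋂ a, ⋂ b, ⋂ _ : a ≤ b, {p : SpinStruct q | p.1 b ≤ p.1 a})
      ∩ {p : SpinStruct q | Tendsto (fun n => ∑ i ∈ Finset.range n, p.1 i) atTop (nhds 1)} := by
    ext p
    simp only [Set.mem_ofPred_eq, Set.mem_inter_iff, Set.mem_iInter, Antitone]
    constructor
    · rintro ⟨a, b, c⟩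
      exact ⟨⟨a, fun i j h => b h⟩, c.tendsto_sum_nat⟩
    · rintro ⟨⟨a, b⟩, c⟩
      exact ⟨a, fun i j h => b i j h, (hasSum_iff_tendsto_nat_of_nonneg a 1).2 c⟩
  have hm : MeasurableSet {p : SpinStruct q | (∀ n, 0 ≤ p.1 n) ∧ Antitone p.1 ∧ HasSum p.1 1} := by
    rw [hset]
    refine MeasurableSet.inter (MeasurableSet.inter ?_ ?_) ?_
    · exact MeasurableSet.iInter fun n => measurableSet_le measurable_const (by fun_prop)
    · exact MeasurableSet.iInter fun a => MeasurableSet.iInter fun b => MeasurableSet.iInter fun _ =>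
        measurableSet_le (by fun_prop) (by fun_prop)
    · exact measurableSet_tendsto _ fun n => by fun_prop
  exact (prob_compl_eq_zero_iff hm).2 h1

/-- action of reindexing -/
def act {q : ℕ} (e : ℕ → ℕ) (p : SpinStruct q) : SpinStruct q := (p.1, fun α k => p.2 α (e k))

lemma act_measurable {q : ℕ} (e : ℕ → ℕ) : Measurable (act e : SpinStruct q → SpinStruct q) := by
  unfold act; fun_prop

abbrev Cfg (q N : ℕ) := ℕ × (Fin N → Fin q)

/-- weighted partition function -/
noncomputable def W {q N : ℕ} (β : ℝ) (E : SpinStruct q → Cfg q N → ℝ) (p : SpinStruct q) : ℝ :=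
  ∑' x : Cfg q N, p.1 x.1 * Real.exp (-β * E p x)

noncomputable def V {q N : ℕ} (β : ℝ) (L : Measure (SpinStruct q))
    (E : SpinStruct q → Cfg q N → ℝ) : ℝ := ∫ p, Real.log (W β E p) ∂L

/-- admissible energies -/
structure Adm {q N : ℕ} (n : ℕ) (E : SpinStruct q → Cfg q N → ℝ) : Prop where
  meas : ∀ x, Measurable fun p => E p x
  nonneg : ∀ p x, 0 ≤ E p x
  le : ∀ p x, E p x ≤ n

section
variable {q N : ℕ} {E E' : SpinStruct q → Cfg q N → ℝ} {β : ℝ} {n m : ℕ}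

lemma Adm.add (h : Adm n E) (h' : Adm m E') : Adm (n+m) (fun p x => E p x + E' p x) where
  meas x := (h.meas x).add (h'.meas x)
  nonneg p x := add_nonneg (h.nonneg p x) (h'.nonneg p x)
  le p x := by push_cast; exact add_le_add (h.le p x) (h'.le p x)

lemma Adm.ite (A B : SpinStruct q → Cfg q N → Fin q) (hA : ∀ x, Measurable fun p => A p x)
    (hB : ∀ x, Measurable fun p => B p x) :
    Adm 1 (fun p x => if A p x = B p x then (1:ℝ) else 0) where
  meas x := Measurable.ite (measurableSet_eq_fun (hA x) (hB x)) measurable_const measurable_const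
  nonneg p x := by positivity
  le p x := by split_ifs <;> simp

lemma Adm.sum {k : ℕ} (F : Fin k → SpinStruct q → Cfg q N → ℝ) (h : ∀ i, Adm 1 (F i)) :
    Adm k (fun p x => ∑ i, F i p x) where
  meas x := Finset.measurable_sum _ fun i _ => (h i).meas x
  nonneg p x := Finset.sum_nonneg fun i _ => (h i).nonneg p x
  le p x := by
    refine (Finset.sum_le_sum fun i _ => (h i).le p x).trans ?_
    simp

lemma base_hasSum {p : SpinStruct q} (hp : Good p) :
    HasSum (fun x : Cfg q N => p.1 x.1) ((q:ℝ)^N) := by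
  have hf := hasSum_fintype (fun _ : Fin N → Fin q => (1:ℝ))
  have hs := hp.2.2.summable.mul_of_nonneg hf.summable hp.1 (fun _ => zero_le_one)
  have h := HasSum.mul hp.2.2 hf hs
  simpa using h

lemma W_summable (hβ : 0 ≤ β) (hE : Adm n E) {p : SpinStruct q} (hp : Good p) :
    Summable (fun x : Cfg q N => p.1 x.1 * Real.exp (-β * E p x)) := by
  refine Summable.of_nonneg_of_le (fun x => mul_nonneg (hp.1 _) (Real.exp_pos _).le) (fun x => ?_)
    (base_hasSum hp).summable
  refine mul_le_of_le_one_right (hp.1 _) (Real.exp_le_one_iff.2 ?_)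
  have := mul_nonneg hβ (hE.nonneg p x); linarith

lemma W_le (hβ : 0 ≤ β) (hE : Adm n E) {p : SpinStruct q} (hp : Good p) :
    W β E p ≤ (q:ℝ)^N := by
  refine (W_summable hβ hE hp).tsum_le_of_sum_le ?_ |> fun h => h
  intro s
  rw [← (base_hasSum (N := N) hp).tsum_eq]
  refine (Finset.sum_le_sum fun x _ => ?_).trans
    ((base_hasSum (N := N) hp).summable.sum_le_tsum s (fun x _ => hp.1 _))
  refine mul_le_of_le_one_right (hp.1 _) (Real.exp_le_one_iff.2 ?_)
  have := mul_nonneg hβ (hE.nonneg p x); linarith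

lemma le_W (hβ : 0 ≤ β) (hE : Adm n E) {p : SpinStruct q} (hp : Good p) :
    (q:ℝ)^N * Real.exp (-β * n) ≤ W β E p := by
  rw [← (base_hasSum (N := N) hp).tsum_eq, ← tsum_mul_right]
  refine Summable.tsum_le_tsum (fun x => ?_) ((base_hasSum hp).summable.mul_right _)
    (W_summable hβ hE hp)
  refine mul_le_mul_of_nonneg_left (Real.exp_le_exp.2 ?_) (hp.1 _)
  have := mul_le_mul_of_nonneg_left (hE.le p x) hβ; linarith

lemma W_pos (hq : 2 ≤ q) (hβ : 0 ≤ β) (hE : Adm n E) {p : SpinStruct q} (hp : Good p) :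
    0 < W β E p := lt_of_lt_of_le (by positivity) (le_W hβ hE hp)

lemma logW_bound (hq : 2 ≤ q) (hβ : 0 ≤ β) (hE : Adm n E) {p : SpinStruct q} (hp : Good p) :
    |Real.log (W β E p)| ≤ N * Real.log q + β * n := by
  have hq0 : (0:ℝ) < q := by positivity
  have h1 := Real.log_le_log (W_pos hq hβ hE hp) (W_le hβ hE hp)
  have h2 := Real.log_le_log (by positivity) (le_W hβ hE hp)
  rw [Real.log_mul (by positivity) (Real.exp_pos _).ne', Real.log_exp, Real.log_pow] at h2
  rw [Real.log_pow] at h1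
  have : 0 ≤ Real.log q := Real.log_natCast_nonneg q
  have h3 : 0 ≤ (N:ℝ) * Real.log q := by positivity
  have h4 : 0 ≤ β * n := by positivity
  rw [abs_le]; constructor <;> linarith

lemma W_measurable (hE : Adm n E) : Measurable (W β E) := by
  unfold W
  refine Measurable.tsum fun x => ?_
  have := hE.meas x
  fun_prop

variable {L : Measure (SpinStruct q)}

lemma logW_integrable (hq : 2 ≤ q) (hL : IsRSS q L) (hβ : 0 ≤ β) (hE : Adm n E) :
    Integrable (fun p => Real.log (W β E p)) L := by
  have := hL.1
  refine Integrable.of_bound (W_measurable hE).log.aestronglyMeasurable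
    (N * Real.log q + β * n) ?_
  filter_upwards [good_ae hL] with p hp
  exact logW_bound hq hβ hE hp

lemma V_bound (hq : 2 ≤ q) (hL : IsRSS q L) (hβ : 0 ≤ β) (hE : Adm n E) :
    |V β L E| ≤ N * Real.log q + β * n := by
  have := hL.1
  have := norm_integral_le_of_norm_le_const (μ := L) (f := fun p => Real.log (W β E p)) (C := N * Real.log q + β * n) (by
    filter_upwards [good_ae hL] with p hp
    exact logW_bound hq hβ hE hp)
  simpa [V] using this

lemma V_perm (hL : IsRSS q L) (hE : Adm n E) (π : Equiv.Perm ℕ) (hπ : {n | π n ≠ n}.Finite) :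
    V β L (fun p x => E (act π p) x) = V β L E := by
  have h : Measure.map (act π) L = L := hL.2.2 π hπ
  unfold V
  conv_rhs => rw [← h]
  rw [integral_map (act_measurable π).aemeasurable]
  · rfl
  · exact (W_measurable hE).log.aestronglyMeasurable

lemma exists_perm (e : ℕ → ℕ) (he : Function.Injective e) (n : ℕ) :
    ∃ π : Equiv.Perm ℕ, {n | π n ≠ n}.Finite ∧ ∀ i < n, π i = e i := by
  obtain ⟨B, hB1, hB2⟩ : ∃ B, n ≤ B ∧ ∀ i < n, e i < B := by
    refine ⟨n + (∑ i ∈ Finset.range n, (e i + 1)), by omega, fun i hi => ?_⟩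
    have := Finset.single_le_sum (f := fun i => e i + 1) (fun _ _ => Nat.zero_le _) (Finset.mem_range.2 hi)
    omega
  obtain ⟨g, hg⟩ := Finset.exists_equiv_extend_of_card_eq (α := Fin B) (t := Finset.range B) (by simp)
    (s := Finset.univ.filter fun i : Fin B => i.1 < n) (f := fun i => e i.1)
    (by
      intro j
      simp only [Finset.mem_image, Finset.mem_filter, Finset.mem_univ, true_and, Finset.mem_range]
      rintro ⟨i, hi, rfl⟩
      exact hB2 _ hi)
    (fun a _ b _ h => Fin.ext (he h))
  let f : Fin B ≃ {x // x ∈ Finset.range B} :=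
    ⟨fun i => ⟨i.1, Finset.mem_range.2 i.2⟩, fun x => ⟨x.1, Finset.mem_range.1 x.2⟩,
      fun _ => rfl, fun _ => rfl⟩
  let σ : Equiv.Perm (Fin B) := g.trans f.symm
  refine ⟨σ.extendDomain f, ?_, fun i hi => ?_⟩
  · refine (Finset.range B).finite_toSet.subset fun k hk => ?_
    by_contra hc
    exact hk (Equiv.Perm.extendDomain_apply_not_subtype _ _ hc)
  · have := Equiv.Perm.extendDomain_apply_image σ f ⟨i, by omega⟩
    have h2 := hg ⟨i, by omega⟩ (by simp [hi])
    simp only [f] at this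
    simp only [Equiv.coe_fn_mk] at this
    rw [this]
    simpa [σ, f] using h2

lemma V_inj (hL : IsRSS q L) (hE : Adm n E) (e : ℕ → ℕ) (he : Function.Injective e) (B : ℕ)
    (hloc : ∀ p p' : SpinStruct q, p.1 = p'.1 → (∀ α, ∀ i < B, p.2 α i = p'.2 α i) →
      ∀ x, E p x = E p' x) :
    V β L (fun p x => E (act e p) x) = V β L E := by
  obtain ⟨π, h1, h2⟩ := exists_perm e he B
  rw [← V_perm hL hE π h1]
  congr 1
  funext p x
  refine hloc (act e p) (act π p) rfl (fun α i hi => ?_) x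
  simp [act, h2 i hi]
end
end RSB



namespace RSB
section
variable {q N : ℕ}

noncomputable def dss (i j : Fin N) (_p : SpinStruct q) (x : Cfg q N) : ℝ :=
  if x.2 i = x.2 j then (1:ℝ) else 0
noncomputable def dts (a : ℕ) (i : Fin N) (p : SpinStruct q) (x : Cfg q N) : ℝ :=
  if p.2 x.1 a = x.2 i then (1:ℝ) else 0
noncomputable def dtt (a b : ℕ) (p : SpinStruct q) (x : Cfg q N) : ℝ :=
  if p.2 x.1 a = p.2 x.1 b then (1:ℝ) else 0

lemma adm_dss (i j : Fin N) : Adm 1 (dss i j : SpinStruct q → Cfg q N → ℝ) :=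
  Adm.ite (fun _ x => x.2 i) (fun _ x => x.2 j) (fun _ => measurable_const) (fun _ => measurable_const)
lemma adm_dts (a : ℕ) (i : Fin N) : Adm 1 (dts a i : SpinStruct q → Cfg q N → ℝ) :=
  Adm.ite (fun p x => p.2 x.1 a) (fun _ x => x.2 i) (fun _ => by fun_prop) (fun _ => measurable_const)
lemma adm_dtt (a b : ℕ) : Adm 1 (dtt a b : SpinStruct q → Cfg q N → ℝ) :=
  Adm.ite (fun p x => p.2 x.1 a) (fun p x => p.2 x.1 b) (fun _ => by fun_prop) (fun _ => by fun_prop)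

variable {E : SpinStruct q → Cfg q N → ℝ} {β : ℝ} {n : ℕ} {L : Measure (SpinStruct q)}

lemma swap_fin (a b : ℕ) : {n | Equiv.swap a b n ≠ n}.Finite := by
  refine (Set.toFinite {a, b}).subset fun k hk => ?_
  by_contra hc
  simp only [Set.mem_insert_iff, Set.mem_singleton_iff, not_or] at hc
  exact hk (Equiv.swap_apply_of_ne_of_ne hc.1 hc.2)

lemma pointwise (hq : 2 ≤ q) (hN : 0 < N) (hβ : 0 ≤ β) (hE : Adm n E) (R M : ℕ) (hM : 0 < M)
    {p : SpinStruct q} (hp : Good p) :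
    ((N:ℝ)^2)⁻¹ * ∑ i, ∑ j, Real.log (W β (fun p x => E p x + dss i j p x) p)
    - 2 * ((N:ℝ)⁻¹ * (M:ℝ)⁻¹ * ∑ i : Fin N, ∑ u : Fin M,
        Real.log (W β (fun p x => E p x + dts (R+u) i p x) p))
    + ((M:ℝ)^2)⁻¹ * ∑ u : Fin M, ∑ v : Fin M,
        Real.log (W β (fun p x => E p x + dtt (R+u) (R+v) p x) p) ≤ 0 := by
  have key := log_nd (ι := Fin N ⊕ Fin M) β hβ (fun x : Cfg q N => p.1 x.1 * Real.exp (-β * E p x))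
    (fun x => mul_nonneg (hp.1 _) (Real.exp_pos _).le) (W_summable hβ hE hp) (W_pos hq hβ hE hp)
    (Sum.elim (fun i x => x.2 i) (fun u x => p.2 x.1 (R+u)))
    (Sum.elim (fun _ => (N:ℝ)⁻¹) (fun _ => -(M:ℝ)⁻¹)) (by
      have : (N:ℝ) ≠ 0 := by positivity
      have : (M:ℝ) ≠ 0 := by positivity
      simp; field_simp; norm_num)
  have h1 : ∀ i j, ∑' x : Cfg q N, p.1 x.1 * Real.exp (-β * E p x) *
      Real.exp (-β * (if x.2 i = x.2 j then (1:ℝ) else 0)) =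
      W β (fun p x => E p x + dss i j p x) p := fun i j => by
    unfold W; refine tsum_congr fun x => ?_
    rw [mul_add, Real.exp_add, mul_assoc]; rfl
  have h2 : ∀ i, ∀ u : Fin M, ∑' x : Cfg q N, p.1 x.1 * Real.exp (-β * E p x) *
      Real.exp (-β * (if p.2 x.1 (R+u) = x.2 i then (1:ℝ) else 0)) =
      W β (fun p x => E p x + dts (R+u) i p x) p := fun i j => by
    unfold W; refine tsum_congr fun x => ?_
    rw [mul_add, Real.exp_add, mul_assoc]; rfl
  have h2' : ∀ i, ∀ u : Fin M, ∑' x : Cfg q N, p.1 x.1 * Real.exp (-β * E p x) *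
      Real.exp (-β * (if x.2 i = p.2 x.1 (R+u) then (1:ℝ) else 0)) =
      W β (fun p x => E p x + dts (R+u) i p x) p := fun i j => by
    rw [← h2]; simp only [eq_comm]
  have h3 : ∀ u v : Fin M, ∑' x : Cfg q N, p.1 x.1 * Real.exp (-β * E p x) *
      Real.exp (-β * (if p.2 x.1 (R+u) = p.2 x.1 (R+v) then (1:ℝ) else 0)) =
      W β (fun p x => E p x + dtt (R+u) (R+v) p x) p := fun i j => by
    unfold W; refine tsum_congr fun x => ?_
    rw [mul_add, Real.exp_add, mul_assoc]; rfl
  have hk : ∀ u v : Fin N ⊕ Fin M, Real.log (∑' x : Cfg q N, p.1 x.1 * Real.exp (-β * E p x) *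
      Real.exp (-β * (if (Sum.elim (fun i x => x.2 i) (fun u x => p.2 x.1 (R+u)) :
        Fin N ⊕ Fin M → Cfg q N → Fin q) u x = (Sum.elim (fun i x => x.2 i)
        (fun u x => p.2 x.1 (R+u)) : Fin N ⊕ Fin M → Cfg q N → Fin q) v x then (1:ℝ) else 0))) =
      Sum.elim (fun i => Sum.elim (fun j => Real.log (W β (fun p x => E p x + dss i j p x) p))
          (fun u : Fin M => Real.log (W β (fun p x => E p x + dts (R+u) i p x) p)))
        (fun u : Fin M => Sum.elim (fun i => Real.log (W β (fun p x => E p x + dts (R+u) i p x) p))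
          (fun v : Fin M => Real.log (W β (fun p x => E p x + dtt (R+u) (R+v) p x) p))) u v := by
    rintro (i | u) (j | v)
    · exact congrArg Real.log (h1 i j)
    · exact congrArg Real.log (h2' i v)
    · exact congrArg Real.log (h2 j u)
    · exact congrArg Real.log (h3 u v)
  simp only [hk, Fintype.sum_sum_type, Sum.elim_inl, Sum.elim_inr] at key
  simp only [Finset.sum_add_distrib, ← Finset.mul_sum] at key
  rw [Finset.sum_comm (s := (Finset.univ : Finset (Fin M))) (t := (Finset.univ : Finset (Fin N)))] at key
  refine le_of_eq_of_le ?_ key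
  ring

lemma V_const (hq : 2 ≤ q) (hL : IsRSS q L) (hβ : 0 ≤ β) (hE : Adm n E) :
    V β L (fun p x => E p x + 1) = V β L E - β := by
  have := hL.1
  have h : ∫ p, (Real.log (W β E p) - β) ∂L = V β L E - β := by
    rw [integral_sub (logW_integrable hq hL hβ hE) (integrable_const _)]
    simp [V]
  rw [← h]
  refine integral_congr_ae ?_
  filter_upwards [good_ae hL] with p hp
  have : W β (fun p x => E p x + 1) p = W β E p * Real.exp (-β) := by
    unfold W
    rw [← tsum_mul_right]
    refine tsum_congr fun x => ?_
    rw [mul_add, mul_one, Real.exp_add, mul_assoc]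
  rw [this, Real.log_mul (W_pos hq hβ hE hp).ne' (Real.exp_pos _).ne', Real.log_exp]
  ring

lemma step (hq : 2 ≤ q) (hN : 0 < N) (hL : IsRSS q L) (hβ : 0 ≤ β) (hE : Adm n E)
    (A : Set ℕ) (R : ℕ) (hA : ∀ i ∈ A, i < R)
    (hloc : ∀ e : ℕ → ℕ, (∀ i ∈ A, e i = i) → ∀ p x, E (act e p) x = E p x)
    (a b b' : ℕ) (ha : a ∉ A) (hb : b ∉ A) (hb' : b' ∉ A) (haR : a < R) (hbR : b < R)
    (hbR' : b' < R) (hbb : b ≠ b') :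
    ((N:ℝ)^2)⁻¹ * ∑ i, ∑ j, V β L (fun p x => E p x + dss i j p x)
      + V β L (fun p x => E p x + dtt b b' p x)
      ≤ 2 * ((N:ℝ)⁻¹ * ∑ i : Fin N, V β L (fun p x => E p x + dts a i p x)) := by
  have hT : ∀ (i : Fin N) (u : ℕ), V β L (fun p x => E p x + dts (R+u) i p x)
      = V β L (fun p x => E p x + dts a i p x) := by
    intro i u
    rw [← V_perm hL (hE.add (adm_dts a i)) (Equiv.swap a (R+u)) (swap_fin _ _)]
    congr 1; funext p x
    rw [hloc]
    · simp [dts, act]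
    · intro k hk
      have := hA k hk
      exact Equiv.swap_apply_of_ne_of_ne (by rintro rfl; exact ha hk) (by omega)
  have hP : ∀ (u v : ℕ), u ≠ v → V β L (fun p x => E p x + dtt (R+u) (R+v) p x)
      = V β L (fun p x => E p x + dtt b b' p x) := by
    intro u v huv
    rw [← V_perm hL (hE.add (adm_dtt b b')) (Equiv.swap b (R+u) * Equiv.swap b' (R+v)) ?_]
    · congr 1; funext p x
      rw [hloc]
      · have h1 : Equiv.swap b' (R+v) b = b := Equiv.swap_apply_of_ne_of_ne hbb (by omega)
        have h2 : Equiv.swap b (R+u) (R+v) = R+v :=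
          Equiv.swap_apply_of_ne_of_ne (by omega) (by omega)
        simp [dtt, act, h1, h2]
      · intro k hk
        have := hA k hk
        have h1 : Equiv.swap b' (R+v) k = k :=
          Equiv.swap_apply_of_ne_of_ne (by rintro rfl; exact hb' hk) (by omega)
        have h2 : Equiv.swap b (R+u) k = k :=
          Equiv.swap_apply_of_ne_of_ne (by rintro rfl; exact hb hk) (by omega)
        simp [h1, h2]
    · refine ((swap_fin b (R+u)).union (swap_fin b' (R+v))).subset fun k hk => ?_
      by_contra hc
      simp only [Set.mem_union, Set.mem_ofPred_eq, not_or, not_not] at hc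
      exact hk (by simp [hc.1, hc.2])
  have hD : ∀ u : ℕ, V β L (fun p x => E p x + dtt (R+u) (R+u) p x) = V β L E - β := by
    intro u
    rw [← V_const hq hL hβ hE]
    simp [dtt]
  set S := ((N:ℝ)^2)⁻¹ * ∑ i, ∑ j, V β L (fun p x => E p x + dss i j p x) with hS
  set D := V β L (fun p x => E p x + dtt b b' p x) with hDd
  set B := (N:ℝ)⁻¹ * ∑ i : Fin N, V β L (fun p x => E p x + dts a i p x) with hB
  have hM : ∀ M : ℕ, 0 < M → S - 2 * B + D + (M:ℝ)⁻¹ * (V β L E - β - D) ≤ 0 := by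
    intro M hM0
    have hint : ∫ p, (((N:ℝ)^2)⁻¹ * ∑ i, ∑ j, Real.log (W β (fun p x => E p x + dss i j p x) p)
      - 2 * ((N:ℝ)⁻¹ * (M:ℝ)⁻¹ * ∑ i : Fin N, ∑ u : Fin M,
        Real.log (W β (fun p x => E p x + dts (R+u) i p x) p))
      + ((M:ℝ)^2)⁻¹ * ∑ u : Fin M, ∑ v : Fin M,
        Real.log (W β (fun p x => E p x + dtt (R+u) (R+v) p x) p)) ∂L ≤ 0 := by
      refine integral_nonpos_of_ae ?_
      filter_upwards [good_ae hL] with p hp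
      exact pointwise hq hN hβ hE R M hM0 hp
    have i1 : ∀ i j, Integrable (fun p => Real.log (W β (fun p x => E p x + dss i j p x) p)) L :=
      fun i j => logW_integrable hq hL hβ (hE.add (adm_dss i j))
    have i2 : ∀ (i : Fin N) (u : Fin M),
        Integrable (fun p => Real.log (W β (fun p x => E p x + dts (R+u) i p x) p)) L :=
      fun i j => logW_integrable hq hL hβ (hE.add (adm_dts _ i))
    have i3 : ∀ (u v : Fin M),
        Integrable (fun p => Real.log (W β (fun p x => E p x + dtt (R+u) (R+v) p x) p)) L :=
      fun i j => logW_integrable hq hL hβ (hE.add (adm_dtt _ _))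
    have j1 : Integrable (fun p => ∑ i, ∑ j, Real.log (W β (fun p x => E p x + dss i j p x) p)) L :=
      integrable_finsetSum _ fun i _ => integrable_finsetSum _ fun j _ => i1 i j
    have j2 : Integrable (fun p => ∑ i : Fin N, ∑ u : Fin M,
        Real.log (W β (fun p x => E p x + dts (R+u) i p x) p)) L :=
      integrable_finsetSum _ fun i _ => integrable_finsetSum _ fun j _ => i2 i j
    have j3 : Integrable (fun p => ∑ u : Fin M, ∑ v : Fin M,
        Real.log (W β (fun p x => E p x + dtt (R+u) (R+v) p x) p)) L :=
      integrable_finsetSum _ fun i _ => integrable_finsetSum _ fun j _ => i3 i j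
    rw [integral_add (by exact (j1.const_mul _).sub ((j2.const_mul _).const_mul _)) (j3.const_mul _),
      integral_sub (j1.const_mul _) ((j2.const_mul _).const_mul _)] at hint
    simp only [integral_const_mul] at hint
    rw [integral_finsetSum _ (fun i _ => integrable_finsetSum _ fun j _ => i1 i j),
      integral_finsetSum _ (fun i _ => integrable_finsetSum _ fun j _ => i2 i j),
      integral_finsetSum _ (fun i _ => integrable_finsetSum _ fun j _ => i3 i j)] at hint
    simp_rw [integral_finsetSum _ (fun j _ => i1 _ j), integral_finsetSum _ (fun j _ => i2 _ j),
      integral_finsetSum _ (fun j _ => i3 _ j)] at hint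
    change ((N:ℝ)^2)⁻¹ * ∑ i, ∑ j, V β L (fun p x => E p x + dss i j p x)
      - 2 * ((N:ℝ)⁻¹ * (M:ℝ)⁻¹ * ∑ i : Fin N, ∑ u : Fin M, V β L (fun p x => E p x + dts (R+u) i p x))
      + ((M:ℝ)^2)⁻¹ * ∑ u : Fin M, ∑ v : Fin M, V β L (fun p x => E p x + dtt (R+u) (R+v) p x) ≤ 0
      at hint
    simp only [hT] at hint
    have hq' : ∀ u v : Fin M, V β L (fun p x => E p x + dtt (R+u) (R+v) p x) =
        D + if u = v then V β L E - β - D else 0 := by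
      intro u v
      by_cases h : u = v
      · subst h; simp [hD]
      · simp [h, hP u v (fun hh => h (Fin.ext hh)), hDd]
    simp only [hq', Finset.sum_add_distrib, Finset.sum_ite_eq, Finset.mem_univ, if_true,
      Finset.sum_const, Finset.card_univ, Fintype.card_fin, nsmul_eq_mul, ← Finset.mul_sum] at hint
    refine le_of_eq_of_le ?_ hint
    have : (M:ℝ) ≠ 0 := by positivity
    rw [hB, hS]
    field_simp
    ring
  have hlim : Tendsto (fun M : ℕ => S - 2 * B + D + (M:ℝ)⁻¹ * (V β L E - β - D)) atTop
      (nhds (S - 2 * B + D + 0 * (V β L E - β - D))) :=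
    tendsto_const_nhds.add (tendsto_inv_atTop_nhds_zero_nat.mul_const _)
  have := le_of_tendsto hlim (by filter_upwards [eventually_gt_atTop 0] with M h using hM M h)
  linarith
end
end RSB



namespace RSB
section
variable {q N : ℕ}

lemma dtt_act (e : ℕ → ℕ) (a b : ℕ) (p : SpinStruct q) (x : Cfg q N) :
    dtt a b (act e p) x = dtt (e a) (e b) p x := rfl
lemma dts_act (e : ℕ → ℕ) (a : ℕ) (i : Fin N) (p : SpinStruct q) (x : Cfg q N) :
    dts a i (act e p) x = dts (e a) i p x := rfl

noncomputable def En {m k : ℕ} (e : Fin m → Fin N × Fin N) (I : Fin k → Fin N) (l : ℕ)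
    (p : SpinStruct q) (x : Cfg q N) : ℝ :=
  (∑ t, dss (e t).1 (e t).2 p x) + (∑ i, dts (3 * i.1) (I i) p x)
    + ∑ j : Fin l, dtt (3 * j.1 + 1) (3 * j.1 + 2) p x

lemma adm_En {m k : ℕ} (e : Fin m → Fin N × Fin N) (I : Fin k → Fin N) (l : ℕ) :
    Adm (m + k + l) (En e I l : SpinStruct q → Cfg q N → ℝ) :=
  ((Adm.sum _ fun _ => adm_dss _ _).add (Adm.sum _ fun _ => adm_dts _ _)).add
    (Adm.sum _ fun _ => adm_dtt _ _)

lemma En_e {m k : ℕ} (e : Fin m → Fin N × Fin N) (I : Fin k → Fin N) (l : ℕ) (a : Fin N × Fin N) :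
    (En (Fin.snoc e a : Fin (m+1) → Fin N × Fin N) I l : SpinStruct q → Cfg q N → ℝ)
      = fun p x => En e I l p x + dss a.1 a.2 p x := by
  funext p x
  simp [En, Fin.sum_univ_castSucc]
  ring

lemma En_I {m k : ℕ} (e : Fin m → Fin N × Fin N) (I : Fin k → Fin N) (l : ℕ) (a : Fin N) :
    (En e (Fin.snoc I a : Fin (k+1) → Fin N) l : SpinStruct q → Cfg q N → ℝ)
      = fun p x => En e I l p x + dts (3*k) a p x := by
  funext p x
  simp [En, Fin.sum_univ_castSucc]
  ring

lemma En_l {m k : ℕ} (e : Fin m → Fin N × Fin N) (I : Fin k → Fin N) (l : ℕ) :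
    (En e I (l+1) : SpinStruct q → Cfg q N → ℝ)
      = fun p x => En e I l p x + dtt (3*l+1) (3*l+2) p x := by
  funext p x
  simp [En, Fin.sum_univ_castSucc]
  ring

lemma sum_snoc {A : Type*} [Fintype A] (m : ℕ) (g : (Fin (m+1) → A) → ℝ) :
    ∑ e, g e = ∑ e : Fin m → A, ∑ a, g (Fin.snoc e a) := by
  rw [← (Fin.snocEquiv (fun _ : Fin (m+1) => A)).sum_comp, Fintype.sum_prod_type, Finset.sum_comm]
  rfl

variable {β : ℝ} {L : Measure (SpinStruct q)}

lemma En_step (hq : 2 ≤ q) (hN : 0 < N) (hL : IsRSS q L) (hβ : 0 ≤ β)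
    {m k : ℕ} (e : Fin m → Fin N × Fin N) (I : Fin k → Fin N) (l : ℕ) :
    ((N:ℝ)^2)⁻¹ * ∑ a : Fin N × Fin N,
        V β L (En (Fin.snoc e a : Fin (m+1) → Fin N × Fin N) I l)
      + V β L (En e I (l+1)) ≤
    2 * ((N:ℝ)⁻¹ * ∑ a, V β L (En e (Fin.snoc I a : Fin (k+1) → Fin N) l)) := by
  simp only [En_e, En_I, En_l, Fintype.sum_prod_type]
  refine step hq hN hL hβ (adm_En e I l)
    {i | (∃ j < k, i = 3*j) ∨ ∃ j < l, i = 3*j+1 ∨ i = 3*j+2} (3*(k+l+1)) ?_ ?_ _ _ _ ?_ ?_ ?_ ?_ ?_ ?_ ?_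
  · rintro i (⟨j, hj, rfl⟩ | ⟨j, hj, rfl | rfl⟩) <;> omega
  · intro f hf p x
    have h0 : ∀ j < k, f (3*j) = 3*j := fun j hj => hf _ (Or.inl ⟨j, hj, rfl⟩)
    have h1 : ∀ j < l, f (3*j+1) = 3*j+1 := fun j hj => hf _ (Or.inr ⟨j, hj, Or.inl rfl⟩)
    have h2 : ∀ j < l, f (3*j+2) = 3*j+2 := fun j hj => hf _ (Or.inr ⟨j, hj, Or.inr rfl⟩)
    simp [En, dss, dts, dtt, act, h0, h1, h2]
  · rintro (⟨j, hj, h⟩ | ⟨j, hj, h | h⟩) <;> omega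
  · rintro (⟨j, hj, h⟩ | ⟨j, hj, h | h⟩) <;> omega
  · rintro (⟨j, hj, h⟩ | ⟨j, hj, h | h⟩) <;> omega
  all_goals omega

noncomputable def FF (N : ℕ) (β : ℝ) (L : Measure (SpinStruct q)) (m k l : ℕ) : ℝ :=
  (((N:ℝ)^2)⁻¹)^m * ((N:ℝ)⁻¹)^k * ∑ e : Fin m → Fin N × Fin N, ∑ I : Fin k → Fin N, V β L (En e I l)

lemma FF_step (hq : 2 ≤ q) (hN : 0 < N) (hL : IsRSS q L) (hβ : 0 ≤ β) (m k l : ℕ) :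
    FF N β L (m+1) k l + FF N β L m k (l+1) ≤ 2 * FF N β L m (k+1) l := by
  have h := Finset.sum_le_sum fun (e : Fin m → Fin N × Fin N) (_ : e ∈ Finset.univ) =>
    Finset.sum_le_sum fun (I : Fin k → Fin N) (_ : I ∈ Finset.univ) => En_step hq hN hL hβ e I l
  have h2 := mul_le_mul_of_nonneg_left h
    (show 0 ≤ (((N:ℝ)^2)⁻¹)^m * ((N:ℝ)⁻¹)^k by positivity)
  unfold FF
  simp only [sum_snoc]
  refine le_of_eq_of_le ?_ (h2.trans (le_of_eq ?_))
  · simp only [Finset.sum_add_distrib, ← Finset.mul_sum]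
    rw [pow_succ, Finset.sum_congr rfl (fun (e : Fin m → Fin N × Fin N) _ => Finset.sum_comm)]
    ring
  · simp only [← Finset.mul_sum]
    ring

lemma iter (f : ℕ → ℕ → ℕ → ℝ) (hf : ∀ m k l, f (m+1) k l + f m k (l+1) ≤ 2 * f m (k+1) l)
    (n : ℕ) : ∀ m l, ∑ ij ∈ Finset.HasAntidiagonal.antidiagonal n, (n.choose ij.1 : ℝ) * f (m + ij.1) 0 (l + ij.2)
      ≤ 2^n * f m n l := by
  induction n with
  | zero => intro m l; simp
  | succ n ih =>
    intro m l
    have h := Finset.sum_antidiagonal_choose_succ_mul (R := ℝ) (fun i j => f (m+i) 0 (l+j)) n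
    rw [h]
    have h1 := ih m (l+1)
    have h2 := ih (m+1) l
    have h3 := hf m n l
    have e1 : ∑ ij ∈ Finset.HasAntidiagonal.antidiagonal n, (n.choose ij.1 : ℝ) * f (m + ij.1) 0 (l + (ij.2+1))
        = ∑ ij ∈ Finset.HasAntidiagonal.antidiagonal n, (n.choose ij.1 : ℝ) * f (m + ij.1) 0 (l + 1 + ij.2) := by
      refine Finset.sum_congr rfl fun x _ => ?_
      rw [show l + (x.2+1) = l+1+x.2 by ring]
    have e2 : ∑ ij ∈ Finset.HasAntidiagonal.antidiagonal n, (n.choose ij.2 : ℝ) * f (m + (ij.1 + 1)) 0 (l + ij.2)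
        = ∑ ij ∈ Finset.HasAntidiagonal.antidiagonal n, (n.choose ij.1 : ℝ) * f (m + 1 + ij.1) 0 (l + ij.2) := by
      refine Finset.sum_congr rfl fun x hx => ?_
      rw [show m + (x.1+1) = m+1+x.1 by ring]
      rw [Nat.choose_symm_of_eq_add (Finset.HasAntidiagonal.mem_antidiagonal.1 hx).symm]
    rw [e1, e2]
    have : (0:ℝ) < 2^n := by positivity
    calc _ ≤ 2^n * f m n (l+1) + 2^n * f (m+1) n l := add_le_add h1 h2
      _ = 2^n * (f (m+1) n l + f m n (l+1)) := by ring
      _ ≤ 2^n * (2 * f m (n+1) l) := by gcongr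
      _ = _ := by ring

/-! ### identification of endpoints -/

lemma W_eq {n : ℕ} {E : SpinStruct q → Cfg q N → ℝ} (hβ : 0 ≤ β) (hE : Adm n E) {p : SpinStruct q}
    (hp : Good p) : W β E p = ∑' α, p.1 α * ∑ σ : Fin N → Fin q, Real.exp (-β * E p (α, σ)) := by
  unfold W
  rw [(W_summable hβ hE hp).tsum_prod]
  refine tsum_congr fun α => ?_
  rw [tsum_fintype, Finset.mul_sum]

/-- pair energy -/
noncomputable def E2 (l : ℕ) (p : SpinStruct q) (x : Cfg q 0) : ℝ :=
  ∑ j : Fin l, dtt (2 * j.1) (2 * j.1 + 1) p x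
noncomputable def E2' (l : ℕ) (p : SpinStruct q) (x : Cfg q 0) : ℝ :=
  ∑ j : Fin l, dtt (3 * j.1 + 1) (3 * j.1 + 2) p x
noncomputable def E1 {k : ℕ} (I : Fin k → Fin N) (p : SpinStruct q) (x : Cfg q N) : ℝ :=
  ∑ i, dts i.1 (I i) p x

lemma adm_E2 (l : ℕ) : Adm l (E2 l : SpinStruct q → Cfg q 0 → ℝ) := Adm.sum _ fun _ => adm_dtt _ _
lemma adm_E2' (l : ℕ) : Adm l (E2' l : SpinStruct q → Cfg q 0 → ℝ) := Adm.sum _ fun _ => adm_dtt _ _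
lemma adm_E1 {k : ℕ} (I : Fin k → Fin N) : Adm k (E1 I : SpinStruct q → Cfg q N → ℝ) :=
  Adm.sum _ fun _ => adm_dts _ _

lemma V_E2 (hL : IsRSS q L) (l : ℕ) :
    V β L (E2' l : SpinStruct q → Cfg q 0 → ℝ) = V β L (E2 l) := by
  rw [← V_inj hL (adm_E2 l) (fun n => 3 * (n/2) + 1 + n % 2) ?_ (2*l) ?_]
  · congr 1; funext p x
    unfold E2 E2'
    refine Finset.sum_congr rfl fun j _ => ?_
    rw [dtt_act, show 3 * (2 * j.1 / 2) + 1 + 2 * j.1 % 2 = 3 * j.1 + 1 by omega,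
      show 3 * ((2 * j.1+1) / 2) + 1 + (2 * j.1+1) % 2 = 3 * j.1 + 2 by omega]
  · intro a b h; simp only at h; omega
  · intro p p' h1 h2 x
    unfold E2
    refine Finset.sum_congr rfl fun j _ => ?_
    have := j.2
    simp only [dtt]
    rw [h2 _ _ (by omega), h2 _ _ (by omega)]

lemma V_E1 (hL : IsRSS q L) {k : ℕ} (e : Fin 0 → Fin N × Fin N) (I : Fin k → Fin N) :
    V β L (En e I 0 : SpinStruct q → Cfg q N → ℝ) = V β L (E1 I) := by
  rw [← V_inj hL (adm_E1 I) (fun n => 3 * n) ?_ k ?_]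
  · congr 1; funext p x
    simp [En, E1, dts_act]
  · intro a b h; simp only at h; omega
  · intro p p' h1 h2 x
    unfold E1
    refine Finset.sum_congr rfl fun j _ => ?_
    simp only [dts]
    rw [h2 _ _ j.2]

/-- graph partition function -/
noncomputable def Zg (q : ℕ) {N m : ℕ} (β : ℝ) (e : Fin m → Fin N × Fin N) : ℝ :=
  ∑ σ : Fin N → Fin q, Real.exp (-β * ∑ t, if σ (e t).1 = σ (e t).2 then (1:ℝ) else 0)

lemma Zg_pos (hq : 2 ≤ q) {m : ℕ} (e : Fin m → Fin N × Fin N) : 0 < Zg q β e := by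
  have : NeZero q := ⟨by omega⟩
  exact Finset.sum_pos (fun _ _ => Real.exp_pos _) ⟨fun _ => 0, Finset.mem_univ _⟩

lemma V_split (hq : 2 ≤ q) (hL : IsRSS q L) (hβ : 0 ≤ β) {m : ℕ} (e : Fin m → Fin N × Fin N)
    (I : Fin 0 → Fin N) (l : ℕ) :
    V β L (En e I l) = Real.log (Zg q β e) + V β L (E2 l) := by
  have := hL.1
  rw [← V_E2 hL]
  have h : ∫ p, (Real.log (Zg q β e) + Real.log (W β (E2' l) p)) ∂L
      = Real.log (Zg q β e) + V β L (E2' l) := by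
    rw [integral_add (integrable_const _) (logW_integrable hq hL hβ (adm_E2' l))]
    simp [V]
  rw [← h]
  refine integral_congr_ae ?_
  filter_upwards [good_ae hL] with p hp
  rw [← Real.log_mul (Zg_pos hq e).ne' (W_pos hq hβ (adm_E2' l) hp).ne', W_eq hβ (adm_En e I l) hp,
    W_eq hβ (adm_E2' l) hp, ← tsum_mul_left]
  congr 1
  refine tsum_congr fun α => ?_
  rw [Fintype.sum_unique (fun σ : Fin 0 → Fin q => _)]
  unfold Zg
  rw [mul_left_comm, Finset.sum_mul]
  congr 1
  refine Finset.sum_congr rfl fun σ _ => ?_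
  rw [← Real.exp_add, ← mul_add]
  simp [En, E2', dss, dtt]

noncomputable def PP (q N : ℕ) (β : ℝ) (m : ℕ) : ℝ :=
  (((N:ℝ)^2)⁻¹)^m * ∑ e : Fin m → Fin N × Fin N, Real.log (Zg q β e)
noncomputable def QQ (β : ℝ) (L : Measure (SpinStruct q)) (l : ℕ) : ℝ :=
  V β L (E2 l)
noncomputable def RR (N : ℕ) (β : ℝ) (L : Measure (SpinStruct q)) (k : ℕ) : ℝ :=
  ((N:ℝ)⁻¹)^k * ∑ I : Fin k → Fin N, V β L (E1 I)

lemma FF_left (hq : 2 ≤ q) (hN : 0 < N) (hL : IsRSS q L) (hβ : 0 ≤ β) (m l : ℕ) :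
    FF N β L m 0 l = PP q N β m + QQ β L l := by
  unfold FF PP QQ
  simp only [V_split hq hL hβ]
  have : (N:ℝ) ≠ 0 := by positivity
  simp [Finset.sum_add_distrib]
  field_simp

lemma FF_right (hL : IsRSS q L) (k : ℕ) : FF N β L 0 k 0 = RR N β L k := by
  unfold FF RR
  simp [V_E1 hL]

lemma main_ineq (hq : 2 ≤ q) (hN : 0 < N) (hL : IsRSS q L) (hβ : 0 ≤ β) (n : ℕ) :
    ∑ ij ∈ Finset.HasAntidiagonal.antidiagonal n, (n.choose ij.1 : ℝ) * (PP q N β ij.1 + QQ β L ij.2)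
      ≤ 2^n * RR N β L n := by
  have := iter (FF N β L) (FF_step hq hN hL hβ) n 0 0
  simpa [FF_left hq hN hL hβ, FF_right hL] using this

end
end RSB



namespace RSB

lemma poi_nonneg {lam : ℝ} (h : 0 ≤ lam) (k : ℕ) : 0 ≤ poissonPMF lam k := by
  unfold poissonPMF; positivity

lemma poi_summable {lam : ℝ} (h : 0 ≤ lam) {C β : ℝ} (hC : 0 ≤ C) (hβ : 0 ≤ β) :
    Summable fun k => poissonPMF lam k * (C + β * k) := by
  have h1 := (Real.summable_pow_div_factorial (2 * lam)).mul_left (Real.exp (-lam) * (C + β))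
  refine Summable.of_nonneg_of_le (fun k => mul_nonneg (poi_nonneg h k) (by positivity)) (fun k => ?_) h1
  have h2 : (k:ℝ) ≤ 2^k := by exact_mod_cast (Nat.lt_two_pow_self (n := k)).le
  have h3 : (1:ℝ) ≤ 2^k := one_le_pow₀ (by norm_num)
  have h4 : C + β * k ≤ (C + β) * 2^k := by nlinarith
  have : Real.exp (-lam) * (C + β) * ((2 * lam)^k / (k.factorial:ℝ))
    = poissonPMF lam k * ((C + β) * 2^k) := by
    unfold poissonPMF; rw [mul_pow]; ring
  rw [this]
  exact mul_le_mul_of_nonneg_left h4 (poi_nonneg h k)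

lemma poi_summable' {lam : ℝ} (h : 0 ≤ lam) {C β : ℝ} (hC : 0 ≤ C) (hβ : 0 ≤ β) {f : ℕ → ℝ}
    (hf : ∀ k, |f k| ≤ C + β * k) : Summable fun k => ‖poissonPMF lam k * f k‖ := by
  refine Summable.of_nonneg_of_le (fun k => norm_nonneg _) (fun k => ?_) (poi_summable h hC hβ)
  rw [Real.norm_eq_abs, abs_mul, abs_of_nonneg (poi_nonneg h k)]
  exact mul_le_mul_of_nonneg_left (hf k) (poi_nonneg h k)

lemma poi_one {lam : ℝ} : HasSum (poissonPMF lam) 1 := by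
  have := (NormedSpace.expSeries_div_hasSum_exp (𝔸 := ℝ) lam).mul_left (Real.exp (-lam))
  rw [← Real.exp_eq_exp_ℝ, ← Real.exp_add] at this
  simp only [neg_add_cancel, Real.exp_zero] at this
  convert! this using 2 with k
  unfold poissonPMF; ring

lemma integral_poi {Ω : Type*} [MeasurableSpace Ω] {L : Measure Ω} [IsProbabilityMeasure L] {lam : ℝ}
    (h : 0 ≤ lam) {C β : ℝ} (hC : 0 ≤ C) (hβ : 0 ≤ β) (g : ℕ → Ω → ℝ)
    (hg : ∀ k, Integrable (g k) L) (hb : ∀ k, ∀ᵐ p ∂L, |g k p| ≤ C + β * k) :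
    ∫ p, ∑' k, poissonPMF lam k * g k p ∂L = ∑' k, poissonPMF lam k * ∫ p, g k p ∂L := by
  have := hasSum_integral_of_summable_integral_norm (μ := L)
    (F := fun k p => poissonPMF lam k * g k p) (fun k => (hg k).const_mul _) ?_
  · rw [← this.tsum_eq]
    simp only [integral_const_mul]
  · refine Summable.of_nonneg_of_le (fun k => integral_nonneg fun p => norm_nonneg _) (fun k => ?_)
      (poi_summable h hC hβ)
    have h2 : ∫ p, ‖poissonPMF lam k * g k p‖ ∂L ≤ ∫ _, poissonPMF lam k * (C + β * k) ∂L := by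
      refine integral_mono_ae ((hg k).const_mul _).norm (integrable_const _) ?_
      filter_upwards [hb k] with p hp
      rw [Real.norm_eq_abs, abs_mul, abs_of_nonneg (poi_nonneg h k)]
      exact mul_le_mul_of_nonneg_left hp (poi_nonneg h k)
    simpa using h2

section
variable {q N : ℕ} {β c : ℝ} {L : Measure (SpinStruct q)}

lemma avg_bound {A : Type*} [Fintype A] (r : ℝ) (hr : 0 ≤ r) (hA : r * Fintype.card A = 1)
    (k : ℕ) (f : (Fin k → A) → ℝ) {B : ℝ} (hf : ∀ I, |f I| ≤ B) :
    |r^k * ∑ I, f I| ≤ B := by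
  rw [abs_mul, abs_of_nonneg (by positivity)]
  calc r^k * |∑ I, f I| ≤ r^k * ∑ I : Fin k → A, B := by
        gcongr
        exact (Finset.abs_sum_le_sum_abs _ _).trans (Finset.sum_le_sum fun I _ => hf I)
    _ = (r * Fintype.card A)^k * B := by simp [mul_pow, mul_assoc]
    _ = B := by rw [hA]; simp

lemma RR_bound (hq : 2 ≤ q) (hN : 0 < N) (hL : IsRSS q L) (hβ : 0 ≤ β) (k : ℕ) :
    |RR N β L k| ≤ N * Real.log q + β * k := by
  refine avg_bound _ (by positivity) ?_ k _ fun I => V_bound hq hL hβ (adm_E1 I)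
  have : (N:ℝ) ≠ 0 := by positivity
  simp [this]

lemma QQ_bound (hq : 2 ≤ q) (hL : IsRSS q L) (hβ : 0 ≤ β) (k : ℕ) :
    |QQ β L k| ≤ 0 + β * k := by
  simpa [QQ] using V_bound hq hL hβ (adm_E2 k)

lemma Zg_bound (hq : 2 ≤ q) (hL : IsRSS q L) (hβ : 0 ≤ β) {k : ℕ}
    (e : Fin k → Fin N × Fin N) : |Real.log (Zg q β e)| ≤ N * Real.log q + β * k := by
  have h1 := V_bound hq hL hβ (adm_En (q := q) e Fin.elim0 0)
  rw [V_split hq hL hβ] at h1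
  have h2 := V_bound hq hL hβ (adm_E2 (q := q) 0)
  simp only [CharP.cast_eq_zero, zero_mul, mul_zero, add_zero, abs_nonpos_iff] at h2
  simpa [h2] using h1

lemma PP_bound (hq : 2 ≤ q) (hN : 0 < N) (hL : IsRSS q L) (hβ : 0 ≤ β) (k : ℕ) :
    |PP q N β k| ≤ N * Real.log q + β * k := by
  refine avg_bound _ (by positivity) ?_ k _ fun e => Zg_bound hq hL hβ e
  have : (N:ℝ) ≠ 0 := by positivity
  simp; field_simp

lemma G1_eq (hq : 2 ≤ q) (hN : 0 < N) (hL : IsRSS q L) (hβ : 0 ≤ β) (hc : 0 ≤ c) :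
    G1 q N β c L = (N:ℝ)⁻¹ * ∑' k, poissonPMF (c * N) k * RR N β L k := by
  have := hL.1
  have hRR : ∀ k, RR N β L k = ∫ p, ((N:ℝ)⁻¹)^k * ∑ I : Fin k → Fin N, Real.log (W β (E1 I) p) ∂L := by
    intro k
    rw [integral_const_mul, integral_finsetSum _ fun I _ => logW_integrable hq hL hβ (adm_E1 I)]
    rfl
  simp only [hRR]
  rw [← integral_poi (by positivity) (C := N * Real.log q) (β := β)
    (mul_nonneg (Nat.cast_nonneg _) (Real.log_natCast_nonneg q)) hβ, ← integral_const_mul]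
  · unfold G1
    refine integral_congr_ae ?_
    filter_upwards [good_ae hL] with p hp
    rw [← tsum_mul_left]
    refine tsum_congr fun k => ?_
    simp only [W_eq hβ (adm_E1 _) hp]
    rw [← Finset.mul_sum, inv_pow]
    simp only [E1, dts]
    ring
  · intro k
    exact (integrable_finsetSum _ fun I _ => logW_integrable hq hL hβ (adm_E1 I)).const_mul _
  · intro k
    filter_upwards [good_ae hL] with p hp
    refine avg_bound _ (by positivity) ?_ k _ fun I => logW_bound hq hβ (adm_E1 I) hp
    have : (N:ℝ) ≠ 0 := by positivity
    simp [this]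

lemma G2_eq (hq : 2 ≤ q) (hL : IsRSS q L) (hβ : 0 ≤ β) (hc : 0 ≤ c) :
    G2 q N β c L = (N:ℝ)⁻¹ * ∑' k, poissonPMF (c * N / 2) k * QQ β L k := by
  have := hL.1
  unfold QQ V
  rw [← integral_poi (by positivity) (C := 0) (β := β) le_rfl hβ, ← integral_const_mul]
  · unfold G2
    refine integral_congr_ae ?_
    filter_upwards [good_ae hL] with p hp
    rw [← tsum_mul_left]
    refine tsum_congr fun k => ?_
    simp only [W_eq hβ (adm_E2 _) hp]
    simp only [E2, dtt, Fintype.sum_unique]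
    ring
  · intro k
    exact logW_integrable hq hL hβ (adm_E2 k)
  · intro k
    filter_upwards [good_ae hL] with p hp
    simpa using logW_bound hq hβ (adm_E2 k) hp

lemma assemble (hq : 2 ≤ q) (hN : 0 < N) (hL : IsRSS q L) (hβ : 0 ≤ β) {lam : ℝ} (hl : 0 ≤ lam) :
    (∑' k, poissonPMF lam k * PP q N β k) + ∑' k, poissonPMF lam k * QQ β L k
      ≤ ∑' k, poissonPMF (2 * lam) k * RR N β L k := by
  have hC : 0 ≤ N * Real.log q := mul_nonneg (Nat.cast_nonneg _) (Real.log_natCast_nonneg q)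
  have s0 : Summable fun k => ‖poissonPMF lam k‖ := poi_one.summable.norm
  have s1 := poi_summable' hl hC hβ (PP_bound (L := L) hq hN hL hβ)
  have s2 := poi_summable' hl le_rfl hβ (QQ_bound hq hL hβ)
  have s3 := poi_summable' (lam := 2 * lam) (by positivity) hC hβ (RR_bound hq hN hL hβ)
  have t1 := tsum_mul_tsum_eq_tsum_sum_antidiagonal_of_summable_norm s1 s0
  have t2 := tsum_mul_tsum_eq_tsum_sum_antidiagonal_of_summable_norm s0 s2
  have u1 := (summable_norm_sum_mul_antidiagonal_of_summable_norm s1 s0).of_norm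
  have u2 := (summable_norm_sum_mul_antidiagonal_of_summable_norm s0 s2).of_norm
  rw [poi_one.tsum_eq, mul_one] at t1
  rw [poi_one.tsum_eq, one_mul] at t2
  rw [t1, t2, ← u1.tsum_add u2]
  refine (u1.add u2).tsum_le_tsum (fun n => ?_) s3.of_norm
  have hm := main_ineq hq hN hL hβ n
  rw [← Finset.sum_add_distrib]
  have hcst : 0 ≤ Real.exp (-(2*lam)) * lam^n / n.factorial := by positivity
  have := mul_le_mul_of_nonneg_left hm hcst
  refine le_of_eq_of_le ?_ (this.trans (le_of_eq ?_))
  · rw [Finset.mul_sum]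
    refine Finset.sum_congr rfl fun ij hij => ?_
    have hs := Finset.HasAntidiagonal.mem_antidiagonal.1 hij
    have hch : (n.choose ij.1 : ℝ) = n.factorial / (ij.1.factorial * ij.2.factorial) := by
      rw [← hs, Nat.cast_add_choose]
    unfold poissonPMF
    rw [hch, show -(2*lam) = -lam + -lam by ring, Real.exp_add]
    have hp : lam ^ n = lam ^ ij.1 * lam ^ ij.2 := by rw [← pow_add, hs]
    rw [hp]
    have h1 : (n.factorial:ℝ) ≠ 0 := by positivity
    field_simp
  · unfold poissonPMF
    rw [mul_pow]; ring
end
end RSB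



namespace RSB

section
variable {A : Type*} [Fintype A] [DecidableEq A]

/-- multiplicities -/
def cnt {m : ℕ} (e : Fin m → A) : A → ℕ := ∑ t, Pi.single (e t) 1

lemma multi (m : ℕ) (g : (A → ℕ) → ℝ) :
    ∑ e : Fin m → A, g (cnt e) =
      ∑ J ∈ Finset.piAntidiag (Finset.univ : Finset A) m, (Nat.multinomial Finset.univ J : ℝ) * g J := by
  let φ : AddMonoidAlgebra ℝ (A → ℕ) →ₗ[ℝ] ℝ :=
    (Finsupp.linearCombination ℝ g) ∘ₗ (AddMonoidAlgebra.coeffLinearEquiv ℝ).toLinearMap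
  let X : (A → ℕ) → AddMonoidAlgebra ℝ (A → ℕ) := fun v =>
    AddMonoidAlgebra.of ℝ (A → ℕ) (Multiplicative.ofAdd v)
  have hφ : ∀ v, φ (X v) = g v := by
    intro v
    change Finsupp.linearCombination ℝ g (Finsupp.single v 1) = g v
    simp
  have h1 := Fintype.sum_pow (fun a : A => X (Pi.single a 1)) m
  have h2 := Finset.sum_pow_eq_sum_piAntidiag Finset.univ (fun a : A => X (Pi.single a 1)) m
  have h3 := congrArg φ (h1.symm.trans h2)
  rw [map_sum, map_sum] at h3
  have e1 : ∀ e : Fin m → A, ∏ i, X (Pi.single (e i) 1) = X (cnt e) := by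
    intro e
    simp only [X, cnt]
    rw [← map_prod, ofAdd_sum]
  have e2 : ∀ k : A → ℕ, ∏ a, X (Pi.single a 1) ^ k a = X k := by
    intro k
    simp only [X, ← map_pow, ← map_prod, ← ofAdd_nsmul, ← ofAdd_sum]
    congr 2
    funext b
    simp [Finset.sum_apply, Pi.single_apply]
  simp only [e1, e2, hφ] at h3
  rw [h3]
  refine Finset.sum_congr rfl fun k _ => ?_
  rw [← nsmul_eq_mul, map_nsmul, hφ, nsmul_eq_mul]

def totEquiv : (Σ m : ℕ, {J // J ∈ Finset.piAntidiag (Finset.univ : Finset A) m}) ≃ (A → ℕ) where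
  toFun x := x.2.1
  invFun J := ⟨∑ a, J a, J, by simp [Finset.mem_piAntidiag]⟩
  left_inv := by
    rintro ⟨m, J, h⟩
    have : ∑ a, J a = m := (Finset.mem_piAntidiag.1 h).1
    subst this
    rfl
  right_inv _ := rfl

lemma tsum_tot (h : (A → ℕ) → ℝ)
    (hs : Summable fun m : ℕ => ∑ J ∈ Finset.piAntidiag (Finset.univ : Finset A) m, |h J|) :
    ∑' J, h J = ∑' m : ℕ, ∑ J ∈ Finset.piAntidiag (Finset.univ : Finset A) m, h J := by
  have hsum : Summable fun x : (Σ m : ℕ, {J // J ∈ Finset.piAntidiag (Finset.univ : Finset A) m}) =>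
      h x.2.1 := by
    refine Summable.of_abs ?_
    rw [summable_sigma_of_nonneg (fun _ => abs_nonneg _)]
    refine ⟨fun m => (hasSum_fintype _).summable, ?_⟩
    convert! hs using 2 with m
    rw [tsum_fintype]
    exact Finset.sum_coe_sort _ (fun J => |h J|)
  rw [← (totEquiv (A := A)).tsum_eq]
  change ∑' x : (Σ m : ℕ, {J // J ∈ Finset.piAntidiag (Finset.univ : Finset A) m}), h x.2.1 = _
  rw [hsum.tsum_sigma]
  refine tsum_congr fun m => ?_
  rw [tsum_fintype]
  exact Finset.sum_coe_sort _ h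

lemma prod_poi (μ : ℝ) {m : ℕ} {J : A → ℕ} (hJ : J ∈ Finset.piAntidiag (Finset.univ : Finset A) m) :
    ∏ a, poissonPMF μ (J a) =
      Real.exp (-(Fintype.card A * μ)) * μ^m / m.factorial * Nat.multinomial Finset.univ J := by
  have hs : ∑ a, J a = m := (Finset.mem_piAntidiag.1 hJ).1
  have hm := Nat.multinomial_spec Finset.univ J
  rw [hs] at hm
  have hm' : (∏ a, ((J a).factorial : ℝ)) * Nat.multinomial Finset.univ J = m.factorial := by
    exact_mod_cast hm
  unfold poissonPMF
  rw [Finset.prod_div_distrib, Finset.prod_mul_distrib, Finset.prod_pow_eq_pow_sum, hs,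
    Finset.prod_const, ← Real.exp_nat_mul, Finset.card_univ]
  have h0 : (∏ a, ((J a).factorial : ℝ)) ≠ 0 := Finset.prod_ne_zero_iff.2 fun a _ => by positivity
  have h1 : (m.factorial:ℝ) ≠ 0 := by positivity
  rw [mul_neg]
  field_simp
  rw [← hm']
  ring

lemma poi_split [Nonempty A] {μ : ℝ} (hμ : 0 ≤ μ) (g : (A → ℕ) → ℝ) {C β : ℝ} (hC : 0 ≤ C) (hβ : 0 ≤ β)
    (hg : ∀ (m : ℕ) (e : Fin m → A), |g (cnt e)| ≤ C + β * m) :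
    ∑' J : A → ℕ, (∏ a, poissonPMF μ (J a)) * g J =
      ∑' m : ℕ, poissonPMF (Fintype.card A * μ) m *
        (((Fintype.card A : ℝ)⁻¹)^m * ∑ e : Fin m → A, g (cnt e)) := by
  have hA : (Fintype.card A : ℝ) ≠ 0 := by
    have := Fintype.card_pos (α := A); positivity
  have key : ∀ (f : (A → ℕ) → ℝ) (m : ℕ), ∑ J ∈ Finset.piAntidiag (Finset.univ : Finset A) m,
      (∏ a, poissonPMF μ (J a)) * f J = poissonPMF (Fintype.card A * μ) m *
        (((Fintype.card A : ℝ)⁻¹)^m * ∑ e : Fin m → A, f (cnt e)) := by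
    intro f m
    rw [multi, Finset.mul_sum, Finset.mul_sum]
    refine Finset.sum_congr rfl fun J hJ => ?_
    rw [prod_poi μ hJ]
    unfold poissonPMF
    rw [mul_pow, inv_pow]
    field_simp
  rw [tsum_tot]
  · exact tsum_congr fun m => key g m
  · have : ∀ J : A → ℕ, |(∏ a, poissonPMF μ (J a)) * g J| = (∏ a, poissonPMF μ (J a)) * |g J| := by
      intro J
      rw [abs_mul, abs_of_nonneg (Finset.prod_nonneg fun a _ => poi_nonneg hμ _)]
    simp only [this]
    simp only [key (fun J => |g J|)]
    refine (poi_summable' (lam := Fintype.card A * μ) (by positivity) hC hβ (fun m => ?_)).of_norm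
    exact avg_bound _ (by positivity) (inv_mul_cancel₀ hA) m _ fun e => by
      rw [abs_abs]; exact hg m e
end

section
variable {q N : ℕ} {β c : ℝ} {L : Measure (SpinStruct q)}

lemma Z_cnt {m : ℕ} (e : Fin m → Fin N × Fin N) :
    potts.Z q N (fun i j => β * (cnt e (i, j) : ℝ)) = Zg q β e := by
  unfold potts.Z Zg potts.H
  refine Finset.sum_congr rfl fun σ _ => ?_
  congr 1
  rw [neg_mul]
  congr 1
  rw [← Fintype.sum_prod_type' (f := fun i j => β * (cnt e (i, j) : ℝ) * if σ i = σ j then (1:ℝ) else 0)]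
  simp only [mul_assoc]
  rw [← Finset.mul_sum]
  congr 1
  simp only [cnt, Finset.sum_apply, Nat.cast_sum, Finset.sum_mul]
  rw [Finset.sum_comm]
  refine Finset.sum_congr rfl fun t _ => ?_
  rw [Finset.sum_eq_single (e t)]
  · simp
  · intro b _ hb
    simp [Pi.single_apply, hb]
  · simp

lemma p_eq (hq : 2 ≤ q) (hN : 0 < N) (hL : IsRSS q L) (hβ : 0 ≤ β) (hc : 0 ≤ c) :
    potts.p q N β c = (N:ℝ)⁻¹ * ∑' k, poissonPMF (c * N / 2) k * PP q N β k := by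
  have : NeZero N := ⟨hN.ne'⟩
  have hN0 : (N:ℝ) ≠ 0 := by positivity
  have hC : 0 ≤ N * Real.log q := mul_nonneg (Nat.cast_nonneg _) (Real.log_natCast_nonneg q)
  have h := poi_split (A := Fin N × Fin N) (μ := c / (2 * N)) (by positivity)
    (fun J => Real.log (potts.Z q N (fun i j => β * (J (i, j) : ℝ)))) hC hβ
    (fun m e => by simp only [Z_cnt]; exact Zg_bound hq hL hβ e)
  have hcard : (Fintype.card (Fin N × Fin N) : ℝ) = (N:ℝ)^2 := by simp [sq]
  simp only [Z_cnt, hcard] at h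
  rw [show (N:ℝ)^2 * (c / (2 * N)) = c * N / 2 by field_simp] at h
  unfold PP
  rw [← h]
  unfold potts.p potts.pmat potts.E
  rw [← (Equiv.curry (Fin N) (Fin N) ℕ).tsum_eq, ← tsum_mul_left]
  refine tsum_congr fun J => ?_
  rw [Fintype.prod_prod_type]
  simp only [Equiv.curry_apply, Function.curry, one_div]
  ring
end
end RSB

/-- replica symmetry breaking bound: `p_N(β,c) ≤ G_N^{(1)} - G_N^{(2)}`
for every discrete random spin structure. -/
theorem statement7 (q N : ℕ) (hq : 2 ≤ q) (hN : 0 < N) (β c : ℝ)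
    (hβ : 0 ≤ β) (hc : 0 ≤ c)
    (L : Measure (SpinStruct q)) (hL : IsRSS q L) :
    potts.p q N β c ≤ G1 q N β c L - G2 q N β c L := by
  rw [RSB.p_eq hq hN hL hβ hc, RSB.G1_eq hq hN hL hβ hc, RSB.G2_eq hq hL hβ hc, ← mul_sub]
  refine mul_le_mul_of_nonneg_left ?_ (by positivity)
  have h := RSB.assemble (lam := c * N / 2) hq hN hL hβ (by positivity)
  rw [show 2 * (c * N / 2) = c * N by ring] at h
  linarith
end

section
/- For every β ≥ 0 and c ≥ 0, the extended variational principle holds: lim_{N→∞} p_N(β,c) = lim_{N→∞} inf_{𝓛∈𝒮} ( G_N^(1)(β,c,𝓛) − G_N^(2)(β,c,𝓛) ), and in particular the limit on the right-hand side exists. -/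
open MeasureTheory Filter

open scoped BigOperators


lemma pois_nonneg {l : ℝ} (hl : 0 ≤ l) (k : ℕ) : 0 ≤ poissonPMF l k := by
  unfold poissonPMF; positivity

lemma pois_hasSum (l : ℝ) : HasSum (poissonPMF l) 1 := by
  have h := (NormedSpace.expSeries_div_hasSum_exp (𝔸 := ℝ) l).mul_left (Real.exp (-l))
  rw [← Real.exp_eq_exp_ℝ, ← Real.exp_add] at h
  simp only [neg_add_cancel, Real.exp_zero] at h
  have e : poissonPMF l = fun k : ℕ => Real.exp (-l) * (l ^ k / (k.factorial : ℝ)) := by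
    funext k; unfold poissonPMF; ring
  rw [e]; exact h

lemma pois_succ (l : ℝ) (k : ℕ) : poissonPMF l (k+1) * ((k+1 : ℕ):ℝ) = l * poissonPMF l k := by
  unfold poissonPMF
  rw [Nat.factorial_succ]; push_cast
  have : (k.factorial : ℝ) ≠ 0 := by positivity
  have : (k : ℝ) + 1 ≠ 0 := by positivity
  field_simp; ring

lemma pois_hasSum_id (l : ℝ) : HasSum (fun k => poissonPMF l k * (k:ℝ)) l := by
  rw [← hasSum_nat_add_iff' 1]
  simp only [pois_succ]
  simpa using (pois_hasSum l).mul_left l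

def LB (f : ℕ → ℝ) : Prop := ∃ C, ∀ k : ℕ, |f k| ≤ C * (1 + k)

lemma pois_summ {l : ℝ} (hl : 0 ≤ l) {f : ℕ → ℝ} (hf : LB f) :
    Summable (fun k => poissonPMF l k * f k) := by
  obtain ⟨C, hC⟩ := hf
  have h : Summable (fun k : ℕ => C * (poissonPMF l k + poissonPMF l k * k)) :=
    ((pois_hasSum l).summable.add (pois_hasSum_id l).summable).mul_left C
  refine Summable.of_norm_bounded h ?_
  intro k
  rw [Real.norm_eq_abs, abs_mul, abs_of_nonneg (pois_nonneg hl k)]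
  nlinarith [hC k, pois_nonneg hl k, mul_le_mul_of_nonneg_left (hC k) (pois_nonneg hl k)]

noncomputable def Po (l : ℝ) (f : ℕ → ℝ) : ℝ := ∑' k, poissonPMF l k * f k

lemma Po_mono {l : ℝ} (hl : 0 ≤ l) {f g : ℕ → ℝ} (hf : LB f) (hg : LB g) (h : ∀ k, f k ≤ g k) :
    Po l f ≤ Po l g :=
  Summable.tsum_le_tsum (fun k => mul_le_mul_of_nonneg_left (h k) (pois_nonneg hl k))
    (pois_summ hl hf) (pois_summ hl hg)

lemma Po_const (l : ℝ) (a : ℝ) : Po l (fun _ => a) = a := by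
  unfold Po; rw [tsum_mul_right, (pois_hasSum l).tsum_eq, one_mul]

lemma Po_id (l : ℝ) : Po l (fun k => (k:ℝ)) = l := (pois_hasSum_id l).tsum_eq

lemma Po_add {l : ℝ} (hl : 0 ≤ l) {f g : ℕ → ℝ} (hf : LB f) (hg : LB g) :
    Po l (fun k => f k + g k) = Po l f + Po l g := by
  unfold Po; rw [← Summable.tsum_add (pois_summ hl hf) (pois_summ hl hg)]
  simp [mul_add]

lemma Po_mul (l : ℝ) (a : ℝ) (f : ℕ → ℝ) : Po l (fun k => a * f k) = a * Po l f := by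
  unfold Po; rw [← tsum_mul_left]; congr 1; ext k; ring

lemma Po_sub {l : ℝ} (hl : 0 ≤ l) {f g : ℕ → ℝ} (hf : LB f) (hg : LB g) :
    Po l (fun k => f k - g k) = Po l f - Po l g := by
  unfold Po; rw [← Summable.tsum_sub (pois_summ hl hf) (pois_summ hl hg)]
  simp [mul_sub]

lemma LB.add {f g : ℕ → ℝ} (hf : LB f) (hg : LB g) : LB (fun k => f k + g k) := by
  obtain ⟨C, hC⟩ := hf
  obtain ⟨D, hD⟩ := hg
  exact ⟨C + D, fun k => (abs_add_le _ _).trans (by nlinarith [hC k, hD k])⟩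

lemma LB.sub {f g : ℕ → ℝ} (hf : LB f) (hg : LB g) : LB (fun k => f k - g k) := by
  obtain ⟨C, hC⟩ := hf
  obtain ⟨D, hD⟩ := hg
  exact ⟨C + D, fun k => (abs_sub _ _).trans (by nlinarith [hC k, hD k])⟩

lemma LB.const (a : ℝ) : LB (fun _ => a) := by
  refine ⟨|a|, fun k => ?_⟩
  have : (0:ℝ) ≤ k := by positivity
  nlinarith [abs_nonneg a]

lemma LB.mul (a : ℝ) {f : ℕ → ℝ} (hf : LB f) : LB (fun k => a * f k) := by
  obtain ⟨C, hC⟩ := hf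
  refine ⟨|a| * C, fun k => ?_⟩
  rw [abs_mul, mul_assoc]
  exact mul_le_mul_of_nonneg_left (hC k) (abs_nonneg a)

lemma LB.id : LB (fun k => (k:ℝ)) := ⟨1, fun k => by rw [Nat.abs_cast]; linarith⟩

def LB2 (a : ℕ → ℕ → ℝ) : Prop := ∃ C, ∀ j l : ℕ, |a j l| ≤ C * (1 + j + l)

lemma LB2.C_nonneg {a : ℕ → ℕ → ℝ} {C} (h : ∀ j l : ℕ, |a j l| ≤ C * (1 + j + l)) : 0 ≤ C := by
  have := h 0 0
  simp at this
  exact (abs_nonneg _).trans this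

lemma LB2.left {a : ℕ → ℕ → ℝ} (h : LB2 a) (j : ℕ) : LB (a j) := by
  obtain ⟨C, hC⟩ := h
  have h0 := LB2.C_nonneg hC
  refine ⟨C * (1 + j), fun l => (hC j l).trans ?_⟩
  have : 0 ≤ C * (j * l : ℝ) := by positivity
  nlinarith

lemma LB2.po {a : ℕ → ℕ → ℝ} (h : LB2 a) {m : ℝ} (hm : 0 ≤ m) : LB (fun j => Po m (a j)) := by
  have hL := h.left
  obtain ⟨C, hC⟩ := h
  have h0 := LB2.C_nonneg hC
  refine ⟨C * (1 + m), fun j => ?_⟩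
  have h1 : Po m (fun l => C * (1 + j) + C * (l:ℝ)) = C * (1 + j) + C * m := by
    rw [Po_add hm (LB.const _) (LB.id.mul C), Po_const, Po_mul, Po_id]
  have hb : LB (fun l : ℕ => C * (1 + j) + C * (l:ℝ)) := (LB.const _).add (LB.id.mul C)
  have h2 : Po m (a j) ≤ C * (1 + j) + C * m := by
    rw [← h1]
    exact Po_mono hm (hL j) hb fun l => by linarith [le_abs_self (a j l), hC j l]
  have h3 : Po m (fun l => (-1) * a j l) ≤ C * (1 + j) + C * m := by
    rw [← h1]
    exact Po_mono hm ((hL j).mul _) hb fun l => by linarith [neg_abs_le (a j l), hC j l]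
  rw [Po_mul] at h3
  have : 0 ≤ C * (m * j : ℝ) := by positivity
  rw [abs_le]; constructor <;> nlinarith

/-- Poisson splitting -/
lemma Po_split {Lam p : ℝ} (hL : 0 ≤ Lam) (hp : 0 ≤ p) (hp1 : p ≤ 1) {a : ℕ → ℕ → ℝ} (ha : LB2 a) :
    Po Lam (fun n => ∑ x ∈ Finset.HasAntidiagonal.antidiagonal n,
      (n.choose x.1 : ℝ) * (p ^ x.1 * (1 - p) ^ x.2 * a x.1 x.2))
    = Po (p * Lam) (fun j => Po ((1 - p) * Lam) (a j)) := by
  have hp2 : 0 ≤ 1 - p := by linarith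
  have h1 : 0 ≤ p * Lam := by positivity
  have h2 : 0 ≤ (1 - p) * Lam := by positivity
  have hS : Summable (fun x : ℕ × ℕ =>
      poissonPMF (p * Lam) x.1 * (poissonPMF ((1-p) * Lam) x.2 * a x.1 x.2)) := by
    obtain ⟨C, hC⟩ := ha
    have h0 := LB2.C_nonneg hC
    have hb : LB (fun k => 1 + (k:ℝ)) := (LB.const 1).add LB.id
    have hs := ((pois_summ h1 hb).mul_of_nonneg (pois_summ h2 hb)
      (fun k => mul_nonneg (pois_nonneg h1 k) (by positivity))
      (fun k => mul_nonneg (pois_nonneg h2 k) (by positivity))).mul_left C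
    refine Summable.of_norm_bounded hs ?_
    rintro ⟨j, l⟩
    have e1 := pois_nonneg h1 j
    have e2 := pois_nonneg h2 l
    simp only [Real.norm_eq_abs, abs_mul, abs_of_nonneg e1, abs_of_nonneg e2]
    have h3 : |a j l| ≤ C * ((1 + j) * (1 + l)) := (hC j l).trans (by
      have : 0 ≤ C * (j * l : ℝ) := by positivity
      nlinarith)
    calc _ = poissonPMF (p * Lam) j * poissonPMF ((1-p) * Lam) l * |a j l| := by ring
      _ ≤ poissonPMF (p * Lam) j * poissonPMF ((1-p) * Lam) l * (C * ((1 + j) * (1 + l))) :=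
        mul_le_mul_of_nonneg_left h3 (by positivity)
      _ = _ := by ring
  have e1 : Po (p * Lam) (fun j => Po ((1 - p) * Lam) (a j)) = ∑' x : ℕ × ℕ,
      poissonPMF (p * Lam) x.1 * (poissonPMF ((1-p) * Lam) x.2 * a x.1 x.2) := by
    rw [hS.tsum_prod]
    unfold Po
    congr 1; ext j
    rw [← tsum_mul_left]
  have hS' := (Finset.HasAntidiagonal.sigmaAntidiagonalEquivProd).summable_iff.2 hS
  simp only [Function.comp_def] at hS'
  rw [e1, ← (Finset.HasAntidiagonal.sigmaAntidiagonalEquivProd).tsum_eq,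
    Summable.tsum_sigma' (fun n => (hasSum_fintype _).summable) hS']
  unfold Po
  congr 1; ext n
  rw [tsum_fintype]
  simp only [Finset.HasAntidiagonal.sigmaAntidiagonalEquivProd, Equiv.coe_fn_mk]
  rw [Finset.sum_coe_sort (Finset.HasAntidiagonal.antidiagonal n) (fun x => poissonPMF (p * Lam) x.1 * (poissonPMF ((1-p) * Lam) x.2 * a x.1 x.2)), Finset.mul_sum]
  refine Finset.sum_congr rfl ?_
  rintro ⟨j, l⟩ hx
  rw [Finset.HasAntidiagonal.mem_antidiagonal] at hx
  simp only at hx ⊢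
  subst hx
  unfold poissonPMF
  rw [Nat.choose_symm_add, Nat.add_choose, Nat.cast_div (Nat.factorial_mul_factorial_dvd_factorial_add j l) (by positivity)]
  have e : Real.exp (-Lam) = Real.exp (-(p*Lam)) * Real.exp (-((1-p)*Lam)) := by
    rw [← Real.exp_add]; congr 1; ring
  rw [e]
  have : (j.factorial : ℝ) ≠ 0 := by positivity
  have : (l.factorial : ℝ) ≠ 0 := by positivity
  have : ((j+l).factorial : ℝ) ≠ 0 := by positivity
  push_cast
  rw [mul_pow, mul_pow, pow_add]
  field_simp

lemma binom_rec {a : ℕ → ℕ → ℕ → ℝ} {p ε : ℝ} (hp : 0 ≤ p) (hp1 : p ≤ 1)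
    (h : ∀ j n l, p * a (j+1) n l + (1-p) * a j n (l+1) - ε ≤ a j (n+1) l) (n : ℕ) :
    ∀ j l, ∑ x ∈ Finset.HasAntidiagonal.antidiagonal n,
      (n.choose x.1 : ℝ) * (p ^ x.1 * (1 - p) ^ x.2 * a (j + x.1) 0 (l + x.2)) - n * ε ≤ a j n l := by
  induction n with
  | zero => intro j l; simp
  | succ n ih =>
    intro j l
    refine le_trans ?_ (h j n l)
    have h1 := mul_le_mul_of_nonneg_left (ih (j+1) l) hp
    have h2 := mul_le_mul_of_nonneg_left (ih j (l+1)) (by linarith : 0 ≤ 1 - p)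
    rw [Finset.sum_antidiagonal_choose_succ_mul
      (fun x y => p ^ x * (1 - p) ^ y * a (j + x) 0 (l + y)) n]
    have e1 : p * ∑ x ∈ Finset.HasAntidiagonal.antidiagonal n,
        (n.choose x.1 : ℝ) * (p ^ x.1 * (1 - p) ^ x.2 * a (j + 1 + x.1) 0 (l + x.2))
        = ∑ ij ∈ Finset.HasAntidiagonal.antidiagonal n, (n.choose ij.2 : ℝ) * (p ^ (ij.1 + 1) * (1 - p) ^ ij.2 * a (j + (ij.1 + 1)) 0 (l + ij.2)) := by
      rw [Finset.mul_sum]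
      refine Finset.sum_congr rfl fun x hx => ?_
      rw [Finset.HasAntidiagonal.mem_antidiagonal] at hx
      rw [Nat.choose_symm_of_eq_add hx.symm, show j + 1 + x.1 = j + (x.1 + 1) by ring]; ring
    have e2 : (1-p) * ∑ x ∈ Finset.HasAntidiagonal.antidiagonal n,
        (n.choose x.1 : ℝ) * (p ^ x.1 * (1 - p) ^ x.2 * a (j + x.1) 0 (l + 1 + x.2))
        = ∑ ij ∈ Finset.HasAntidiagonal.antidiagonal n, (n.choose ij.1 : ℝ) * (p ^ ij.1 * (1 - p) ^ (ij.2 + 1) * a (j + ij.1) 0 (l + (ij.2 + 1))) := by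
      rw [Finset.mul_sum]
      refine Finset.sum_congr rfl fun x hx => ?_
      rw [show l + 1 + x.2 = l + (x.2 + 1) by ring]; ring
    rw [mul_sub, e1] at h1
    rw [mul_sub, e2] at h2
    push_cast
    nlinarith

/-- The abstract comparison. -/
lemma Po_compare {a : ℕ → ℕ → ℕ → ℝ} {p ε Lam : ℝ} (hL : 0 ≤ Lam) (hp : 0 ≤ p) (hp1 : p ≤ 1)
    (h : ∀ j n l, p * a (j+1) n l + (1-p) * a j n (l+1) - ε ≤ a j (n+1) l)
    {C : ℝ} (hC : ∀ j n l : ℕ, |a j n l| ≤ C * (1 + j + n + l)) :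
    Po (p * Lam) (fun j => Po ((1 - p) * Lam) (fun l => a j 0 l)) - Lam * ε ≤ Po Lam (fun n => a 0 n 0) := by
  have hb : LB2 (fun j l => a j 0 l) := ⟨C, fun j l => by simpa using hC j 0 l⟩
  have h0 := LB2.C_nonneg (fun j l => by simpa using hC j 0 l : ∀ j l : ℕ, |a j 0 l| ≤ C * (1 + j + l))
  rw [← Po_split hL hp hp1 hb]
  have hb1 : LB (fun n => a 0 n 0) := ⟨C, fun n => by simpa using hC 0 n 0⟩
  have hb2 : LB (fun n => ∑ x ∈ Finset.HasAntidiagonal.antidiagonal n,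
      (n.choose x.1 : ℝ) * (p ^ x.1 * (1 - p) ^ x.2 * a x.1 0 x.2)) := by
    refine ⟨C, fun n => (Finset.abs_sum_le_sum_abs _ _).trans ?_⟩
    have hp2 : 0 ≤ 1 - p := by linarith
    have : ∀ x ∈ Finset.HasAntidiagonal.antidiagonal n, |(n.choose x.1 : ℝ) * (p ^ x.1 * (1 - p) ^ x.2 * a x.1 0 x.2)|
        ≤ (p ^ x.1 * (1 - p) ^ x.2 * (n.choose x.1 : ℝ)) * (C * (1 + n)) := by
      intro x hx
      rw [Finset.HasAntidiagonal.mem_antidiagonal] at hx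
      rw [abs_mul, abs_mul, abs_of_nonneg (by positivity : (0:ℝ) ≤ n.choose x.1),
        abs_of_nonneg (by positivity : (0:ℝ) ≤ p ^ x.1 * (1 - p) ^ x.2)]
      have := hC x.1 0 x.2
      have e : (n : ℝ) = x.1 + x.2 := by exact_mod_cast hx.symm
      have h3 : |a x.1 0 x.2| ≤ C * (1 + n) := this.trans (le_of_eq (by rw [e]; push_cast; ring))
      calc _ = (p ^ x.1 * (1 - p) ^ x.2 * (n.choose x.1 : ℝ)) * |a x.1 0 x.2| := by ring
        _ ≤ _ := mul_le_mul_of_nonneg_left h3 (by positivity)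
    refine (Finset.sum_le_sum this).trans ?_
    rw [← Finset.sum_mul]
    have e := (Commute.all p (1-p)).add_pow' n
    simp only [add_sub_cancel, one_pow, nsmul_eq_mul] at e
    have e' : ∑ i ∈ Finset.HasAntidiagonal.antidiagonal n, p ^ i.1 * (1 - p) ^ i.2 * ↑(n.choose i.1) = 1 := by
      refine Eq.trans (Finset.sum_congr rfl fun x _ => by ring) e.symm
    rw [e', one_mul]
  have := Po_mono hL (hb2.sub (LB.id.mul ε)) hb1 (fun n => by
    have := binom_rec hp hp1 h n 0 0
    simp only [zero_add] at this
    linarith)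
  rw [Po_sub hL hb2 (LB.id.mul ε), Po_mul, Po_id] at this
  linarith


lemma sum_cons {ι : Type*} [Fintype ι] {k : ℕ} {M : Type*} [AddCommMonoid M] (f : (Fin (k+1) → ι) → M) :
    ∑ e, f e = ∑ x : ι, ∑ e : Fin k → ι, f (Fin.cons x e) := by
  rw [← Fintype.sum_prod_type' (fun (x : ι) (e : Fin k → ι) => f (Fin.cons x e : Fin (k+1) → ι))]
  exact (Fintype.sum_equiv (Fin.consEquiv (fun _ : Fin (k+1) => ι)) _ _ (fun x => rfl)).symm

lemma expect_cons {ι : Type*} [Fintype ι] {k : ℕ} (f : (Fin (k+1) → ι) → ℝ) :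
    Finset.expect Finset.univ f
      = Finset.expect Finset.univ fun x : ι => Finset.expect Finset.univ fun e : Fin k → ι => f (Fin.cons x e) := by
  simp only [Fintype.expect_eq_sum_div_card, sum_cons, ← Finset.sum_div, Fintype.card_fun, Fintype.card_fin]
  push_cast
  rw [pow_succ, div_div]

def cnt {ι : Type*} [DecidableEq ι] {k : ℕ} (e : Fin k → ι) : ι → ℕ :=
  fun i => ∑ l, if e l = i then 1 else 0

lemma cnt_sum {ι : Type*} [Fintype ι] [DecidableEq ι] {k : ℕ} (e : Fin k → ι) : ∑ i, cnt e i = k := by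
  unfold cnt
  rw [Finset.sum_comm]
  simp

lemma cnt_cons {ι : Type*} [DecidableEq ι] {k : ℕ} (x : ι) (e : Fin k → ι) :
    cnt (Fin.cons x e : Fin (k+1) → ι) = fun i => (if x = i then 1 else 0) + cnt e i := by
  funext i
  unfold cnt
  rw [Fin.sum_univ_succ]
  simp only [Fin.cons_zero, Fin.cons_succ]

lemma card_cnt {ι : Type*} [Fintype ι] [DecidableEq ι] (k : ℕ) : ∀ J : ι → ℕ, ∑ i, J i = k →
    (∑ e : Fin k → ι, if cnt e = J then 1 else 0) * ∏ i, (J i).factorial = k.factorial := by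
  induction k with
  | zero =>
    intro J hJ
    have : J = fun _ => 0 := by
      funext i; exact (Finset.sum_eq_zero_iff.1 hJ) i (Finset.mem_univ i)
    subst this
    have h : ∀ e : Fin 0 → ι, cnt e = fun _ => 0 := fun e => by funext i; simp [cnt]
    simp [h]
  | succ k ih =>
    intro J hJ
    rw [sum_cons, Finset.sum_mul]
    have key : ∀ x : ι, (∑ e : Fin k → ι, if cnt (Fin.cons x e : Fin (k+1) → ι) = J then 1 else 0)
        * ∏ i, (J i).factorial = J x * k.factorial := by
      intro x
      rcases Nat.eq_zero_or_pos (J x) with h0 | hpos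
      · rw [h0, zero_mul]
        rw [Finset.sum_eq_zero, zero_mul]
        intro e _
        rw [if_neg]
        intro h
        rw [cnt_cons] at h
        have := congrFun h x
        simp at this
        omega
      · obtain ⟨m, hm⟩ := Nat.exists_eq_succ_of_ne_zero hpos.ne'
        let J' : ι → ℕ := Function.update J x m
        have hJ' : ∑ i, J' i = k := by
          have h1 : ∑ i, J i = J x + ∑ i ∈ Finset.univ.erase x, J i :=
            (Finset.add_sum_erase _ _ (Finset.mem_univ x)).symm
          have h2 : ∑ i, J' i = J' x + ∑ i ∈ Finset.univ.erase x, J' i :=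
            (Finset.add_sum_erase _ _ (Finset.mem_univ x)).symm
          have h3 : ∑ i ∈ Finset.univ.erase x, J' i = ∑ i ∈ Finset.univ.erase x, J i :=
            Finset.sum_congr rfl fun i hi => by simp [J', Function.update_of_ne (Finset.ne_of_mem_erase hi)]
          have h4 : J' x = m := by simp [J']
          omega
        have hpr : ∏ i, (J i).factorial = J x * ∏ i, (J' i).factorial := by
          rw [← Finset.mul_prod_erase _ _ (Finset.mem_univ x),
            ← Finset.mul_prod_erase Finset.univ (fun i => (J' i).factorial) (Finset.mem_univ x)]
          have h3 : ∏ i ∈ Finset.univ.erase x, (J' i).factorial = ∏ i ∈ Finset.univ.erase x, (J i).factorial :=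
            Finset.prod_congr rfl fun i hi => by simp [J', Function.update_of_ne (Finset.ne_of_mem_erase hi)]
          rw [h3]
          have h4 : J' x = m := by simp [J']
          rw [h4, hm, Nat.factorial_succ, Nat.succ_eq_add_one]; ring
        have hc : ∀ e : Fin k → ι, cnt (Fin.cons x e : Fin (k+1) → ι) = J ↔ cnt e = J' := by
          intro e
          rw [cnt_cons]
          constructor
          · intro h
            funext i
            have := congrFun h i
            by_cases hi : i = x
            · subst hi; simp [J'] at this ⊢; omega
            · simp [J', Function.update_of_ne hi, Ne.symm hi] at this ⊢; exact this
          · intro h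
            funext i
            have := congrFun h i
            by_cases hi : i = x
            · subst hi; simp [J'] at this ⊢; omega
            · simp [J', Function.update_of_ne hi, Ne.symm hi] at this ⊢; exact this
        simp only [hc]
        rw [hpr, mul_left_comm, ih J' hJ']
    rw [Finset.sum_congr rfl fun x _ => key x, ← Finset.sum_mul, hJ, Nat.factorial_succ]

lemma poissonize {ι : Type*} [Fintype ι] [DecidableEq ι] [Nonempty ι] {lam : ℝ} (hl : 0 ≤ lam) (g : (ι → ℕ) → ℝ)
    {C : ℝ} (hg : ∀ J, |g J| ≤ C * (1 + ∑ i, (J i : ℝ))) :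
    ∑' J : ι → ℕ, (∏ i, poissonPMF lam (J i)) * g J
      = Po (Fintype.card ι * lam) (fun k => Finset.expect Finset.univ fun e : Fin k → ι => g (cnt e)) := by
  set n : ℝ := (Fintype.card ι : ℝ) with hn
  have hn0 : 0 < n := by rw [hn]; exact_mod_cast Fintype.card_pos
  let F : (Σ k, (Fin k → ι)) → ℝ := fun s =>
    Real.exp (-(n * lam)) * lam ^ s.1 / s.1.factorial * g (cnt s.2)
  have hgc : ∀ (k : ℕ) (e : Fin k → ι), |g (cnt e)| ≤ C * (1 + k) := by
    intro k e
    have := hg (cnt e)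
    rwa [← Nat.cast_sum, cnt_sum] at this
  have hF : Summable F := by
    rw [← summable_norm_iff]
    rw [summable_sigma_of_nonneg (fun _ => norm_nonneg _)]
    refine ⟨fun k => (hasSum_fintype _).summable, ?_⟩
    have hs : Summable (fun k : ℕ => poissonPMF (n * lam) k * (C * (1 + k))) :=
      pois_summ (by positivity) (((LB.const 1).add LB.id).mul C)
    refine Summable.of_nonneg_of_le (fun k => tsum_nonneg fun _ => norm_nonneg _) ?_ hs
    intro k
    rw [tsum_fintype]
    have : ∀ e ∈ (Finset.univ : Finset (Fin k → ι)), ‖F ⟨k, e⟩‖ ≤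
        Real.exp (-(n * lam)) * lam ^ k / k.factorial * (C * (1 + k)) := by
      intro e _
      simp only [F, Real.norm_eq_abs, abs_mul]
      rw [abs_of_nonneg (by positivity)]
      exact mul_le_mul_of_nonneg_left (hgc k e) (by positivity)
    refine (Finset.sum_le_sum this).trans (le_of_eq ?_)
    rw [Finset.sum_const, Finset.card_univ, Fintype.card_fun, Fintype.card_fin, nsmul_eq_mul]
    unfold poissonPMF
    rw [mul_pow]; push_cast; rw [← hn]; ring
  have e1 : ∑' s, F s = Po (n * lam) (fun k => Finset.expect Finset.univ fun e : Fin k → ι => g (cnt e)) := by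
    rw [hF.tsum_sigma]
    unfold Po
    congr 1; funext k
    beta_reduce
    rw [tsum_fintype, Fintype.expect_eq_sum_div_card, Fintype.card_fun, Fintype.card_fin]
    simp only [F]
    rw [← Finset.mul_sum]
    unfold poissonPMF
    rw [mul_pow]; push_cast; rw [← hn]
    field_simp
  let f : (Σ k, (Fin k → ι)) → (ι → ℕ) := fun s => cnt s.2
  rw [← e1, ← (Equiv.sigmaFiberEquiv f).tsum_eq F]
  have hF' := (Equiv.sigmaFiberEquiv f).summable_iff.2 hF
  simp only [Function.comp_def] at hF'
  rw [Summable.tsum_sigma hF']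
  congr 1; funext J
  have h2 : ∀ x : {x // f x = J}, F ((Equiv.sigmaFiberEquiv f) ⟨J, x⟩) = F x.1 := fun x => rfl
  simp only [h2]
  have h3 := tsum_subtype {x | f x = J} F
  have h4 : ∑' x : {x // f x = J}, F x.1 = ∑' x, Set.indicator {x | f x = J} F x := h3
  rw [h4, (hF.indicator _).tsum_sigma]
  rw [tsum_eq_single (∑ i, J i)]
  · rw [tsum_fintype]
    have h5 : ∀ e : Fin (∑ i, J i) → ι, Set.indicator {x | f x = J} F ⟨_, e⟩
        = ((if cnt e = J then 1 else 0 : ℕ) : ℝ) * (Real.exp (-(n * lam)) * lam ^ (∑ i, J i) / (∑ i, J i).factorial * g J) := by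
      intro e
      by_cases h : cnt e = J
      · rw [Set.indicator_of_mem (by exact h), if_pos h]
        simp [F, h]
      · rw [Set.indicator_of_notMem (by exact h), if_neg h]
        simp
    simp only [h5]
    rw [← Finset.sum_mul, ← Nat.cast_sum]
    have h6 := card_cnt (∑ i, J i) J rfl
    set A := ∑ e : Fin (∑ i, J i) → ι, if cnt e = J then 1 else 0
    have h7 : (A : ℝ) * ∏ i, ((J i).factorial : ℝ) = ((∑ i, J i).factorial : ℝ) := by exact_mod_cast h6
    have h8 : (∏ i, ((J i).factorial : ℝ)) ≠ 0 := Finset.prod_ne_zero_iff.2 fun i _ => by positivity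
    have h9 : ((∑ i, J i).factorial : ℝ) ≠ 0 := by positivity
    unfold poissonPMF
    rw [Finset.prod_div_distrib, Finset.prod_mul_distrib, Finset.prod_pow_eq_pow_sum, Finset.prod_const,
      Finset.card_univ, ← Real.exp_nat_mul, ← h7]
    have h10 : (A : ℝ) ≠ 0 := by
      intro h; rw [h, zero_mul] at h7; exact h9 h7.symm
    field_simp
    rw [hn]; ring_nf
  · intro k hk
    rw [tsum_fintype]
    refine Finset.sum_eq_zero fun e _ => ?_
    rw [Set.indicator_of_notMem]
    intro h
    apply hk
    have h' : cnt e = J := h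
    rw [← h', cnt_sum]

noncomputable def lz {X : Type*} [Fintype X] (h : X → ℝ) : ℝ := Real.log (∑ x, Real.exp (- h x))

lemma lz_pos {X : Type*} [Fintype X] [Nonempty X] (h : X → ℝ) : 0 < ∑ x, Real.exp (- h x) :=
  Finset.sum_pos (fun _ _ => Real.exp_pos _) Finset.univ_nonempty

lemma lz_mono {X : Type*} [Fintype X] [Nonempty X] {h g : X → ℝ} (H : ∀ x, h x ≤ g x) : lz g ≤ lz h :=
  Real.log_le_log (lz_pos g) (Finset.sum_le_sum fun x _ => Real.exp_le_exp.2 (by linarith [H x]))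

lemma lz_add_const {X : Type*} [Fintype X] [Nonempty X] (h : X → ℝ) (c : ℝ) : lz (fun x => h x + c) = lz h - c := by
  unfold lz
  have : ∑ x, Real.exp (-(h x + c)) = (∑ x, Real.exp (- h x)) * Real.exp (-c) := by
    rw [Finset.sum_mul]; refine Finset.sum_congr rfl fun x _ => ?_
    rw [← Real.exp_add]; congr 1; ring
  rw [this, Real.log_mul (lz_pos h).ne' (Real.exp_pos _).ne', Real.log_exp]; ring

lemma lz_const {X : Type*} [Fintype X] [Nonempty X] (c : ℝ) : lz (fun _ : X => c) = Real.log (Fintype.card X) - c := by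
  have := lz_add_const (fun _ : X => (0:ℝ)) c
  simp only [zero_add] at this
  rw [this]; simp [lz]

lemma lz_bound {X : Type*} [Fintype X] [Nonempty X] {h : X → ℝ} {C : ℝ} (h0 : ∀ x, 0 ≤ h x) (hC : ∀ x, h x ≤ C) :
    Real.log (Fintype.card X) - C ≤ lz h ∧ lz h ≤ Real.log (Fintype.card X) := by
  constructor
  · rw [← lz_const]; exact lz_mono hC
  · have := lz_const (X := X) 0
    rw [sub_zero] at this
    rw [← this]; exact lz_mono h0

lemma lz_abs {X : Type*} [Fintype X] [Nonempty X] {h : X → ℝ} {C : ℝ} (h0 : ∀ x, 0 ≤ h x) (hC : ∀ x, h x ≤ C) :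
    |lz h| ≤ Real.log (Fintype.card X) + C := by
  have := lz_bound h0 hC
  have h2 : 0 ≤ Real.log (Fintype.card X) := Real.log_natCast_nonneg _
  obtain ⟨x⟩ := ‹Nonempty X›
  have := (h0 x).trans (hC x)
  rw [abs_le]; constructor <;> linarith

def ed {V : Type*} {q : ℕ} (x : V × V) (σ : V → Fin q) : ℝ := if σ x.1 = σ x.2 then 1 else 0

lemma ed_nonneg {V : Type*} {q : ℕ} (x : V × V) (σ : V → Fin q) : 0 ≤ ed x σ := by
  unfold ed; split_ifs <;> norm_num
lemma ed_le {V : Type*} {q : ℕ} (x : V × V) (σ : V → Fin q) : ed x σ ≤ 1 := by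
  unfold ed; split_ifs <;> norm_num

lemma eds_nonneg {V : Type*} {q k : ℕ} {β : ℝ} (hβ : 0 ≤ β) (e : Fin k → V × V) (σ : V → Fin q) :
    0 ≤ β * ∑ l, ed (e l) σ := mul_nonneg hβ (Finset.sum_nonneg fun l _ => ed_nonneg _ _)
lemma eds_le {V : Type*} {q k : ℕ} {β : ℝ} (hβ : 0 ≤ β) (e : Fin k → V × V) (σ : V → Fin q) :
    β * ∑ l, ed (e l) σ ≤ β * k := by
  refine mul_le_mul_of_nonneg_left ?_ hβ
  refine (Finset.sum_le_sum fun l _ => ed_le (e l) σ).trans ?_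
  simp

/-- average log-partition function with `k` uniform edges -/
noncomputable def Den (V : Type*) [Fintype V] [DecidableEq V] (q : ℕ) (β : ℝ) (k : ℕ) : ℝ :=
  Finset.expect Finset.univ fun e : Fin k → V × V => lz (fun σ : V → Fin q => β * ∑ l, ed (e l) σ)

lemma expect_abs_le {ι : Type*} [Fintype ι] [Nonempty ι] {f : ι → ℝ} {C : ℝ} (h : ∀ i, |f i| ≤ C) :
    |Finset.expect Finset.univ f| ≤ C :=
  (Finset.abs_expect_le _ _).trans (Finset.expect_le Finset.univ_nonempty fun i _ => h i)

lemma cast_lb {A B : ℝ} (hA : 0 ≤ A) (hB : 0 ≤ B) {k : ℝ} (hk : 0 ≤ k) : A + B * k ≤ (A + B) * (1 + k) := by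
  nlinarith [mul_nonneg hA hk]

lemma Den_LB {V : Type*} [Fintype V] [DecidableEq V] [Nonempty V] {q : ℕ} [NeZero q] {β : ℝ} (hβ : 0 ≤ β) :
    LB (Den V q β) := by
  refine ⟨Real.log (Fintype.card (V → Fin q)) + β, fun k => ?_⟩
  refine (expect_abs_le fun e => lz_abs (eds_nonneg hβ e) (eds_le hβ e)).trans ?_
  exact cast_lb (Real.log_natCast_nonneg _) hβ (Nat.cast_nonneg k)

lemma p_eq {q N : ℕ} [NeZero q] (hN : 1 ≤ N) {β c : ℝ} (hβ : 0 ≤ β) (hc : 0 ≤ c) :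
    (N:ℝ) * potts.p q N β c = Po (c * N / 2) (Den (Fin N) q β) := by
  haveI : Nonempty (Fin N) := ⟨⟨0, hN⟩⟩
  have hN0 : (N:ℝ) ≠ 0 := by positivity
  unfold potts.p potts.pmat potts.E
  rw [← tsum_mul_left]
  let g : (Fin N × Fin N → ℕ) → ℝ := fun J => Real.log (potts.Z q N (fun i j => β * (J (i,j) : ℝ)))
  have hg : ∀ J, g J = lz (fun σ : Fin N → Fin q => β * ∑ x, (J x : ℝ) * ed x σ) := by
    intro J
    simp only [g, lz, potts.Z, potts.H]
    congr 1
    refine Finset.sum_congr rfl fun σ _ => ?_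
    congr 2
    rw [Finset.mul_sum, Fintype.sum_prod_type]
    refine Finset.sum_congr rfl fun i _ => Finset.sum_congr rfl fun j _ => ?_
    simp only [ed]; ring
  have hgb : ∀ J, |g J| ≤ (Real.log (Fintype.card (Fin N → Fin q)) + β) * (1 + ∑ i, (J i : ℝ)) := by
    intro J
    rw [hg]
    have hs : 0 ≤ ∑ i, (J i : ℝ) := by positivity
    refine (lz_abs (C := β * ∑ i, (J i : ℝ)) ?_ ?_).trans
      (cast_lb (Real.log_natCast_nonneg _) hβ hs)
    · intro σ
      exact mul_nonneg hβ (Finset.sum_nonneg fun x _ => mul_nonneg (Nat.cast_nonneg _) (ed_nonneg _ _))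
    · intro σ
      refine mul_le_mul_of_nonneg_left (Finset.sum_le_sum fun x _ => ?_) hβ
      nlinarith [ed_le x σ, (Nat.cast_nonneg (J x) : (0:ℝ) ≤ J x)]
  have h1 := poissonize (ι := Fin N × Fin N) (lam := c / (2 * N)) (by positivity) g hgb
  have e : (Fintype.card (Fin N × Fin N) : ℝ) * (c / (2 * N)) = c * N / 2 := by
    simp; field_simp
  rw [e] at h1
  have h2 : (fun k => Finset.expect Finset.univ fun e : Fin k → Fin N × Fin N => g (cnt e)) = Den (Fin N) q β := by
    funext k
    unfold Den
    refine Finset.expect_congr rfl fun e _ => ?_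
    rw [hg]
    congr 1; funext σ; congr 1
    simp only [cnt, Nat.cast_sum, Finset.sum_mul]
    rw [Finset.sum_comm]
    refine Finset.sum_congr rfl fun l _ => ?_
    simp
  rw [h2] at h1
  rw [← h1, ← (Equiv.curry (Fin N) (Fin N) ℕ).tsum_eq]
  congr 1; funext J
  simp only [g, Equiv.curry_apply, Function.curry]
  rw [Fintype.prod_prod_type]
  field_simp


lemma Den_equiv {V V' : Type*} [Fintype V] [DecidableEq V] [Fintype V'] [DecidableEq V'] (φ : V ≃ V')
    (q : ℕ) (β : ℝ) (k : ℕ) : Den V q β k = Den V' q β k := by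
  unfold Den
  refine Fintype.expect_equiv (Equiv.arrowCongr (Equiv.refl _) (Equiv.prodCongr φ φ)) _ _ fun e => ?_
  unfold lz
  congr 1
  refine Fintype.sum_equiv (Equiv.arrowCongr φ (Equiv.refl _)) _ _ fun σ => ?_
  simp [ed]

/-- single-edge comparison -/
lemma edge_compare {M N : ℕ} (hN : 1 ≤ N) (hMN : N ≤ M) (f : (Fin M ⊕ Fin N) × (Fin M ⊕ Fin N) → ℝ)
    (hsym : ∀ x y, f (x, y) = f (y, x)) {F β : ℝ} (h1 : ∀ x, F - β ≤ f x) (h2 : ∀ x, f x ≤ F) :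
    ((M - N : ℝ) / (M + N)) * (Finset.expect Finset.univ fun x : Fin M × Fin M => f (Sum.inl x.1, Sum.inl x.2))
    + (1 - (M - N : ℝ) / (M + N)) * (Finset.expect Finset.univ fun x : Fin M × Fin N => f (Sum.inl x.1, Sum.inr x.2))
    - 2 * β * N ^ 2 / (M + N) ^ 2 ≤ Finset.expect Finset.univ f := by
  have hM : 1 ≤ M := hN.trans hMN
  haveI : Nonempty (Fin N) := ⟨⟨0, hN⟩⟩
  haveI : Nonempty (Fin M) := ⟨⟨0, hM⟩⟩
  have hN0 : (0:ℝ) < N := by positivity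
  have hM0 : (0:ℝ) < M := by positivity
  set s1 := Finset.expect Finset.univ fun x : Fin M × Fin M => f (Sum.inl x.1, Sum.inl x.2) with e1
  set s2 := Finset.expect Finset.univ fun x : Fin M × Fin N => f (Sum.inl x.1, Sum.inr x.2) with e2
  set s3 := Finset.expect Finset.univ fun x : Fin N × Fin N => f (Sum.inr x.1, Sum.inr x.2) with e3
  have b1 : F - β ≤ s1 := Finset.le_expect Finset.univ_nonempty fun x _ => h1 _
  have b2 : s2 ≤ F := Finset.expect_le Finset.univ_nonempty fun x _ => h2 _
  have b3 : F - β ≤ s3 := Finset.le_expect Finset.univ_nonempty fun x _ => h1 _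
  have t : Finset.expect Finset.univ f = (M^2 * s1 + 2 * (M * N) * s2 + N^2 * s3) / (M + N)^2 := by
    rw [e1, e2, e3]
    simp only [Fintype.expect_eq_sum_div_card, Fintype.card_prod, Fintype.card_sum, Fintype.card_fin]
    push_cast
    rw [Fintype.sum_prod_type, Fintype.sum_sum_type]
    simp only [Fintype.sum_sum_type, Fintype.sum_prod_type, Finset.sum_add_distrib]
    have : ∑ x : Fin N, ∑ y : Fin M, f (Sum.inr x, Sum.inl y) = ∑ y : Fin M, ∑ x : Fin N, f (Sum.inl y, Sum.inr x) := by
      rw [Finset.sum_comm]; simp only [hsym (Sum.inr _) (Sum.inl _)]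
    rw [this]
    field_simp
    ring
  rw [t]
  have key : (M^2 * s1 + 2 * (M * N) * s2 + N^2 * s3) / (M + N : ℝ)^2 -
     (((M - N : ℝ) / (M + N)) * s1 + (1 - (M - N : ℝ) / (M + N)) * s2 - 2 * β * N ^ 2 / (M + N) ^ 2)
     = N^2 / (M+N)^2 * (s1 - 2 * s2 + s3 + 2 * β) := by
    field_simp
    ring
  have : 0 ≤ (N:ℝ)^2 / (M+N)^2 * (s1 - 2 * s2 + s3 + 2 * β) := mul_nonneg (by positivity) (by linarith)
  linarith

noncomputable def hB {M N q : ℕ} {j n l : ℕ} (e1 : Fin j → Fin M × Fin M)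
    (e2 : Fin n → (Fin M ⊕ Fin N) × (Fin M ⊕ Fin N)) (e3 : Fin l → Fin M × Fin N) (σ : Fin M ⊕ Fin N → Fin q) : ℝ :=
  ∑ i, ed ((Sum.inl (e1 i).1 : Fin M ⊕ Fin N), (Sum.inl (e1 i).2 : Fin M ⊕ Fin N)) σ
    + ∑ i, ed (e2 i) σ + ∑ i, ed ((Sum.inl (e3 i).1 : Fin M ⊕ Fin N), (Sum.inr (e3 i).2 : Fin M ⊕ Fin N)) σ

noncomputable def Bf (M N q : ℕ) (β : ℝ) (j n l : ℕ) : ℝ :=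
  Finset.expect Finset.univ fun e1 : Fin j → Fin M × Fin M =>
  Finset.expect Finset.univ fun e3 : Fin l → Fin M × Fin N =>
  Finset.expect Finset.univ fun e2 : Fin n → (Fin M ⊕ Fin N) × (Fin M ⊕ Fin N) =>
    lz (fun σ : Fin M ⊕ Fin N → Fin q => β * hB e1 e2 e3 σ)

lemma hB_nonneg {M N q : ℕ} {j n l : ℕ} (e1 : Fin j → Fin M × Fin M)
    (e2 : Fin n → (Fin M ⊕ Fin N) × (Fin M ⊕ Fin N)) (e3 : Fin l → Fin M × Fin N) (σ : Fin M ⊕ Fin N → Fin q) :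
    0 ≤ hB e1 e2 e3 σ := by
  unfold hB
  exact add_nonneg (add_nonneg (Finset.sum_nonneg fun i _ => ed_nonneg _ σ) (Finset.sum_nonneg fun i _ => ed_nonneg _ σ))
    (Finset.sum_nonneg fun i _ => ed_nonneg _ σ)

lemma hB_le {M N q : ℕ} {j n l : ℕ} (e1 : Fin j → Fin M × Fin M)
    (e2 : Fin n → (Fin M ⊕ Fin N) × (Fin M ⊕ Fin N)) (e3 : Fin l → Fin M × Fin N) (σ : Fin M ⊕ Fin N → Fin q) :
    hB e1 e2 e3 σ ≤ j + n + l := by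
  unfold hB
  have h : ∀ (m : ℕ) (f : Fin m → (Fin M ⊕ Fin N) × (Fin M ⊕ Fin N)), ∑ i, ed (f i) σ ≤ m := by
    intro m f
    refine (Finset.sum_le_sum fun l _ => ed_le (f l) σ).trans ?_
    simp
  exact add_le_add (add_le_add (h _ _) (h _ _)) (h _ _)

lemma Bf_bound {M N q : ℕ} [NeZero q] (hN : 1 ≤ N) (hMN : N ≤ M) {β : ℝ} (hβ : 0 ≤ β) (j n l : ℕ) :
    |Bf M N q β j n l| ≤ (Real.log (Fintype.card (Fin M ⊕ Fin N → Fin q)) + β) * (1 + j + n + l) := by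
  haveI : Nonempty (Fin N) := ⟨⟨0, hN⟩⟩
  haveI : Nonempty (Fin M) := ⟨⟨0, hN.trans hMN⟩⟩
  refine expect_abs_le fun e1 => expect_abs_le fun e3 => expect_abs_le fun e2 => ?_
  refine (lz_abs (C := β * (j + n + l)) (fun σ => mul_nonneg hβ (hB_nonneg _ _ _ _))
    (fun σ => mul_le_mul_of_nonneg_left (hB_le _ _ _ _) hβ)).trans ?_
  have := cast_lb (Real.log_natCast_nonneg (Fintype.card (Fin M ⊕ Fin N → Fin q))) hβ (by positivity : (0:ℝ) ≤ j + n + l)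
  linarith

lemma Bf_rec {M N q : ℕ} [NeZero q] (hN : 1 ≤ N) (hMN : N ≤ M) {β : ℝ} (hβ : 0 ≤ β) (j n l : ℕ) :
    ((M - N : ℝ) / (M + N)) * Bf M N q β (j+1) n l + (1 - (M - N : ℝ) / (M + N)) * Bf M N q β j n (l+1)
      - 2 * β * N ^ 2 / (M + N) ^ 2 ≤ Bf M N q β j (n+1) l := by
  haveI : Nonempty (Fin N) := ⟨⟨0, hN⟩⟩
  haveI : Nonempty (Fin M) := ⟨⟨0, hN.trans hMN⟩⟩
  let Q : (Fin j → Fin M × Fin M) → (Fin l → Fin M × Fin N) → (Fin n → (Fin M ⊕ Fin N) × (Fin M ⊕ Fin N)) →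
      (Fin M ⊕ Fin N) × (Fin M ⊕ Fin N) → ℝ := fun e1 e3 e2 x =>
    lz (fun σ : Fin M ⊕ Fin N → Fin q => β * hB e1 e2 e3 σ + β * ed x σ)
  have E1 : Bf M N q β (j+1) n l = Finset.expect Finset.univ fun e1 => Finset.expect Finset.univ fun e3 =>
      Finset.expect Finset.univ fun e2 => Finset.expect Finset.univ fun x : Fin M × Fin M => Q e1 e3 e2 (Sum.inl x.1, Sum.inl x.2) := by
    unfold Bf
    rw [expect_cons, Finset.expect_comm]
    refine Finset.expect_congr rfl fun e1 _ => ?_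
    rw [Finset.expect_comm]
    refine Finset.expect_congr rfl fun e3 _ => ?_
    rw [Finset.expect_comm]
    refine Finset.expect_congr rfl fun e2 _ => Finset.expect_congr rfl fun x _ => ?_
    simp only [Q, hB]
    congr 1; funext σ
    rw [Fin.sum_univ_succ]
    simp only [Fin.cons_zero, Fin.cons_succ]
    ring
  have E2 : Bf M N q β j n (l+1) = Finset.expect Finset.univ fun e1 => Finset.expect Finset.univ fun e3 =>
      Finset.expect Finset.univ fun e2 => Finset.expect Finset.univ fun x : Fin M × Fin N => Q e1 e3 e2 (Sum.inl x.1, Sum.inr x.2) := by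
    unfold Bf
    refine Finset.expect_congr rfl fun e1 _ => ?_
    rw [expect_cons, Finset.expect_comm]
    refine Finset.expect_congr rfl fun e3 _ => ?_
    rw [Finset.expect_comm]
    refine Finset.expect_congr rfl fun e2 _ => Finset.expect_congr rfl fun x _ => ?_
    simp only [Q, hB]
    congr 1; funext σ
    rw [Fin.sum_univ_succ (n := l)]
    simp only [Fin.cons_zero, Fin.cons_succ]
    ring
  have E3 : Bf M N q β j (n+1) l = Finset.expect Finset.univ fun e1 => Finset.expect Finset.univ fun e3 =>
      Finset.expect Finset.univ fun e2 => Finset.expect Finset.univ fun x => Q e1 e3 e2 x := by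
    unfold Bf
    refine Finset.expect_congr rfl fun e1 _ => Finset.expect_congr rfl fun e3 _ => ?_
    rw [expect_cons, Finset.expect_comm]
    refine Finset.expect_congr rfl fun e2 _ => Finset.expect_congr rfl fun x _ => ?_
    simp only [Q, hB]
    congr 1; funext σ
    rw [Fin.sum_univ_succ (n := n)]
    simp only [Fin.cons_zero, Fin.cons_succ]
    ring
  rw [E1, E2, E3]
  have c0 : 2 * β * N ^ 2 / (M + N : ℝ) ^ 2 = Finset.expect Finset.univ fun e1 : Fin j → Fin M × Fin M =>
      Finset.expect Finset.univ fun e3 : Fin l → Fin M × Fin N =>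
      Finset.expect Finset.univ fun e2 : Fin n → (Fin M ⊕ Fin N) × (Fin M ⊕ Fin N) => 2 * β * N ^ 2 / (M + N : ℝ) ^ 2 := by
    simp only [Fintype.expect_const]
  rw [c0]
  simp only [Finset.mul_expect, ← Finset.expect_add_distrib, ← Finset.expect_sub_distrib]
  refine Finset.expect_le_expect fun e1 _ => Finset.expect_le_expect fun e3 _ => Finset.expect_le_expect fun e2 _ => ?_
  rw [← Finset.mul_expect, ← Finset.mul_expect]
  refine edge_compare hN hMN (Q e1 e3 e2) ?_ (F := lz (fun σ : Fin M ⊕ Fin N → Fin q => β * hB e1 e2 e3 σ)) ?_ ?_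
  · intro x y
    simp only [Q, ed, eq_comm]
  · intro x
    rw [← lz_add_const]
    refine lz_mono fun σ => ?_
    nlinarith [ed_le x σ]
  · intro x
    refine lz_mono fun σ => ?_
    nlinarith [ed_nonneg x σ]

lemma Bf_final {M N q : ℕ} [NeZero q] (hN : 1 ≤ N) (hMN : N ≤ M) {β c : ℝ} (hβ : 0 ≤ β) (hc : 0 ≤ c) :
    Po (c * (M - N) / 2) (fun j => Po (c * N) (fun l => Bf M N q β j 0 l)) - β * c * N ^ 2 / (M + N)
      ≤ (M + N : ℝ) * potts.p q (M + N) β c := by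
  have hN0 : (0:ℝ) < N := by positivity
  have hMN' : (N:ℝ) ≤ M := by exact_mod_cast hMN
  have h := Po_compare (Lam := c * (M + N) / 2) (by positivity)
    (div_nonneg (by linarith) (by linarith) : (0:ℝ) ≤ (M - N : ℝ) / (M + N))
    ((div_le_one (by linarith)).2 (by linarith)) (Bf_rec (q := q) hN hMN hβ) (Bf_bound hN hMN hβ)
  have e1 : (M - N : ℝ) / (M + N) * (c * (M + N) / 2) = c * (M - N) / 2 := by field_simp
  have e2 : (1 - (M - N : ℝ) / (M + N)) * (c * (M + N) / 2) = c * N := by field_simp; ring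
  have e3 : c * (M + N : ℝ) / 2 * (2 * β * N ^ 2 / (M + N) ^ 2) = β * c * N ^ 2 / (M + N) := by field_simp
  rw [e1, e2, e3] at h
  refine h.trans (le_of_eq ?_)
  have hp := p_eq (q := q) (N := M + N) (by omega) hβ hc
  push_cast at hp
  rw [hp]
  congr 1
  funext n
  rw [← Den_equiv finSumFinEquiv]
  simp [Bf, Den, hB]

/-- the limiting argument -/
lemma limit_arg (x g : ℕ → ℝ) (K B : ℝ) (hK : 0 ≤ K) (hB : ∀ N, 1 ≤ N → x N ≤ B)
    (h1 : ∀ N, 1 ≤ N → x N ≤ g N)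
    (h2 : ∀ N M, 1 ≤ N → N ≤ M → N * g N ≤ (M + N : ℝ) * x (M + N) - M * x M + K * N^2 / (M + N)) :
    ∃ P, Tendsto x atTop (nhds P) ∧ Tendsto g atTop (nhds P) := by
  have claim : ∀ N, 1 ≤ N → ∀ ε > 0, ∀ᶠ m in atTop, g N - ε ≤ x m := by
    intro N hN ε hε
    have hN0 : (0:ℝ) < N := by positivity
    obtain ⟨M1, hM1⟩ := exists_nat_ge (N + K * N / (ε / 2) : ℝ)
    have hKN : 0 ≤ K * N / (ε / 2) := by positivity
    have hM1N : N ≤ M1 := by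
      have : (N : ℝ) ≤ M1 := by linarith
      exact_mod_cast this
    set s := g N - ε / 2 with hs
    have step : ∀ M, M1 ≤ M → M * x M + N * s ≤ (M + N : ℝ) * x (M + N) := by
      intro M hM
      have hh := h2 N M hN (hM1N.trans hM)
      have hM' : (M1 : ℝ) ≤ M := by exact_mod_cast hM
      have : K * N^2 / (M + N) ≤ N * (ε / 2) := by
        rw [div_le_iff₀ (by positivity)]
        have h3 : K * N / (ε / 2) ≤ M + N := by linarith
        rw [div_le_iff₀ (by positivity)] at h3
        nlinarith
      rw [hs]; nlinarith
    let C : ℝ := ∑ r ∈ Finset.range (M1 + N), |r * s - r * x r|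
    have low : ∀ m, M1 ≤ m → m * s - C ≤ m * x m := by
      intro m
      induction m using Nat.strong_induction_on with
      | _ m ih =>
        intro hm
        by_cases hlt : m < M1 + N
        · have : |(m:ℝ) * s - m * x m| ≤ C :=
            Finset.single_le_sum (f := fun r : ℕ => |(r:ℝ) * s - r * x r|) (fun _ _ => abs_nonneg _) (Finset.mem_range.2 hlt)
          linarith [le_abs_self ((m:ℝ) * s - m * x m)]
        · push Not at hlt
          obtain ⟨m', rfl⟩ : ∃ m', m = m' + N := ⟨m - N, by omega⟩
          have i1 := ih m' (by omega) (by omega)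
          have i2 := step m' (by omega)
          push_cast
          nlinarith
    obtain ⟨m0, hm0⟩ := exists_nat_ge (C / (ε / 2))
    filter_upwards [eventually_ge_atTop (max (max M1 m0) 1)] with m hm
    have hmM : M1 ≤ m := by omega
    have hmm0 : m0 ≤ m := by omega
    have hm1 : 1 ≤ m := by omega
    have hmp : (0:ℝ) < m := by positivity
    have l := low m hmM
    have : C ≤ m * (ε / 2) := by
      rw [← div_le_iff₀ (by positivity)]
      exact hm0.trans (by exact_mod_cast hmm0)
    have h3 : m * (g N - ε) ≤ m * x m := by rw [hs] at l; nlinarith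
    exact le_of_mul_le_mul_left h3 hmp
  let S : Set ℝ := x '' {N | 1 ≤ N}
  have hbd : BddAbove S := ⟨B, by rintro _ ⟨N, hN, rfl⟩; exact hB N hN⟩
  have hne : S.Nonempty := ⟨x 1, 1, by simp, rfl⟩
  have hxP : ∀ N, 1 ≤ N → x N ≤ sSup S := fun N hN => le_csSup hbd ⟨N, hN, rfl⟩
  have hx : Tendsto x atTop (nhds (sSup S)) := by
    rw [tendsto_order]
    constructor
    · intro a ha
      obtain ⟨_, ⟨N, hN, rfl⟩, hN2⟩ := exists_lt_of_lt_csSup hne ha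
      have hN2' : 0 < (x N - a) / 2 := by linarith
      filter_upwards [claim N hN _ hN2'] with m hm
      linarith [h1 N hN]
    · intro a ha
      filter_upwards [eventually_ge_atTop 1] with m hm
      exact (hxP m hm).trans_lt ha
  refine ⟨sSup S, hx, ?_⟩
  refine tendsto_of_tendsto_of_tendsto_of_le_of_le' hx tendsto_const_nhds ?_ ?_
  · filter_upwards [eventually_ge_atTop 1] with N hN using h1 N hN
  · filter_upwards [eventually_ge_atTop 1] with N hN
    refine le_of_forall_pos_le_add fun ε hε => ?_
    obtain ⟨m, hm, hm1⟩ := ((claim N hN ε hε).and (eventually_ge_atTop 1)).exists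
    linarith [hxP m hm1]


def Good {q : ℕ} (p : SpinStruct q) : Prop := (∀ n, 0 ≤ p.1 n) ∧ HasSum p.1 1

lemma good_iff (f : ℕ → ℝ) (h0 : ∀ n, 0 ≤ f n) : HasSum f 1 ↔ ∑' n, ENNReal.ofReal (f n) = 1 := by
  constructor
  · intro h
    rw [← ENNReal.ofReal_tsum_of_nonneg h0 h.summable, h.tsum_eq, ENNReal.ofReal_one]
  · intro h
    have hs : Summable f := by
      have := ENNReal.summable_toReal (f := fun n => ENNReal.ofReal (f n)) (by rw [h]; simp)
      simpa only [ENNReal.toReal_ofReal (h0 _)] using this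
    rw [← ENNReal.ofReal_tsum_of_nonneg h0 hs] at h
    have := (ENNReal.ofReal_eq_one).1 h
    rw [← this]; exact hs.hasSum

lemma good_ae {q : ℕ} {L : Measure (SpinStruct q)} (h : IsRSS q L) : ∀ᵐ p ∂L, Good p := by
  obtain ⟨hp, h1, -⟩ := h
  set S := {p : SpinStruct q | (∀ n, 0 ≤ p.1 n) ∧ Antitone p.1 ∧ HasSum p.1 1} with hS
  have hm : ∀ n, Measurable (fun p : SpinStruct q => p.1 n) := fun n => (measurable_pi_apply n).comp measurable_fst
  have e : S = (⋂ n, {p | 0 ≤ p.1 n}) ∩ (⋂ n, {p | p.1 (n+1) ≤ p.1 n}) ∩ {p | ∑' n, ENNReal.ofReal (p.1 n) = 1} := by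
    ext p
    simp only [hS, Set.mem_setOf_eq, Set.mem_inter_iff, Set.mem_iInter]
    constructor
    · rintro ⟨a, b, c⟩
      exact ⟨⟨a, fun n => b (Nat.le_succ n)⟩, (good_iff _ a).1 c⟩
    · rintro ⟨⟨a, b⟩, c⟩
      exact ⟨a, antitone_nat_of_succ_le b, (good_iff _ a).2 c⟩
  have hSm : MeasurableSet S := by
    rw [e]
    refine ((MeasurableSet.iInter fun n => measurableSet_le measurable_const (hm n)).inter
      (MeasurableSet.iInter fun n => measurableSet_le (hm (n+1)) (hm n))).inter ?_
    exact measurableSet_eq_fun (Measurable.ennreal_tsum fun n => (hm n).ennreal_ofReal) measurable_const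
  have : L Sᶜ = 0 := (prob_compl_eq_zero_iff hSm).2 h1
  have h2 : ∀ᵐ p ∂L, p ∈ S := this
  filter_upwards [h2] with p hp
  exact ⟨hp.1, hp.2.2⟩

section W
variable {q : ℕ} {X : Type*} [Fintype X]

noncomputable def Wp (p : SpinStruct q) (E : (ℕ → Fin q) → X → ℝ) : ℝ :=
  ∑' α, p.1 α * ∑ σ, Real.exp (- E (p.2 α) σ)

noncomputable def Lw (L : Measure (SpinStruct q)) (E : (ℕ → Fin q) → X → ℝ) : ℝ := ∫ p, Real.log (Wp p E) ∂L

def IsEn (E : (ℕ → Fin q) → X → ℝ) (C : ℝ) : Prop :=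
  (∀ σ, Measurable fun τ => E τ σ) ∧ ∀ τ σ, 0 ≤ E τ σ ∧ E τ σ ≤ C

lemma av_summ {p : SpinStruct q} (hp : Good p) {g : ℕ → ℝ} {C : ℝ} (h : ∀ α, |g α| ≤ C) :
    Summable (fun α => p.1 α * g α) := by
  refine Summable.of_norm_bounded (g := fun α => p.1 α * C) (hp.2.summable.mul_right C) fun α => ?_
  rw [Real.norm_eq_abs, abs_mul, abs_of_nonneg (hp.1 α)]
  exact mul_le_mul_of_nonneg_left (h α) (hp.1 α)

lemma av_const {p : SpinStruct q} (hp : Good p) (C : ℝ) : ∑' α, p.1 α * C = C := by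
  rw [tsum_mul_right, hp.2.tsum_eq, one_mul]

lemma av_mono {p : SpinStruct q} (hp : Good p) {f g : ℕ → ℝ} {C D : ℝ} (hf : ∀ α, |f α| ≤ C) (hg : ∀ α, |g α| ≤ D)
    (h : ∀ α, f α ≤ g α) : ∑' α, p.1 α * f α ≤ ∑' α, p.1 α * g α :=
  Summable.tsum_le_tsum (fun α => mul_le_mul_of_nonneg_left (h α) (hp.1 α)) (av_summ hp hf) (av_summ hp hg)

lemma En_bd {E : (ℕ → Fin q) → X → ℝ} {C : ℝ} (h : IsEn E C) (τ : ℕ → Fin q) :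
    Fintype.card X * Real.exp (-C) ≤ ∑ σ, Real.exp (- E τ σ) ∧ ∑ σ, Real.exp (- E τ σ) ≤ Fintype.card X := by
  constructor
  · have := Finset.sum_le_sum fun σ (_ : σ ∈ (Finset.univ : Finset X)) => Real.exp_le_exp.2 (neg_le_neg (h.2 τ σ).2)
    simpa using this
  · have := Finset.sum_le_sum fun σ (_ : σ ∈ (Finset.univ : Finset X)) => Real.exp_le_one_iff.2 (neg_nonpos.2 (h.2 τ σ).1)
    simpa using this

lemma En_abs {E : (ℕ → Fin q) → X → ℝ} {C : ℝ} (h : IsEn E C) (τ : ℕ → Fin q) :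
    |∑ σ, Real.exp (- E τ σ)| ≤ Fintype.card X := by
  rw [abs_of_nonneg (Finset.sum_nonneg fun _ _ => (Real.exp_pos _).le)]; exact (En_bd h τ).2

lemma Wp_bd {p : SpinStruct q} (hp : Good p) {E : (ℕ → Fin q) → X → ℝ} {C : ℝ} (h : IsEn E C) :
    Fintype.card X * Real.exp (-C) ≤ Wp p E ∧ Wp p E ≤ Fintype.card X := by
  have hA : ∀ α, |∑ σ, Real.exp (- E (p.2 α) σ)| ≤ Fintype.card X := fun α => En_abs h _
  constructor
  · conv_lhs => rw [← av_const hp (Fintype.card X * Real.exp (-C))]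
    exact av_mono hp (fun _ => le_refl _) hA fun α => (En_bd h _).1
  · conv_rhs => rw [← av_const hp (Fintype.card X : ℝ)]
    exact av_mono hp hA (fun _ => le_refl _) fun α => (En_bd h _).2

lemma Wp_pos [Nonempty X] {p : SpinStruct q} (hp : Good p) {E : (ℕ → Fin q) → X → ℝ} {C : ℝ} (h : IsEn E C) :
    0 < Wp p E := by
  have : (0:ℝ) < Fintype.card X := by exact_mod_cast Fintype.card_pos
  exact lt_of_lt_of_le (by positivity) (Wp_bd hp h).1

lemma Wp_log [Nonempty X] {p : SpinStruct q} (hp : Good p) {E : (ℕ → Fin q) → X → ℝ} {C : ℝ} (h : IsEn E C) :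
    |Real.log (Wp p E)| ≤ Real.log (Fintype.card X) + |C| := by
  have h0 : (0:ℝ) < Fintype.card X := by exact_mod_cast Fintype.card_pos
  have h1 := Real.log_le_log (by positivity) (Wp_bd hp h).1
  have h2 := Real.log_le_log (Wp_pos hp h) (Wp_bd hp h).2
  rw [Real.log_mul h0.ne' (Real.exp_pos _).ne', Real.log_exp] at h1
  have h3 : 0 ≤ Real.log (Fintype.card X) := Real.log_natCast_nonneg _
  rw [abs_le]
  constructor <;> linarith [le_abs_self C, abs_nonneg C]

lemma Wp_aesm {L : Measure (SpinStruct q)} (hL : IsRSS q L) {E : (ℕ → Fin q) → X → ℝ} {C : ℝ} (h : IsEn E C) :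
    AEStronglyMeasurable (fun p => Real.log (Wp p E)) L := by
  have hm : ∀ n, Measurable (fun p : SpinStruct q => p.1 n) := fun n => (measurable_pi_apply n).comp measurable_fst
  have hm2 : ∀ n, Measurable (fun p : SpinStruct q => p.2 n) := fun n => (measurable_pi_apply n).comp measurable_snd
  have h1 : Measurable (fun p : SpinStruct q => (∑' α, ENNReal.ofReal (p.1 α * ∑ σ, Real.exp (- E (p.2 α) σ))).toReal) := by
    refine Measurable.ennreal_toReal (Measurable.ennreal_tsum fun α => Measurable.ennreal_ofReal ?_)
    refine (hm α).mul (Finset.measurable_sum _ fun σ _ => Real.measurable_exp.comp (Measurable.neg ?_))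
    exact (h.1 σ).comp (hm2 α)
  refine (Real.measurable_log.comp h1).aestronglyMeasurable.congr ?_
  filter_upwards [good_ae hL] with p hp
  have h0 : ∀ α, 0 ≤ p.1 α * ∑ σ, Real.exp (- E (p.2 α) σ) := fun α =>
    mul_nonneg (hp.1 α) (Finset.sum_nonneg fun _ _ => (Real.exp_pos _).le)
  have hs : Summable fun α => p.1 α * ∑ σ, Real.exp (- E (p.2 α) σ) := av_summ hp fun α => En_abs h _
  simp only [Function.comp]
  rw [← ENNReal.ofReal_tsum_of_nonneg h0 hs, ENNReal.toReal_ofReal (tsum_nonneg h0)]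
  rfl

lemma Wp_int [Nonempty X] {L : Measure (SpinStruct q)} (hL : IsRSS q L) {E : (ℕ → Fin q) → X → ℝ} {C : ℝ} (h : IsEn E C) :
    Integrable (fun p => Real.log (Wp p E)) L := by
  haveI := hL.1
  refine Integrable.of_bound (Wp_aesm hL h) (Real.log (Fintype.card X) + |C|) ?_
  filter_upwards [good_ae hL] with p hp
  exact Wp_log hp h

lemma Lw_abs [Nonempty X] {L : Measure (SpinStruct q)} (hL : IsRSS q L) {E : (ℕ → Fin q) → X → ℝ} {C : ℝ} (h : IsEn E C) :
    |Lw L E| ≤ Real.log (Fintype.card X) + |C| := by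
  haveI := hL.1
  have := norm_integral_le_of_norm_le_const (μ := L) (f := fun p => Real.log (Wp p E)) (C := Real.log (Fintype.card X) + |C|) (by
    filter_upwards [good_ae hL] with p hp
    exact Wp_log hp h)
  simpa [Lw] using this

lemma Lw_mono [Nonempty X] {L : Measure (SpinStruct q)} (hL : IsRSS q L) {E F : (ℕ → Fin q) → X → ℝ} {C D : ℝ}
    (hE : IsEn E C) (hF : IsEn F D) (h : ∀ τ σ, E τ σ ≤ F τ σ) : Lw L F ≤ Lw L E := by
  refine integral_mono_ae (Wp_int hL hF) (Wp_int hL hE) ?_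
  filter_upwards [good_ae hL] with p hp
  refine Real.log_le_log (Wp_pos hp hF) ?_
  refine av_mono hp (fun α => En_abs hF _) (fun α => En_abs hE _) fun α => ?_
  exact Finset.sum_le_sum fun σ _ => Real.exp_le_exp.2 (neg_le_neg (h _ _))

/-- factorisation -/
lemma Lw_factor {Y : Type*} [Fintype Y] [Nonempty Y] [Nonempty X] {L : Measure (SpinStruct q)} (hL : IsRSS q L)
    {E : (ℕ → Fin q) → X → ℝ} {C : ℝ} (hE : IsEn E C) (h : Y → ℝ) {Z : Type*} [Fintype Z] (φ : Z ≃ Y × X) (F : (ℕ → Fin q) → Z → ℝ)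
    (hF : ∀ τ z, F τ z = h (φ z).1 + E τ (φ z).2) : Lw L F = lz h + Lw L E := by
  haveI := hL.1
  have : Lw L F = ∫ p, (lz h + Real.log (Wp p E)) ∂L := by
    refine integral_congr_ae ?_
    filter_upwards [good_ae hL] with p hp
    have : Wp p F = (∑ y, Real.exp (- h y)) * Wp p E := by
      unfold Wp
      rw [← tsum_mul_left]
      congr 1; funext α
      rw [mul_left_comm]
      congr 1
      rw [Finset.sum_mul_sum, ← Fintype.sum_prod_type']
      refine Fintype.sum_equiv φ _ _ fun z => ?_
      rw [hF, neg_add, Real.exp_add]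
    rw [this, Real.log_mul (lz_pos h).ne' (Wp_pos hp hE).ne']
    rfl
  rw [this, integral_add (integrable_const _) (Wp_int hL hE)]
  simp [Lw]

end W

lemma exists_perm (n : ℕ) (f : ℕ → ℕ) (hf : Set.InjOn f {l | l < n}) :
    ∃ π : Equiv.Perm ℕ, {x | π x ≠ x}.Finite ∧ ∀ l < n, π l = f l := by
  induction n with
  | zero => exact ⟨1, by simp, by simp⟩
  | succ n ih =>
    obtain ⟨π, h1, h2⟩ := ih (hf.mono fun l (hl : l < n) => Nat.lt_succ_of_lt hl)
    refine ⟨Equiv.swap (π n) (f n) * π, ?_, ?_⟩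
    · refine (h1.union ({π n, f n} : Set ℕ).toFinite).subset fun x hx => ?_
      by_contra hc
      simp only [Set.mem_union, Set.mem_setOf_eq, not_or, Set.mem_insert_iff, Set.mem_singleton_iff, not_not] at hc
      apply hx
      simp only [Equiv.Perm.mul_apply, hc.1]
      exact Equiv.swap_apply_of_ne_of_ne hc.2.1 hc.2.2
    · intro l hl
      rcases Nat.lt_succ_iff_lt_or_eq.1 hl with h | rfl
      · rw [Equiv.Perm.mul_apply, Equiv.swap_apply_of_ne_of_ne, h2 l h]
        · intro h'; have := π.injective h'; omega
        · intro h'; rw [h2 l h] at h'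
          have := hf (show l < n+1 from hl) (show n < n + 1 by omega) h'; omega
      · simp

section W
variable {q : ℕ} {X : Type*} [Fintype X]

lemma Lw_exch {L : Measure (SpinStruct q)} (hL : IsRSS q L) {E E' : (ℕ → Fin q) → X → ℝ} {C : ℝ} (hE : IsEn E C)
    (n : ℕ) (hn : ∀ τ τ' : ℕ → Fin q, (∀ l < n, τ l = τ' l) → ∀ σ, E τ σ = E τ' σ)
    (f : ℕ → ℕ) (hf : Set.InjOn f {l | l < n}) (h : ∀ τ σ, E' τ σ = E (fun l => τ (f l)) σ) : Lw L E' = Lw L E := by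
  obtain ⟨π, h1, h2⟩ := exists_perm n f hf
  have hm := hL.2.2 π h1
  have hE' : E' = fun τ => E (fun l => τ (π l)) := by
    funext τ σ
    rw [h]
    exact hn _ _ (fun l hl => by rw [h2 l hl]) σ
  have hmeas : Measurable (fun p : SpinStruct q => ((p.1, fun α k => p.2 α (π k)) : SpinStruct q)) := by
    refine measurable_fst.prodMk (measurable_pi_lambda _ fun α => measurable_pi_lambda _ fun k => ?_)
    exact (measurable_pi_apply (π k)).comp ((measurable_pi_apply α).comp measurable_snd)
  conv_rhs => rw [Lw, ← hm]
  rw [integral_map hmeas.aemeasurable (by rw [hm]; exact Wp_aesm hL hE), hE']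
  rfl

/-- exchange of the Poisson sum and the integral -/
lemma int_Po {L : Measure (SpinStruct q)} (hL : IsRSS q L) {lam : ℝ} (hl : 0 ≤ lam) (F : ℕ → SpinStruct q → ℝ)
    (hi : ∀ k, Integrable (F k) L) {C : ℝ} (hC : ∀ k, ∀ᵐ p ∂L, |F k p| ≤ C * (1 + k)) :
    ∫ p, ∑' k, poissonPMF lam k * F k p ∂L = Po lam (fun k => ∫ p, F k p ∂L) := by
  haveI := hL.1
  rw [← integral_tsum_of_summable_integral_norm]
  · unfold Po
    congr 1; funext k
    rw [integral_const_mul]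
  · exact fun k => (hi k).const_mul _
  · refine Summable.of_nonneg_of_le (fun k => integral_nonneg fun _ => norm_nonneg _) ?_
      (pois_summ hl (((LB.const 1).add LB.id).mul C))
    intro k
    have : ∫ p, ‖poissonPMF lam k * F k p‖ ∂L ≤ ∫ p, poissonPMF lam k * (C * (1 + k)) ∂L := by
      refine integral_mono_ae ((hi k).const_mul _).norm (integrable_const _) ?_
      filter_upwards [hC k] with p hp
      rw [Real.norm_eq_abs, abs_mul, abs_of_nonneg (pois_nonneg hl k)]
      exact mul_le_mul_of_nonneg_left hp (pois_nonneg hl k)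
    simpa using this

end W


lemma psd_pow {V : Type*} [Fintype V] (K : Matrix V V ℝ) (hs : ∀ v w, K v w = K w v)
    (hK : ∀ x : V → ℝ, 0 ≤ ∑ v, ∑ w, x v * x w * K v w) (n : ℕ) (u : V → ℝ) :
    0 ≤ ∑ v, ∑ w, u v * u w * K v w ^ (n+1) := by
  classical
  have key : ∀ A : Matrix V V ℝ, ∀ x : V → ℝ, star x ⬝ᵥ A.mulVec x = ∑ v, ∑ w, x v * x w * A v w := by
    intro A x
    simp only [dotProduct, Matrix.mulVec, Finset.mul_sum, Pi.star_apply, star_trivial]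
    refine Finset.sum_congr rfl fun v _ => Finset.sum_congr rfl fun w _ => by ring
  have h0 : K.PosSemidef := by
    refine Matrix.PosSemidef.of_dotProduct_mulVec_nonneg ?_ fun x => ?_
    · ext v w; simp [Matrix.conjTranspose_apply, hs w v]
    · rw [key]; exact hK x
  have h1 : ∀ n : ℕ, (Matrix.of fun v w => K v w ^ (n+1) : Matrix V V ℝ).PosSemidef := by
    intro n
    induction n with
    | zero =>
      have e : (Matrix.of fun v w => K v w ^ (0+1) : Matrix V V ℝ) = K := by ext v w; simp
      rw [e]; exact h0
    | succ n ih =>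
      have := ih.hadamard h0
      have e : (Matrix.of fun v w => K v w ^ (n+1+1) : Matrix V V ℝ)
          = Matrix.hadamard (Matrix.of fun v w => K v w ^ (n+1)) K := by ext v w; simp [pow_succ]
      rw [e]; exact this
  have := (h1 n).dotProduct_mulVec_nonneg u
  rw [key] at this
  exact this

lemma psd_log {V : Type*} [Fintype V] (K : Matrix V V ℝ) (hs : ∀ v w, K v w = K w v)
    (hK : ∀ x : V → ℝ, 0 ≤ ∑ v, ∑ w, x v * x w * K v w) (h1 : ∀ v w, |K v w| ≤ 1) {a : ℝ} (ha : 0 ≤ a) (ha1 : a < 1)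
    (u : V → ℝ) : ∑ v, ∑ w, u v * u w * Real.log (1 - a * K v w) ≤ 0 := by
  have hsum : ∀ v w, HasSum (fun n : ℕ => u v * u w * ((a * K v w) ^ (n+1) / (n+1))) (u v * u w * -Real.log (1 - a * K v w)) := by
    intro v w
    refine (Real.hasSum_pow_div_log_of_abs_lt_one ?_).mul_left _
    rw [abs_mul, abs_of_nonneg ha]
    nlinarith [h1 v w, abs_nonneg (K v w)]
  have h2 := hasSum_sum (s := Finset.univ) fun v _ => hasSum_sum (s := Finset.univ) fun w _ => hsum v w
  have h3 := h2.nonneg fun n => by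
    have e : ∑ v, ∑ w, u v * u w * ((a * K v w) ^ (n+1) / (n+1))
        = a ^ (n+1) / (n+1) * ∑ v, ∑ w, u v * u w * K v w ^ (n+1) := by
      simp only [Finset.mul_sum]
      refine Finset.sum_congr rfl fun v _ => Finset.sum_congr rfl fun w _ => ?_
      rw [mul_pow]; ring
    rw [e]
    exact mul_nonneg (by positivity) (psd_pow K hs hK n u)
  simp only [mul_neg, Finset.sum_neg_distrib] at h3
  linarith

section W
variable {q : ℕ} {X : Type*} [Fintype X]

def dl (a b : Fin q) : ℝ := if a = b then 1 else 0
lemma dl_nonneg (a b : Fin q) : 0 ≤ dl a b := by unfold dl; split_ifs <;> norm_num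
lemma dl_le (a b : Fin q) : dl a b ≤ 1 := by unfold dl; split_ifs <;> norm_num
lemma dl_comm (a b : Fin q) : dl a b = dl b a := by unfold dl; simp only [eq_comm]
lemma dl_gram (a b : Fin q) : dl a b = ∑ c, dl a c * dl b c := by
  unfold dl
  by_cases h : a = b
  · subst h; simp
  · simp [h]
lemma dl_meas {Ω : Type*} [MeasurableSpace Ω] {f g : Ω → Fin q} (hf : Measurable f) (hg : Measurable g) :
    Measurable fun x => dl (f x) (g x) :=
  Measurable.ite (measurableSet_eq_fun hf hg) measurable_const measurable_const

lemma exp_dl (β : ℝ) (a b : Fin q) : Real.exp (-(β * dl a b)) = 1 - (1 - Real.exp (-β)) * dl a b := by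
  unfold dl; split_ifs <;> simp

variable {V : Type*} [Fintype V]

lemma pt_key [Nonempty X] {p : SpinStruct q} (hp : Good p) {E : (ℕ → Fin q) → X → ℝ} {C : ℝ} (hE : IsEn E C)
    (s : V → (ℕ → Fin q) → X → Fin q) {β : ℝ} (hβ : 0 ≤ β) (u : V → ℝ) (hu : ∑ v, u v = 0) :
    ∑ v, ∑ w, u v * u w * Real.log (Wp p (fun τ σ => E τ σ + β * dl (s v τ σ) (s w τ σ))) ≤ 0 := by
  set a := 1 - Real.exp (-β) with hadef
  have ha : 0 ≤ a := by rw [hadef]; linarith [Real.exp_le_one_iff.2 (neg_nonpos.2 hβ)]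
  have ha1 : a < 1 := by rw [hadef]; linarith [Real.exp_pos (-β)]
  have hW := Wp_pos hp hE
  have sumb : ∀ g : ℕ → X → ℝ, (∀ α σ, 0 ≤ g α σ ∧ g α σ ≤ 1) → ∀ α,
      |∑ σ, Real.exp (-E (p.2 α) σ) * g α σ| ≤ Fintype.card X := by
    intro g hg α
    rw [abs_of_nonneg (Finset.sum_nonneg fun σ _ => mul_nonneg (Real.exp_pos _).le (hg α σ).1)]
    refine (Finset.sum_le_sum fun σ _ => mul_le_of_le_one_right (Real.exp_pos _).le (hg α σ).2).trans (En_bd hE _).2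
  let Q : V → V → ℝ := fun v w => ∑' α, p.1 α * ∑ σ, Real.exp (-E (p.2 α) σ) * dl (s v (p.2 α) σ) (s w (p.2 α) σ)
  have Qs : ∀ v w, Summable fun α => p.1 α * ∑ σ, Real.exp (-E (p.2 α) σ) * dl (s v (p.2 α) σ) (s w (p.2 α) σ) :=
    fun v w => av_summ hp (sumb _ fun α σ => ⟨dl_nonneg _ _, dl_le _ _⟩)
  have WsE : Summable fun α => p.1 α * ∑ σ, Real.exp (-E (p.2 α) σ) := av_summ hp fun α => En_abs hE _
  have Q0 : ∀ v w, 0 ≤ Q v w := fun v w => tsum_nonneg fun α => mul_nonneg (hp.1 α)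
    (Finset.sum_nonneg fun σ _ => mul_nonneg (Real.exp_pos _).le (dl_nonneg _ _))
  have Q1 : ∀ v w, Q v w ≤ Wp p E := fun v w => Summable.tsum_le_tsum (fun α => mul_le_mul_of_nonneg_left
    (Finset.sum_le_sum fun σ _ => mul_le_of_le_one_right (Real.exp_pos _).le (dl_le _ _)) (hp.1 α)) (Qs v w) WsE
  let K : Matrix V V ℝ := fun v w => Q v w / Wp p E
  have hWQ : ∀ v w, Wp p (fun τ σ => E τ σ + β * dl (s v τ σ) (s w τ σ)) = Wp p E * (1 - a * K v w) := by
    intro v w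
    have : Wp p E * (1 - a * K v w) = Wp p E - a * Q v w := by
      simp only [K]; field_simp
    rw [this]
    simp only [Q, Wp]
    rw [← tsum_mul_left, ← Summable.tsum_sub WsE ((Qs v w).mul_left a)]
    congr 1; funext α
    rw [mul_left_comm, ← mul_sub]
    congr 1
    rw [Finset.mul_sum, ← Finset.sum_sub_distrib]
    refine Finset.sum_congr rfl fun σ _ => ?_
    rw [neg_add, Real.exp_add, exp_dl]; ring
  have hK1 : ∀ v w, |K v w| ≤ 1 := by
    intro v w
    rw [abs_of_nonneg (div_nonneg (Q0 v w) hW.le)]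
    exact (div_le_one hW).2 (Q1 v w)
  have hmain := psd_log K (fun v w => by
      simp only [K, Q]; simp only [dl_comm (s v _ _)]) (fun x => by
      have e : ∑ v, ∑ w, x v * x w * K v w =
          (∑' α, p.1 α * ∑ σ, Real.exp (-E (p.2 α) σ) * ∑ c, (∑ v, x v * dl (s v (p.2 α) σ) c) ^ 2) / Wp p E := by
        have e1 : ∀ α, p.1 α * ∑ σ, Real.exp (-E (p.2 α) σ) * ∑ c, (∑ v, x v * dl (s v (p.2 α) σ) c) ^ 2
            = ∑ v, ∑ w, x v * x w * (p.1 α * ∑ σ, Real.exp (-E (p.2 α) σ) * dl (s v (p.2 α) σ) (s w (p.2 α) σ)) := by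
          intro α
          have e2 : ∀ σ, ∑ c, (∑ v, x v * dl (s v (p.2 α) σ) c) ^ 2
              = ∑ v, ∑ w, x v * x w * dl (s v (p.2 α) σ) (s w (p.2 α) σ) := by
            intro σ
            simp only [pow_two, Finset.sum_mul_sum]
            rw [Finset.sum_comm]
            refine Finset.sum_congr rfl fun v _ => ?_
            rw [Finset.sum_comm]
            refine Finset.sum_congr rfl fun w _ => ?_
            rw [dl_gram (s v (p.2 α) σ), Finset.mul_sum]
            refine Finset.sum_congr rfl fun c _ => by ring
          simp only [e2, Finset.mul_sum]
          rw [Finset.sum_comm]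
          refine Finset.sum_congr rfl fun v _ => ?_
          rw [Finset.sum_comm]
          refine Finset.sum_congr rfl fun w _ => Finset.sum_congr rfl fun σ _ => by ring
        simp only [e1]
        have e3 := HasSum.tsum_eq (hasSum_sum (s := Finset.univ) fun v _ => hasSum_sum (s := Finset.univ) fun w _ =>
          ((Qs v w).hasSum.mul_left (x v * x w)))
        rw [e3, Finset.sum_div]
        refine Finset.sum_congr rfl fun v _ => ?_
        rw [Finset.sum_div]
        refine Finset.sum_congr rfl fun w _ => ?_
        simp only [K, Q]; ring
      rw [e]
      refine div_nonneg (tsum_nonneg fun α => mul_nonneg (hp.1 α) (Finset.sum_nonneg fun σ _ =>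
        mul_nonneg (Real.exp_pos _).le (Finset.sum_nonneg fun c _ => sq_nonneg _))) hW.le) hK1 ha ha1 u
  have hpos : ∀ v w, 0 < 1 - a * K v w := by
    intro v w
    nlinarith [hK1 v w, abs_le.1 (hK1 v w), abs_nonneg (K v w)]
  have : ∑ v, ∑ w, u v * u w * Real.log (Wp p (fun τ σ => E τ σ + β * dl (s v τ σ) (s w τ σ)))
      = (∑ v, u v) * (∑ w, u w) * Real.log (Wp p E) + ∑ v, ∑ w, u v * u w * Real.log (1 - a * K v w) := by
    rw [Finset.sum_mul_sum, Finset.sum_mul, ← Finset.sum_add_distrib]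
    refine Finset.sum_congr rfl fun v _ => ?_
    rw [Finset.sum_mul, ← Finset.sum_add_distrib]
    refine Finset.sum_congr rfl fun w _ => ?_
    rw [hWQ, Real.log_mul hW.ne' (hpos v w).ne']; ring
  rw [this, hu]; linarith

lemma IsEn_add {E : (ℕ → Fin q) → X → ℝ} {C : ℝ} (hE : IsEn E C) {s t : (ℕ → Fin q) → X → Fin q}
    (hs : ∀ σ, Measurable fun τ => s τ σ) (ht : ∀ σ, Measurable fun τ => t τ σ) {β : ℝ} (hβ : 0 ≤ β) :
    IsEn (fun τ σ => E τ σ + β * dl (s τ σ) (t τ σ)) (C + β) := by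
  refine ⟨fun σ => (hE.1 σ).add ((dl_meas (hs σ) (ht σ)).const_mul β), fun τ σ => ?_⟩
  have := hE.2 τ σ
  constructor <;> nlinarith [dl_nonneg (s τ σ) (t τ σ), dl_le (s τ σ) (t τ σ)]

lemma int_key [Nonempty X] {L : Measure (SpinStruct q)} (hL : IsRSS q L) {E : (ℕ → Fin q) → X → ℝ} {C : ℝ} (hE : IsEn E C)
    (s : V → (ℕ → Fin q) → X → Fin q) (hs : ∀ v σ, Measurable fun τ => s v τ σ)
    {β : ℝ} (hβ : 0 ≤ β) (u : V → ℝ) (hu : ∑ v, u v = 0) :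
    ∑ v, ∑ w, u v * u w * Lw L (fun τ σ => E τ σ + β * dl (s v τ σ) (s w τ σ)) ≤ 0 := by
  have hi : ∀ v w, Integrable (fun p => u v * u w * Real.log (Wp p (fun τ σ => E τ σ + β * dl (s v τ σ) (s w τ σ)))) L :=
    fun v w => (Wp_int hL (IsEn_add hE (hs v) (hs w) hβ)).const_mul _
  have : ∑ v, ∑ w, u v * u w * Lw L (fun τ σ => E τ σ + β * dl (s v τ σ) (s w τ σ))
      = ∫ p, ∑ v, ∑ w, u v * u w * Real.log (Wp p (fun τ σ => E τ σ + β * dl (s v τ σ) (s w τ σ))) ∂L := by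
    rw [integral_finsetSum _ fun v _ => integrable_finsetSum _ fun w _ => hi v w]
    refine Finset.sum_congr rfl fun v _ => ?_
    rw [integral_finsetSum _ fun w _ => hi v w]
    refine Finset.sum_congr rfl fun w _ => ?_
    rw [integral_const_mul]; rfl
  rw [this]
  refine integral_nonpos_of_ae ?_
  filter_upwards [good_ae hL] with p hp
  exact pt_key hp hE s hβ u hu
end W


section K
variable {q : ℕ}

def Dep {X : Type*} (E : (ℕ → Fin q) → X → ℝ) (m : ℕ) : Prop :=
  ∀ τ τ' : ℕ → Fin q, (∀ l < m, τ l = τ' l) → ∀ σ, E τ σ = E τ' σ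

lemma Lw_const {X : Type*} [Fintype X] [Nonempty X] {L : Measure (SpinStruct q)} (hL : IsRSS q L)
    {E : (ℕ → Fin q) → X → ℝ} {C : ℝ} (hE : IsEn E C) (b : ℝ) : Lw L (fun τ σ => E τ σ + b) = Lw L E - b := by
  rw [Lw_factor hL hE (fun _ : Unit => b) (Equiv.punitProd X).symm _ (fun τ z => by simp [add_comm]), lz_const]
  simp; ring

lemma key_step {N : ℕ} (hN : 1 ≤ N) [NeZero q] {L : Measure (SpinStruct q)} (hL : IsRSS q L)
    {E : (ℕ → Fin q) → (Fin N → Fin q) → ℝ} {C : ℝ} (hE : IsEn E C) (m : ℕ) (hm : Dep E m) {β : ℝ} (hβ : 0 ≤ β) :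
    (Finset.expect Finset.univ fun x : Fin N × Fin N => Lw L (fun τ σ => E τ σ + β * dl (σ x.1) (σ x.2)))
      + Lw L (fun τ σ => E τ σ + β * dl (τ m) (τ (m+1)))
      ≤ 2 * Finset.expect Finset.univ fun i : Fin N => Lw L (fun τ σ => E τ σ + β * dl (τ m) (σ i)) := by
  have hN0 : (0:ℝ) < N := by positivity
  set A := Finset.expect Finset.univ fun x : Fin N × Fin N => Lw L (fun τ σ => E τ σ + β * dl (σ x.1) (σ x.2)) with hA
  set B := Lw L (fun τ σ => E τ σ + β * dl (τ m) (τ (m+1))) with hB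
  set D := Finset.expect Finset.univ fun i : Fin N => Lw L (fun τ σ => E τ σ + β * dl (τ m) (σ i)) with hD
  have main : ∀ R : ℕ, 1 ≤ R → A - 2 * D + B - β / R ≤ 0 := by
    intro R hR
    have hR0 : (0:ℝ) < R := by positivity
    let s : Fin N ⊕ Fin R → (ℕ → Fin q) → (Fin N → Fin q) → Fin q := fun v τ σ =>
      Sum.elim (fun i => σ i) (fun r => τ (m + r.1)) v
    have hs : ∀ v σ, Measurable fun τ => s v τ σ := by
      rintro (i | r) σ
      · exact measurable_const
      · exact measurable_pi_apply _
    let u : Fin N ⊕ Fin R → ℝ := Sum.elim (fun _ => 1 / N) (fun _ => - (1 / R))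
    have hu : ∑ v, u v = 0 := by
      rw [Fintype.sum_sum_type]; simp [u]; field_simp; simp
    have h := int_key hL hE s hs hβ u hu
    simp only [Fintype.sum_sum_type, u, Sum.elim_inl, Sum.elim_inr, s] at h
    have hC : ∀ (i : Fin N) (r : Fin R), Lw L (fun τ σ => E τ σ + β * dl (τ (m + r.1)) (σ i))
        = Lw L (fun τ σ => E τ σ + β * dl (τ m) (σ i)) := by
      intro i r
      refine Lw_exch hL (IsEn_add hE (s := fun τ _ => τ m) (t := fun _ σ => σ i) (fun σ => measurable_pi_apply m) (fun σ => measurable_const) hβ) (m+1) ?_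
        (fun l => if l = m then m + r.1 else l) ?_ ?_
      · intro τ τ' ht σ
        beta_reduce
        rw [hm τ τ' (fun l hl => ht l (by omega)), ht m (by omega)]
      · intro a ha b hb hab
        simp only [Set.mem_ofPred_eq] at ha hb
        dsimp only at hab
        split_ifs at hab <;> omega
      · intro τ σ
        simp only [if_true]
        rw [hm τ (fun l => τ (if l = m then m + r.1 else l)) fun l hl => by rw [if_neg (by omega)]]
    have hBr : ∀ r r' : Fin R, B - β * (if r = r' then 1 else 0)
        ≤ Lw L (fun τ σ => E τ σ + β * dl (τ (m + r.1)) (τ (m + r'.1))) := by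
      intro r r'
      have hBE := IsEn_add hE (s := fun τ σ => τ m) (t := fun τ σ => τ (m+1)) (fun σ => measurable_pi_apply m) (fun σ => measurable_pi_apply (m+1)) hβ
      by_cases hr : r = r'
      · subst hr
        have : (fun (τ : ℕ → Fin q) σ => E τ σ + β * dl (τ (m + r.1)) (τ (m + r.1))) = fun τ σ => E τ σ + β := by
          funext τ σ; simp [dl]
        rw [this, Lw_const hL hE, if_pos rfl, mul_one]
        have := Lw_mono hL hE hBE (fun τ σ => by nlinarith [dl_nonneg (τ m) (τ (m+1))])
        linarith
      · have hr' : r.1 ≠ r'.1 := fun h => hr (Fin.ext h)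
        rw [if_neg hr, mul_zero, sub_zero]
        refine le_of_eq (Eq.symm ?_)
        refine Lw_exch hL hBE (m+2) ?_
          (fun l => if l = m then m + r.1 else if l = m + 1 then m + r'.1 else l) ?_ ?_
        · intro τ τ' ht σ
          beta_reduce
          rw [hm τ τ' (fun l hl => ht l (by omega)), ht m (by omega), ht (m+1) (by omega)]
        · intro a ha b hb hab
          simp only [Set.mem_ofPred_eq] at ha hb
          dsimp only at hab
          split_ifs at hab <;> omega
        · intro τ σ
          have e1 : ¬ (m + 1 = m) := by omega
          simp only [if_true, e1, if_false]
          rw [hm τ (fun l => τ (if l = m then m + r.1 else if l = m + 1 then m + r'.1 else l)) fun l hl => by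
            rw [if_neg (by omega), if_neg (by omega)]]
    have hC' : ∀ (i : Fin N) (r : Fin R), Lw L (fun τ σ => E τ σ + β * dl (σ i) (τ (m + r.1)))
        = Lw L (fun τ σ => E τ σ + β * dl (τ m) (σ i)) := by
      intro i r
      rw [← hC i r]; simp only [dl_comm]
    have hC'' : ∀ (i : Fin N) (r : Fin R), Lw L (fun τ σ => E τ σ + β * dl (τ (m + r.1)) (σ i))
        = Lw L (fun τ σ => E τ σ + β * dl (τ m) (σ i)) := hC
    simp only [hC', hC'', Finset.sum_add_distrib] at h
    have s1 : ∑ i : Fin N, ∑ j : Fin N, (1:ℝ) / N * (1 / N) * Lw L (fun τ σ => E τ σ + β * dl (σ i) (σ j)) = A := by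
      rw [hA, Fintype.expect_eq_sum_div_card, Fintype.sum_prod_type]
      simp only [← Finset.mul_sum, Fintype.card_prod, Fintype.card_fin]
      push_cast; field_simp
    have s2 : ∑ i : Fin N, ∑ j : Fin R, (1:ℝ) / N * -(1 / R) * Lw L (fun τ σ => E τ σ + β * dl (τ m) (σ i)) = - D := by
      rw [hD, Fintype.expect_eq_sum_div_card]
      simp only [Finset.sum_const, Finset.card_univ, Fintype.card_fin, nsmul_eq_mul, ← Finset.mul_sum]
      field_simp
    have s3 : ∑ j : Fin R, ∑ i : Fin N, -(1 / (R:ℝ)) * (1 / N) * Lw L (fun τ σ => E τ σ + β * dl (τ m) (σ i)) = - D := by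
      rw [hD, Fintype.expect_eq_sum_div_card]
      simp only [Finset.sum_const, Finset.card_univ, Fintype.card_fin, nsmul_eq_mul, ← Finset.mul_sum]
      field_simp
    have s4 : B - β / R ≤ ∑ r : Fin R, ∑ r' : Fin R, -(1 / (R:ℝ)) * -(1 / R) * Lw L (fun τ σ => E τ σ + β * dl (τ (m + r.1)) (τ (m + r'.1))) := by
      have : B - β / R = ∑ r : Fin R, ∑ r' : Fin R, -(1 / (R:ℝ)) * -(1 / R) * (B - β * (if r = r' then 1 else 0)) := by
        simp only [← Finset.mul_sum, Finset.sum_sub_distrib, Finset.sum_ite_eq, Finset.mem_univ, if_true,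
          Finset.sum_const, Finset.card_univ, Fintype.card_fin, nsmul_eq_mul]
        field_simp
      rw [this]
      refine Finset.sum_le_sum fun r _ => Finset.sum_le_sum fun r' _ => mul_le_mul_of_nonneg_left (hBr r r') ?_
      rw [neg_mul_neg]; positivity
    rw [s1, s2, s3] at h
    linarith
  have lim : Tendsto (fun R : ℕ => A - 2 * D + B - β / R) atTop (nhds (A - 2 * D + B - 0)) :=
    tendsto_const_nhds.sub (tendsto_const_div_atTop_nhds_zero_nat β)
  have := le_of_tendsto lim (by filter_upwards [eventually_ge_atTop 1] with R hR using main R hR)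
  linarith

end K


lemma expect_snoc {ι : Type*} [Fintype ι] {k : ℕ} (f : (Fin (k+1) → ι) → ℝ) :
    Finset.expect Finset.univ f
      = Finset.expect Finset.univ fun e : Fin k → ι => Finset.expect Finset.univ fun x : ι => f (Fin.snoc e x) := by
  have hs : ∑ e, f e = ∑ e : Fin k → ι, ∑ x : ι, f (Fin.snoc e x) := by
    rw [Finset.sum_comm, ← Fintype.sum_prod_type' (fun (x : ι) (e : Fin k → ι) => f (Fin.snoc e x : Fin (k+1) → ι))]
    exact (Fintype.sum_equiv (Fin.snocEquiv (fun _ : Fin (k+1) => ι)) _ _ (fun x => rfl)).symm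
  simp only [Fintype.expect_eq_sum_div_card, hs, ← Finset.sum_div, Fintype.card_fun, Fintype.card_fin]
  push_cast
  rw [pow_succ, div_div, mul_comm]

section A
variable {q N : ℕ}

noncomputable def gm (q : ℕ) (β : ℝ) (l : ℕ) : (ℕ → Fin q) → Unit → ℝ := fun τ _ => β * ∑ k : Fin l, dl (τ (2 * k.1)) (τ (2 * k.1 + 1))
noncomputable def cr (β : ℝ) {n : ℕ} (I : Fin n → Fin N) : (ℕ → Fin q) → (Fin N → Fin q) → ℝ :=
  fun τ σ => β * ∑ i : Fin n, dl (τ i.1) (σ (I i))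
noncomputable def hA (β : ℝ) {j n : ℕ} (e : Fin j → Fin N × Fin N) (I : Fin n → Fin N) (l : ℕ) :
    (ℕ → Fin q) → (Fin N → Fin q) → ℝ := fun τ σ =>
  β * (∑ i, ed (e i) σ + ∑ i : Fin n, dl (τ (2 * l + i.1)) (σ (I i)) + ∑ k : Fin l, dl (τ (2 * k.1)) (τ (2 * k.1 + 1)))

lemma dls_meas {n : ℕ} (f g : Fin n → (ℕ → Fin q) → Fin q) (hf : ∀ i, Measurable (f i)) (hg : ∀ i, Measurable (g i)) :
    Measurable fun τ => ∑ i, dl (f i τ) (g i τ) := Finset.measurable_sum _ fun i _ => dl_meas (hf i) (hg i)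
lemma dls_bd {n : ℕ} (f g : Fin n → Fin q) : 0 ≤ ∑ i, dl (f i) (g i) ∧ ∑ i, dl (f i) (g i) ≤ n := by
  refine ⟨Finset.sum_nonneg fun i _ => dl_nonneg _ _, ?_⟩
  refine (Finset.sum_le_sum fun i _ => dl_le (f i) (g i)).trans ?_
  simp

lemma gm_en {β : ℝ} (hβ : 0 ≤ β) (l : ℕ) : IsEn (gm q β l) (β * l) := by
  refine ⟨fun σ => (dls_meas _ _ (fun i => measurable_pi_apply _) (fun i => measurable_pi_apply _)).const_mul β, fun τ σ => ?_⟩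
  have := dls_bd (fun k : Fin l => τ (2 * k.1)) (fun k : Fin l => τ (2 * k.1 + 1))
  exact ⟨mul_nonneg hβ this.1, mul_le_mul_of_nonneg_left this.2 hβ⟩

lemma cr_en {β : ℝ} (hβ : 0 ≤ β) {n : ℕ} (I : Fin n → Fin N) : IsEn (cr (q := q) β I) (β * n) := by
  refine ⟨fun σ => (dls_meas (fun i τ => τ i.1) (fun i τ => σ (I i)) (fun i => measurable_pi_apply _) (fun i => measurable_const)).const_mul β, fun τ σ => ?_⟩
  have := dls_bd (fun k : Fin n => τ k.1) (fun k : Fin n => σ (I k))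
  exact ⟨mul_nonneg hβ this.1, mul_le_mul_of_nonneg_left this.2 hβ⟩

lemma hA_en {β : ℝ} (hβ : 0 ≤ β) {j n : ℕ} (e : Fin j → Fin N × Fin N) (I : Fin n → Fin N) (l : ℕ) :
    IsEn (hA (q := q) β e I l) (β * (j + n + l)) := by
  refine ⟨fun σ => Measurable.const_mul ((measurable_const.add
    (dls_meas (fun i τ => τ (2 * l + i.1)) (fun i τ => σ (I i)) (fun i => measurable_pi_apply _) (fun i => measurable_const))).add
      (dls_meas (fun i τ => τ (2 * i.1)) (fun i τ => τ (2 * i.1 + 1)) (fun i => measurable_pi_apply _) (fun i => measurable_pi_apply _))) β, fun τ σ => ?_⟩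
  have h1 := dls_bd (fun i : Fin j => σ (e i).1) (fun i : Fin j => σ (e i).2)
  have h1' : ∑ i, ed (e i) σ = ∑ i, dl (σ (e i).1) (σ (e i).2) := rfl
  have h2 := dls_bd (fun k : Fin n => τ (2 * l + k.1)) (fun k : Fin n => σ (I k))
  have h3 := dls_bd (fun k : Fin l => τ (2 * k.1)) (fun k : Fin l => τ (2 * k.1 + 1))
  unfold hA
  rw [h1']
  exact ⟨mul_nonneg hβ (by linarith), mul_le_mul_of_nonneg_left (by linarith) hβ⟩

lemma hA_dep (β : ℝ) {j n : ℕ} (e : Fin j → Fin N × Fin N) (I : Fin n → Fin N) (l : ℕ) :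
    Dep (hA (q := q) β e I l) (2 * l + n) := by
  intro τ τ' h σ
  unfold hA
  congr 2
  · congr 1
    refine Finset.sum_congr rfl fun i _ => ?_
    rw [h _ (by omega)]
  · refine Finset.sum_congr rfl fun i _ => ?_
    rw [h _ (by omega), h _ (by omega)]

noncomputable def Af (q N : ℕ) (β : ℝ) (L : Measure (SpinStruct q)) (j n l : ℕ) : ℝ :=
  Finset.expect Finset.univ fun e : Fin j → Fin N × Fin N => Finset.expect Finset.univ fun I : Fin n → Fin N =>
    Lw L (hA β e I l)

lemma Af_rec [NeZero q] (hN : 1 ≤ N) {L : Measure (SpinStruct q)} (hL : IsRSS q L) {β : ℝ} (hβ : 0 ≤ β) (j n l : ℕ) :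
    (1/2) * Af q N β L (j+1) n l + (1 - 1/2) * Af q N β L j n (l+1) - 0 ≤ Af q N β L j (n+1) l := by
  have E1 : Af q N β L (j+1) n l = Finset.expect Finset.univ fun e : Fin j → Fin N × Fin N => Finset.expect Finset.univ fun I : Fin n → Fin N =>
      Finset.expect Finset.univ fun x : Fin N × Fin N => Lw L (fun τ σ => hA β e I l τ σ + β * dl (σ x.1) (σ x.2)) := by
    unfold Af
    rw [expect_cons, Finset.expect_comm]
    refine Finset.expect_congr rfl fun e _ => ?_
    rw [Finset.expect_comm]
    refine Finset.expect_congr rfl fun I _ => Finset.expect_congr rfl fun x _ => ?_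
    congr 1; funext τ σ
    unfold hA
    rw [Fin.sum_univ_succ]
    simp only [Fin.cons_zero, Fin.cons_succ, ed, dl]
    ring
  have E2 : Af q N β L j (n+1) l = Finset.expect Finset.univ fun e : Fin j → Fin N × Fin N => Finset.expect Finset.univ fun I : Fin n → Fin N =>
      Finset.expect Finset.univ fun i : Fin N => Lw L (fun τ σ => hA β e I l τ σ + β * dl (τ (2 * l + n)) (σ i)) := by
    unfold Af
    refine Finset.expect_congr rfl fun e _ => ?_
    rw [expect_snoc]
    refine Finset.expect_congr rfl fun I _ => Finset.expect_congr rfl fun x _ => ?_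
    congr 1; funext τ σ
    unfold hA
    rw [Fin.sum_univ_castSucc (n := n)]
    simp only [Fin.snoc_castSucc, Fin.snoc_last, Fin.val_castSucc, Fin.val_last]
    ring
  have E3 : Af q N β L j n (l+1) = Finset.expect Finset.univ fun e : Fin j → Fin N × Fin N => Finset.expect Finset.univ fun I : Fin n → Fin N =>
      Lw L (fun τ σ => hA β e I l τ σ + β * dl (τ (2 * l + n)) (τ (2 * l + n + 1))) := by
    unfold Af
    refine Finset.expect_congr rfl fun e _ => Finset.expect_congr rfl fun I _ => ?_
    refine Lw_exch hL (IsEn_add (hA_en hβ e I l) (s := fun τ _ => τ (2*l+n)) (t := fun τ _ => τ (2*l+n+1)) (fun σ => measurable_pi_apply _) (fun σ => measurable_pi_apply _) hβ) (2 * l + n + 2) ?_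
      (fun k => if k < 2 * l then k else if k < 2 * l + n then k + 2 else k - n) ?_ ?_
    · intro τ τ' ht σ
      beta_reduce
      rw [hA_dep β e I l τ τ' (fun k hk => ht k (by omega)), ht _ (by omega), ht _ (by omega)]
    · intro a ha b hb hab
      simp only [Set.mem_ofPred_eq] at ha hb
      dsimp only at hab
      split_ifs at hab <;> omega
    · intro τ σ
      unfold hA
      rw [Fin.sum_univ_castSucc (n := l)]
      have a1 : ∑ i : Fin n, dl (τ (2 * (l + 1) + i.1)) (σ (I i)) = ∑ i : Fin n, dl (τ (if 2 * l + i.1 < 2 * l then 2 * l + i.1 else if 2 * l + i.1 < 2 * l + n then 2 * l + i.1 + 2 else 2 * l + i.1 - n)) (σ (I i)) := by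
        refine Finset.sum_congr rfl fun i _ => ?_
        rw [if_neg (by omega), if_pos (by omega)]
        congr 2; ring
      have a2 : ∑ i : Fin l, dl (τ (2 * i.1)) (τ (2 * i.1 + 1)) = ∑ i : Fin l, dl (τ (if 2 * i.1 < 2 * l then 2 * i.1 else if 2 * i.1 < 2 * l + n then 2 * i.1 + 2 else 2 * i.1 - n)) (τ (if 2 * i.1 + 1 < 2 * l then 2 * i.1 + 1 else if 2 * i.1 + 1 < 2 * l + n then 2 * i.1 + 1 + 2 else 2 * i.1 + 1 - n)) := by
        refine Finset.sum_congr rfl fun i _ => ?_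
        rw [if_pos (by omega), if_pos (by omega)]
      rw [a1]
      simp only [Fin.val_castSucc, Fin.val_last]
      rw [a2]
      have a3 : (if 2 * l + n < 2 * l then 2 * l + n else if 2 * l + n < 2 * l + n then 2 * l + n + 2 else 2 * l + n - n) = 2 * l := by
        split_ifs <;> omega
      have a4 : (if 2 * l + n + 1 < 2 * l then 2 * l + n + 1 else if 2 * l + n + 1 < 2 * l + n then 2 * l + n + 1 + 2 else 2 * l + n + 1 - n) = 2 * l + 1 := by
        split_ifs <;> omega
      rw [a3, a4]
      ring
  rw [E1, E2, E3, sub_zero]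
  simp only [Finset.mul_expect, ← Finset.expect_add_distrib]
  refine Finset.expect_le_expect fun e _ => Finset.expect_le_expect fun I _ => ?_
  rw [← Finset.mul_expect]
  have := key_step hN hL (hA_en hβ e I l) _ (hA_dep β e I l) hβ
  linarith

lemma Af_bound [NeZero q] (hN : 1 ≤ N) {L : Measure (SpinStruct q)} (hL : IsRSS q L) {β : ℝ} (hβ : 0 ≤ β) (j n l : ℕ) :
    |Af q N β L j n l| ≤ (Real.log (Fintype.card (Fin N → Fin q)) + β) * (1 + j + n + l) := by
  haveI : Nonempty (Fin N) := ⟨⟨0, hN⟩⟩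
  refine expect_abs_le fun e => expect_abs_le fun I => ?_
  refine (Lw_abs hL (hA_en hβ e I l)).trans ?_
  have h0 : (0:ℝ) ≤ j + n + l := by positivity
  rw [abs_of_nonneg (mul_nonneg hβ h0)]
  have := cast_lb (Real.log_natCast_nonneg (Fintype.card (Fin N → Fin q))) hβ h0
  linarith

lemma Af_fact [NeZero q] (hN : 1 ≤ N) {L : Measure (SpinStruct q)} (hL : IsRSS q L) {β : ℝ} (hβ : 0 ≤ β) (j l : ℕ) :
    Af q N β L j 0 l = Den (Fin N) q β j + Lw L (gm q β l) := by
  haveI : Nonempty (Fin N) := ⟨⟨0, hN⟩⟩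
  have : ∀ (e : Fin j → Fin N × Fin N) (I : Fin 0 → Fin N), Lw L (hA (q := q) β e I l)
      = lz (fun σ : Fin N → Fin q => β * ∑ i, ed (e i) σ) + Lw L (gm q β l) := by
    intro e I
    refine Lw_factor hL (gm_en hβ l) (fun σ : Fin N → Fin q => β * ∑ i, ed (e i) σ) (Equiv.prodPUnit _).symm _ fun τ σ => ?_
    simp only [hA, gm, Finset.univ_eq_empty, Finset.sum_empty, Equiv.prodPUnit_symm_apply]
    ring
  unfold Af
  simp only [this, Fintype.expect_const, Finset.expect_add_distrib]
  rfl

lemma G1_eq [NeZero q] (hN : 1 ≤ N) {L : Measure (SpinStruct q)} (hL : IsRSS q L) {β c : ℝ} (hβ : 0 ≤ β) (hc : 0 ≤ c) :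
    (N:ℝ) * G1 q N β c L = Po (c * N) (fun n => Finset.expect Finset.univ fun I : Fin n → Fin N => Lw L (cr β I)) := by
  haveI := hL.1
  haveI : Nonempty (Fin N) := ⟨⟨0, hN⟩⟩
  have hN0 : (0:ℝ) < N := by positivity
  have h := int_Po hL (lam := c * N) (by positivity)
    (fun k p => Finset.expect Finset.univ fun I : Fin k → Fin N => Real.log (Wp p (cr β I)))
    (C := Real.log (Fintype.card (Fin N → Fin q)) + β) (fun k => by
      simp only [Fintype.expect_eq_sum_div_card]
      exact (integrable_finsetSum _ fun I _ => Wp_int hL (cr_en hβ I)).div_const _) (fun k => by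
      filter_upwards [good_ae hL] with p hp
      refine expect_abs_le fun I => (Wp_log hp (cr_en hβ I)).trans ?_
      rw [abs_of_nonneg (by positivity)]
      exact cast_lb (Real.log_natCast_nonneg _) hβ (Nat.cast_nonneg k))
  have h2 : ∀ k : ℕ, ∫ p, (Finset.expect Finset.univ fun I : Fin k → Fin N => Real.log (Wp p (cr β I))) ∂L
      = Finset.expect Finset.univ fun I : Fin k → Fin N => Lw L (cr β I) := by
    intro k
    simp only [Fintype.expect_eq_sum_div_card]
    rw [integral_div, integral_finsetSum _ fun I _ => Wp_int hL (cr_en hβ I)]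
    rfl
  simp only [h2] at h
  rw [← h]
  unfold G1
  rw [← integral_const_mul]
  congr 1; funext p
  rw [← tsum_mul_left]
  congr 1; funext k
  rw [Fintype.expect_eq_sum_div_card, Fintype.card_fun, Fintype.card_fin, Fintype.card_fin, ← Finset.mul_sum]
  push_cast
  have : ∀ I : Fin k → Fin N, (∑' α : ℕ, p.1 α * ∑ σ : Fin N → Fin q, Real.exp (-β *
          ∑ i : Fin k, (if p.2 α i.1 = σ (I i) then (1 : ℝ) else 0))) = Wp p (cr β I) := by
    intro I
    simp only [Wp, cr, dl, neg_mul]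
  simp only [this]
  field_simp

lemma G2_eq [NeZero q] (hN : 1 ≤ N) {L : Measure (SpinStruct q)} (hL : IsRSS q L) {β c : ℝ} (hβ : 0 ≤ β) (hc : 0 ≤ c) :
    (N:ℝ) * G2 q N β c L = Po (c * N / 2) (fun n => Lw L (gm q β n)) := by
  haveI := hL.1
  have hN0 : (0:ℝ) < N := by positivity
  have h := int_Po hL (lam := c * N / 2) (by positivity)
    (fun k p => Real.log (Wp p (gm q β k)))
    (C := Real.log (Fintype.card Unit) + β) (fun k => Wp_int hL (gm_en hβ k)) (fun k => by
      filter_upwards [good_ae hL] with p hp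
      refine (Wp_log hp (gm_en hβ k)).trans ?_
      rw [abs_of_nonneg (by positivity)]
      exact cast_lb (Real.log_natCast_nonneg _) hβ (Nat.cast_nonneg k))
  have h2 : ∀ k : ℕ, ∫ p, Real.log (Wp p (gm q β k)) ∂L = Lw L (gm q β k) := fun k => rfl
  simp only [h2] at h
  rw [← h]
  unfold G2
  rw [← integral_const_mul]
  congr 1; funext p
  rw [← tsum_mul_left]
  congr 1; funext k
  simp only [Wp, gm, dl, neg_mul, Finset.univ_unique, Finset.sum_singleton]
  field_simp

lemma gm_LB [NeZero q] {L : Measure (SpinStruct q)} (hL : IsRSS q L) {β : ℝ} (hβ : 0 ≤ β) : LB (fun n => Lw L (gm q β n)) := by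
  refine ⟨Real.log (Fintype.card Unit) + β, fun k => ?_⟩
  refine (Lw_abs hL (gm_en hβ k)).trans ?_
  rw [abs_of_nonneg (by positivity)]
  exact cast_lb (Real.log_natCast_nonneg _) hβ (Nat.cast_nonneg k)

lemma partA [NeZero q] (hN : 1 ≤ N) {L : Measure (SpinStruct q)} (hL : IsRSS q L) {β c : ℝ} (hβ : 0 ≤ β) (hc : 0 ≤ c) :
    potts.p q N β c ≤ G1 q N β c L - G2 q N β c L := by
  haveI : Nonempty (Fin N) := ⟨⟨0, hN⟩⟩
  have hN0 : (0:ℝ) < N := by positivity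
  have h := Po_compare (Lam := c * N) (by positivity) (by norm_num : (0:ℝ) ≤ 1/2) (by norm_num) (Af_rec hN hL hβ) (Af_bound hN hL hβ)
  have e1 : (1/2 : ℝ) * (c * N) = c * N / 2 := by ring
  have e2 : (1 - 1/2 : ℝ) * (c * N) = c * N / 2 := by ring
  rw [e1, e2, mul_zero, sub_zero] at h
  have hl : 0 ≤ c * N / 2 := by positivity
  have e3 : (fun n => Af q N β L 0 n 0) = (fun n => Finset.expect Finset.univ fun I : Fin n → Fin N => Lw L (cr β I)) := by
    funext n
    have : ∀ (e : Fin 0 → Fin N × Fin N) (I : Fin n → Fin N), hA (q := q) β e I 0 = cr β I := by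
      intro e I; funext τ σ; simp [hA, cr]
    unfold Af
    simp only [this, Fintype.expect_const]
  rw [e3, ← G1_eq hN hL hβ hc] at h
  simp only [Af_fact hN hL hβ] at h
  have e4 : ∀ j : ℕ, Po (c * N / 2) (fun l => Den (Fin N) q β j + Lw L (gm q β l)) = Den (Fin N) q β j + N * G2 q N β c L := by
    intro j
    rw [Po_add hl (LB.const _) (gm_LB hL hβ), Po_const, G2_eq hN hL hβ hc]
  simp only [e4] at h
  rw [Po_add hl (Den_LB hβ) (LB.const _), Po_const, ← p_eq hN hβ hc] at h
  have : (N:ℝ) * potts.p q N β c ≤ N * (G1 q N β c L - G2 q N β c L) := by linarith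
  exact le_of_mul_le_mul_left this hN0

end A


noncomputable def uM (M : ℕ) [NeZero M] : Measure (ℕ → Fin M) :=
  Measure.infinitePi fun _ : ℕ => (ProbabilityTheory.uniformOn (Set.univ : Set (Fin M)))

lemma uM_prob (M : ℕ) [NeZero M] : IsProbabilityMeasure (uM M) := by unfold uM; infer_instance

lemma uM_perm (M : ℕ) [NeZero M] (π : Equiv.Perm ℕ) : (uM M).map (fun i k => i (π k)) = uM M := by
  refine Measure.eq_infinitePi _ fun s t ht => ?_
  have hmeas : Measurable (fun (i : ℕ → Fin M) k => i (π k)) := measurable_pi_lambda _ fun k => measurable_pi_apply _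
  rw [Measure.map_apply hmeas (MeasurableSet.pi s.countable_toSet fun i _ => ht i)]
  have : (fun (i : ℕ → Fin M) k => i (π k)) ⁻¹' (Set.pi s t) = Set.pi (s.map π.toEmbedding) (fun k => t (π.symm k)) := by
    ext i
    simp only [Set.mem_preimage, Set.mem_pi, Finset.coe_map, Set.mem_image, Finset.mem_coe, Equiv.coe_toEmbedding]
    constructor
    · rintro h _ ⟨k, hk, rfl⟩
      simpa using h k hk
    · intro h k hk
      simpa using h (π k) ⟨k, hk, rfl⟩
  rw [this, uM, Measure.infinitePi_pi _ fun i _ => ht _]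
  simp

lemma uM_int (M : ℕ) [NeZero M] {Y : Type*} [Fintype Y] [DecidableEq Y] (ψ : Y → ℕ) (hψ : Function.Injective ψ) (g : (Y → Fin M) → ℝ) :
    ∫ i, g (fun y => i (ψ y)) ∂(uM M) = Finset.expect Finset.univ g := by
  haveI := uM_prob M
  have hmeas : Measurable (fun (i : ℕ → Fin M) y => i (ψ y)) := measurable_pi_lambda _ fun k => measurable_pi_apply _
  have hg : ∀ μ : Measure (Y → Fin M), AEStronglyMeasurable g μ := fun μ => (measurable_of_finite g).aestronglyMeasurable
  haveI : IsProbabilityMeasure ((uM M).map (fun i y => i (ψ y))) := Measure.isProbabilityMeasure_map hmeas.aemeasurable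
  rw [← integral_map (φ := fun (i : ℕ → Fin M) y => i (ψ y)) hmeas.aemeasurable (hg _), integral_fintype Integrable.of_finite]
  have hx : ∀ x : Y → Fin M, ((uM M).map (fun i y => i (ψ y))).real {x} = (1 / (M:ℝ)) ^ (Fintype.card Y) := by
    intro x
    rw [measureReal_def, Measure.map_apply hmeas (measurableSet_singleton x)]
    have : (fun (i : ℕ → Fin M) y => i (ψ y)) ⁻¹' {x} = Set.pi (Finset.univ.map ⟨ψ, hψ⟩) (fun k => {m | ∀ y, ψ y = k → m = x y}) := by
      ext i
      simp only [Set.mem_preimage, Set.mem_singleton_iff, Set.mem_pi, funext_iff]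
      constructor
      · intro h k _ y hy
        rw [← h y, hy]
      · intro h y
        exact h (ψ y) (by simp) y rfl
    rw [this, uM, Measure.infinitePi_pi _ fun i _ => (Set.toFinite _).measurableSet]
    rw [Finset.prod_map]
    have h2 : ∀ y : Y, ({m | ∀ y', ψ y' = (⟨ψ, hψ⟩ : Y ↪ ℕ) y → m = x y'} : Set (Fin M)) = {x y} := by
      intro y; ext m
      constructor
      · intro h; exact h y rfl
      · intro h y' hy'
        have : y' = y := hψ hy'
        rw [this]; exact h
    simp only [h2]
    have h3 : ∀ m : Fin M, ProbabilityTheory.uniformOn (Set.univ : Set (Fin M)) {m} = ENNReal.ofReal (1 / M) := by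
      intro m
      rw [ProbabilityTheory.uniformOn_univ, Measure.count_singleton, Fintype.card_fin,
        ENNReal.ofReal_div_of_pos (by have := NeZero.pos M; positivity)]
      simp
    simp only [h3, Finset.prod_const, Finset.card_univ]
    rw [← ENNReal.ofReal_pow (by positivity), ENNReal.toReal_ofReal (by positivity)]
  simp only [hx]
  rw [Fintype.expect_eq_sum_div_card, Fintype.card_fun, Fintype.card_fin]
  simp only [smul_eq_mul, ← Finset.mul_sum]
  push_cast
  rw [one_div, inv_pow]; field_simp

/-- sorting of weights -/
lemma exists_sorted {T : Type*} [Fintype T] [Nonempty T] (w : T → ℝ) (h0 : ∀ t, 0 ≤ w t) (h1 : ∑ t, w t = 1) :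
    ∃ (ξ : ℕ → ℝ) (tt : ℕ → T), (∀ n, 0 ≤ ξ n) ∧ Antitone ξ ∧ HasSum ξ 1 ∧
      ∀ g : T → ℝ, ∑' α, ξ α * g (tt α) = ∑ t, w t * g t := by
  classical
  set n := Fintype.card T
  let e0 : T ≃ Fin n := Fintype.equivFin T
  let f : Fin n → ℝ := fun k => - w (e0.symm k)
  let φ : Fin n ≃ T := (Tuple.sort f).trans e0.symm
  have hφ : ∀ a b : Fin n, a ≤ b → w (φ b) ≤ w (φ a) := by
    intro a b hab
    have := Tuple.monotone_sort f hab
    simp only [f, Function.comp] at this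
    simpa [φ] using this
  let ξ : ℕ → ℝ := fun k => if h : k < n then w (φ ⟨k, h⟩) else 0
  let tt : ℕ → T := fun k => if h : k < n then φ ⟨k, h⟩ else Classical.arbitrary T
  have key : ∀ g : T → ℝ, HasSum (fun α => ξ α * g (tt α)) (∑ t, w t * g t) := by
    intro g
    have h2 : ∑ t, w t * g t = ∑ k ∈ Finset.range n, ξ k * g (tt k) := by
      rw [← Fin.sum_univ_eq_sum_range (fun k => ξ k * g (tt k)) n, ← φ.sum_comp]
      refine Finset.sum_congr rfl fun k _ => ?_
      simp [ξ, tt]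
    rw [h2]
    refine hasSum_sum_of_ne_finset_zero fun k hk => ?_
    have : ¬ k < n := by simpa using hk
    simp [ξ, this]
  refine ⟨ξ, tt, ?_, ?_, ?_, fun g => (key g).tsum_eq⟩
  · intro k
    simp only [ξ]; split_ifs
    · exact h0 _
    · exact le_refl _
  · intro a b hab
    simp only [ξ]
    split_ifs with hb ha ha
    · exact hφ _ _ hab
    · omega
    · exact h0 _
    · exact le_refl _
  · have := key (fun _ => 1)
    simpa [h1] using this

lemma exists_RSS (q M : ℕ) [NeZero q] [NeZero M] (H : (Fin M → Fin q) → ℝ) :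
    ∃ L : Measure (SpinStruct q), IsRSS q L ∧ ∀ (X : Type) [Fintype X] [Nonempty X] (E : (ℕ → Fin q) → X → ℝ) (C : ℝ), IsEn E C →
      Lw L E = ∫ i, (lz (fun z : (Fin M → Fin q) × X => H z.1 + E (fun k => z.1 (i k)) z.2) - lz H) ∂(uM M) := by
  haveI := uM_prob M
  have hZ := lz_pos H
  obtain ⟨ξ, tt, a1, a2, a3, a4⟩ := exists_sorted (fun t => Real.exp (-H t) / ∑ t, Real.exp (-H t))
    (fun t => by positivity) (by rw [← Finset.sum_div]; field_simp)
  let F : (ℕ → Fin M) → SpinStruct q := fun i => (ξ, fun α k => tt α (i k))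
  have hF : Measurable F := by
    refine measurable_const.prodMk (measurable_pi_lambda _ fun α => measurable_pi_lambda _ fun k => ?_)
    exact (measurable_of_finite (tt α)).comp (measurable_pi_apply k)
  have hL : IsRSS q ((uM M).map F) := by
    refine ⟨Measure.isProbabilityMeasure_map hF.aemeasurable, ?_, ?_⟩
    · haveI : IsProbabilityMeasure ((uM M).map F) := Measure.isProbabilityMeasure_map hF.aemeasurable
      refine le_antisymm prob_le_one ?_
      refine le_trans ?_ (Measure.le_map_apply hF.aemeasurable _)
      have : F ⁻¹' {p : SpinStruct q | (∀ n, 0 ≤ p.1 n) ∧ Antitone p.1 ∧ HasSum p.1 1} = Set.univ := by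
        ext i; simp only [Set.mem_univ, iff_true]; exact ⟨a1, a2, a3⟩
      rw [this, measure_univ]
    · intro π _
      have hmeas : Measurable (fun p : SpinStruct q => ((p.1, fun α k => p.2 α (π k)) : SpinStruct q)) := by
        refine measurable_fst.prodMk (measurable_pi_lambda _ fun α => measurable_pi_lambda _ fun k => ?_)
        exact (measurable_pi_apply (π k)).comp ((measurable_pi_apply α).comp measurable_snd)
      have hmeas2 : Measurable (fun (i : ℕ → Fin M) k => i (π k)) := measurable_pi_lambda _ fun k => measurable_pi_apply _
      rw [Measure.map_map hmeas hF]
      conv_rhs => rw [← uM_perm M π, Measure.map_map hF hmeas2]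
      rfl
  refine ⟨(uM M).map F, hL, fun X _ _ E C hE => ?_⟩
  rw [Lw, integral_map hF.aemeasurable (Wp_aesm hL hE)]
  congr 1; funext i
  have h1 : Wp (F i) E = ∑ t, Real.exp (-H t) / (∑ t, Real.exp (-H t)) * ∑ σ, Real.exp (-E (fun k => t (i k)) σ) :=
    a4 (fun t => ∑ σ, Real.exp (-E (fun k => t (i k)) σ))
  have h2 : Wp (F i) E = (∑ z : (Fin M → Fin q) × X, Real.exp (-(H z.1 + E (fun k => z.1 (i k)) z.2))) / ∑ t, Real.exp (-H t) := by
    rw [h1, Fintype.sum_prod_type, Finset.sum_div]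
    refine Finset.sum_congr rfl fun t _ => ?_
    rw [Finset.mul_sum, Finset.sum_div]
    refine Finset.sum_congr rfl fun σ _ => ?_
    rw [neg_add, Real.exp_add]; ring
  rw [h2, Real.log_div (lz_pos _).ne' hZ.ne']
  rfl


lemma Po_expect {ι : Type*} [Fintype ι] {l : ℝ} (hl : 0 ≤ l) (f : ι → ℕ → ℝ) (hf : ∀ i, LB (f i)) :
    Finset.expect Finset.univ (fun i => Po l (f i)) = Po l (fun k => Finset.expect Finset.univ fun i => f i k) := by
  unfold Po
  simp only [Fintype.expect_eq_sum_div_card]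
  rw [← Summable.tsum_finsetSum fun i _ => pois_summ hl (hf i), ← tsum_div_const]
  congr 1; funext k
  rw [← Finset.mul_sum]; ring

section B
variable {q M N : ℕ}

noncomputable def He (q : ℕ) (β : ℝ) {j : ℕ} (e : Fin j → Fin M × Fin M) : (Fin M → Fin q) → ℝ := fun t => β * ∑ l, ed (e l) t
noncomputable def De (q : ℕ) (β : ℝ) {j : ℕ} (e : Fin j → Fin M × Fin M) (K : ℕ) : ℝ :=
  Finset.expect Finset.univ fun e' : Fin K → Fin M × Fin M => lz (fun t => He q β e t + He q β e' t)
noncomputable def Be (q N : ℕ) (β : ℝ) {j : ℕ} (e : Fin j → Fin M × Fin M) (n : ℕ) : ℝ :=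
  Finset.expect Finset.univ fun I : Fin n → Fin N => Finset.expect Finset.univ fun i : Fin n → Fin M =>
    lz (fun z : (Fin M → Fin q) × (Fin N → Fin q) => He q β e z.1 + β * ∑ k, dl (z.1 (i k)) (z.2 (I k)))

lemma De_LB [NeZero q] [NeZero M] {β : ℝ} (hβ : 0 ≤ β) {j : ℕ} (e : Fin j → Fin M × Fin M) : LB (De q β e) := by
  refine ⟨Real.log (Fintype.card (Fin M → Fin q)) + β * j + β, fun k => ?_⟩
  refine (expect_abs_le fun e' => lz_abs (C := β * j + β * k) (fun t => add_nonneg (eds_nonneg hβ e t) (eds_nonneg hβ e' t))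
    (fun t => add_le_add (eds_le hβ e t) (eds_le hβ e' t))).trans ?_
  have := cast_lb (add_nonneg (Real.log_natCast_nonneg (Fintype.card (Fin M → Fin q))) (by positivity : 0 ≤ β * (j:ℝ))) hβ (Nat.cast_nonneg k)
  linarith

lemma Be_LB [NeZero q] [NeZero M] [NeZero N] {β : ℝ} (hβ : 0 ≤ β) {j : ℕ} (e : Fin j → Fin M × Fin M) : LB (Be q N β e) := by
  refine ⟨Real.log (Fintype.card ((Fin M → Fin q) × (Fin N → Fin q))) + β * j + β, fun k => ?_⟩
  have h0 : |Be q N β e k| ≤ Real.log (Fintype.card ((Fin M → Fin q) × (Fin N → Fin q))) + (β * j + β * k) := by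
    unfold Be
    refine expect_abs_le fun I => expect_abs_le fun i => ?_
    refine lz_abs (fun t => ?_) (fun t => ?_)
    · have h2 := dls_bd (fun k => t.1 (i k)) (fun k => t.2 (I k))
      have h3 : 0 ≤ He q β e t.1 := eds_nonneg hβ e t.1
      exact add_nonneg h3 (mul_nonneg hβ h2.1)
    · have h2 := dls_bd (fun k => t.1 (i k)) (fun k => t.2 (I k))
      have h3 : He q β e t.1 ≤ β * j := eds_le hβ e t.1
      exact add_le_add h3 (mul_le_mul_of_nonneg_left h2.2 hβ)
  refine h0.trans ?_
  have := cast_lb (add_nonneg (Real.log_natCast_nonneg (Fintype.card ((Fin M → Fin q) × (Fin N → Fin q)))) (by positivity : 0 ≤ β * (j:ℝ))) hβ (Nat.cast_nonneg k)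
  linarith

lemma lz_equiv {X Y : Type*} [Fintype X] [Fintype Y] (φ : X ≃ Y) (h : X → ℝ) (g : Y → ℝ) (H : ∀ x, h x = g (φ x)) : lz h = lz g := by
  unfold lz
  congr 1
  exact Fintype.sum_equiv φ _ _ fun x => by rw [H]

lemma exists_e [NeZero q] [NeZero M] (hN : 1 ≤ N) {β c : ℝ} (hβ : 0 ≤ β) (hc : 0 ≤ c) {j : ℕ} (e : Fin j → Fin M × Fin M) :
    ∃ L, IsRSS q L ∧ N * (G1 q N β c L - G2 q N β c L) = Po (c * N) (Be q N β e) - Po (c * N / 2) (De q β e) := by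
  haveI : NeZero N := ⟨by omega⟩
  haveI := uM_prob M
  obtain ⟨L, hL, h⟩ := exists_RSS q M (He q β e)
  refine ⟨L, hL, ?_⟩
  have hgm : ∀ K, Lw L (gm q β K) = De q β e K - lz (He q β e) := by
    intro K
    rw [h Unit _ _ (gm_en hβ K)]
    have := uM_int M (fun y : Fin K × Bool => 2 * y.1.1 + (if y.2 then 1 else 0)) (by
      rintro ⟨a, b⟩ ⟨a', b'⟩ hab
      rcases b with _ | _ <;> rcases b' with _ | _ <;> simp at hab ⊢ <;> omega)
      (fun x => lz (fun t : Fin M → Fin q => He q β e t + β * ∑ k : Fin K, dl (t (x (k, false))) (t (x (k, true)))) - lz (He q β e))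
    have e1 : ∀ i : ℕ → Fin M, lz (fun z : (Fin M → Fin q) × Unit => He q β e z.1 + gm q β K (fun k => z.1 (i k)) z.2)
       = lz (fun t : Fin M → Fin q => He q β e t + β * ∑ k : Fin K, dl (t (i (2 * k.1))) (t (i (2 * k.1 + 1)))) := by
      intro i
      exact lz_equiv (Equiv.prodPUnit _) _ _ fun z => by simp [gm]
    simp only [e1]
    simp only [Bool.false_eq_true, if_false, if_true, add_zero] at this
    rw [this, Finset.expect_sub_distrib, Fintype.expect_const]
    congr 1
    unfold De
    refine Fintype.expect_equiv ((Equiv.curry _ _ _).trans (Equiv.arrowCongr (Equiv.refl _) (Equiv.boolArrowEquivProd _))) _ _ fun x => ?_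
    rfl
  have hcr : ∀ (n : ℕ) (I : Fin n → Fin N), Lw L (cr β I) = (Finset.expect Finset.univ fun i : Fin n → Fin M =>
      lz (fun z : (Fin M → Fin q) × (Fin N → Fin q) => He q β e z.1 + β * ∑ k, dl (z.1 (i k)) (z.2 (I k)))) - lz (He q β e) := by
    intro n I
    rw [h (Fin N → Fin q) _ _ (cr_en hβ I)]
    have := uM_int M (fun y : Fin n => y.1) Fin.val_injective
      (fun i => lz (fun z : (Fin M → Fin q) × (Fin N → Fin q) => He q β e z.1 + β * ∑ k, dl (z.1 (i k)) (z.2 (I k))) - lz (He q β e))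
    rw [Finset.expect_sub_distrib, Fintype.expect_const] at this
    rw [← this]
    rfl
  rw [mul_sub, G1_eq hN hL hβ hc, G2_eq hN hL hβ hc]
  simp only [hgm, hcr, Finset.expect_sub_distrib, Fintype.expect_const]
  have l1 : 0 ≤ c * N := by positivity
  have l2 : 0 ≤ c * N / 2 := by positivity
  rw [Po_sub l2 (De_LB hβ e) (LB.const _), Po_const]
  have := Po_sub l1 (Be_LB (N := N) (q := q) hβ e) (LB.const (lz (He q β e)))
  rw [Po_const] at this
  unfold Be at this ⊢
  rw [this]; ring

lemma expect_append {ι : Type*} [Fintype ι] {j k : ℕ} (f : (Fin (j + k) → ι) → ℝ) :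
    (Finset.expect Finset.univ fun e : Fin j → ι => Finset.expect Finset.univ fun e' : Fin k → ι => f (Fin.append e e'))
      = Finset.expect Finset.univ f := by
  have hs : ∑ e, f e = ∑ e : Fin j → ι, ∑ x : Fin k → ι, f (Fin.append e x) := by
    rw [← Fintype.sum_prod_type' (fun (e : Fin j → ι) (x : Fin k → ι) => f (Fin.append e x))]
    exact (Fintype.sum_equiv (Fin.appendEquiv j k) _ _ (fun x => rfl)).symm
  simp only [Fintype.expect_eq_sum_div_card, hs, ← Finset.sum_div, Fintype.card_fun, Fintype.card_fin]
  push_cast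
  rw [pow_add, div_div, mul_comm]

lemma De_avg (β : ℝ) (j K : ℕ) : (Finset.expect Finset.univ fun e : Fin j → Fin M × Fin M => De q β e K) = Den (Fin M) q β (j + K) := by
  unfold De Den
  rw [← expect_append]
  refine Finset.expect_congr rfl fun e _ => Finset.expect_congr rfl fun e' _ => ?_
  congr 1; funext t
  simp only [He]
  rw [Fin.sum_univ_add]
  simp only [Fin.append_left, Fin.append_right]
  ring

lemma expect_prod' {A B : Type*} [Fintype A] [Fintype B] (f : A → B → ℝ) :
    (Finset.expect Finset.univ fun a => Finset.expect Finset.univ fun b => f a b) = Finset.expect Finset.univ fun y : A × B => f y.1 y.2 := by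
  simp only [Fintype.expect_eq_sum_div_card, Fintype.sum_prod_type, Fintype.card_prod, ← Finset.sum_div]
  push_cast
  rw [div_div, mul_comm]

lemma Be_avg (β : ℝ) (j n : ℕ) : (Finset.expect Finset.univ fun e : Fin j → Fin M × Fin M => Be q N β e n) = Bf M N q β j 0 n := by
  unfold Be Bf
  refine Finset.expect_congr rfl fun e _ => ?_
  have : (Finset.expect Finset.univ fun I : Fin n → Fin N => Finset.expect Finset.univ fun i : Fin n → Fin M =>
      lz (fun z : (Fin M → Fin q) × (Fin N → Fin q) => He q β e z.1 + β * ∑ k, dl (z.1 (i k)) (z.2 (I k))))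
      = Finset.expect Finset.univ fun y : (Fin n → Fin M) × (Fin n → Fin N) =>
        lz (fun z : (Fin M → Fin q) × (Fin N → Fin q) => He q β e z.1 + β * ∑ k, dl (z.1 (y.1 k)) (z.2 (y.2 k))) := by
    rw [Finset.expect_comm]
    exact expect_prod' (fun (i : Fin n → Fin M) (I : Fin n → Fin N) =>
      lz (fun z : (Fin M → Fin q) × (Fin N → Fin q) => He q β e z.1 + β * ∑ k, dl (z.1 (i k)) (z.2 (I k))))
  rw [this]
  refine Fintype.expect_equiv (Equiv.arrowProdEquivProdArrow _ _ _).symm _ _ fun y => ?_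
  rw [Fintype.expect_eq_sum_div_card]
  simp only [Finset.univ_unique, Finset.sum_singleton, Fintype.card_unique, Nat.cast_one, div_one]
  refine lz_equiv (Equiv.sumArrowEquivProdArrow _ _ _).symm _ _ fun z => ?_
  simp only [He, hB, ed, dl, Finset.univ_eq_empty, Finset.sum_empty]
  simp only [Equiv.sumArrowEquivProdArrow, Equiv.arrowProdEquivProdArrow, Equiv.coe_fn_symm_mk, Sum.elim_inl, Sum.elim_inr]
  ring_nf
  congr!

lemma Den_split [NeZero q] (hN : 1 ≤ N) (hMN : N ≤ M) {β c : ℝ} (hβ : 0 ≤ β) (hc : 0 ≤ c) :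
    Po (c * (M - N) / 2) (fun j => Po (c * N / 2) (fun K => Den (Fin M) q β (j + K))) = M * potts.p q M β c := by
  have hM : 1 ≤ M := hN.trans hMN
  haveI : Nonempty (Fin M) := ⟨⟨0, hM⟩⟩
  have hM0 : (0:ℝ) < M := by positivity
  have hMN' : (N:ℝ) ≤ M := by exact_mod_cast hMN
  have hp0 : (0:ℝ) ≤ (M - N) / M := div_nonneg (by linarith) hM0.le
  have hp1 : (M - N : ℝ) / M ≤ 1 := (div_le_one hM0).2 (by linarith [(Nat.cast_nonneg N : (0:ℝ) ≤ N)])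
  have hLB2 : LB2 (fun j K => Den (Fin M) q β (j + K)) := by
    obtain ⟨C, hC⟩ := Den_LB (V := Fin M) (q := q) hβ
    refine ⟨C, fun j l => (hC _).trans (le_of_eq ?_)⟩
    push_cast; ring
  have h := Po_split (Lam := c * M / 2) (by positivity) hp0 hp1 hLB2
  have e1 : (M - N : ℝ) / M * (c * M / 2) = c * (M - N) / 2 := by field_simp
  have e2 : (1 - (M - N : ℝ) / M) * (c * M / 2) = c * N / 2 := by field_simp; ring
  rw [e1, e2] at h
  rw [← h, p_eq hM hβ hc]
  congr 1; funext n
  set p := (M - N : ℝ) / M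
  have : ∑ x ∈ Finset.HasAntidiagonal.antidiagonal n, (n.choose x.1 : ℝ) * (p ^ x.1 * (1 - p) ^ x.2 * Den (Fin M) q β (x.1 + x.2))
      = (∑ x ∈ Finset.HasAntidiagonal.antidiagonal n, (n.choose x.1 : ℝ) * (p ^ x.1 * (1 - p) ^ x.2)) * Den (Fin M) q β n := by
    rw [Finset.sum_mul]
    refine Finset.sum_congr rfl fun x hx => ?_
    rw [Finset.HasAntidiagonal.mem_antidiagonal.1 hx]; ring
  rw [this]
  have hb : ∑ x ∈ Finset.HasAntidiagonal.antidiagonal n, (n.choose x.1 : ℝ) * (p ^ x.1 * (1 - p) ^ x.2) = 1 := by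
    have := (Commute.all p (1 - p)).add_pow' n
    simp only [add_sub_cancel, one_pow, nsmul_eq_mul] at this
    exact this.symm
  rw [hb, one_mul]

lemma partB [NeZero q] (hN : 1 ≤ N) (hMN : N ≤ M) {β c : ℝ} (hβ : 0 ≤ β) (hc : 0 ≤ c) (g : ℝ)
    (hg : ∀ L, IsRSS q L → g ≤ G1 q N β c L - G2 q N β c L) :
    N * g ≤ (M + N : ℝ) * potts.p q (M + N) β c - M * potts.p q M β c + β * c * N ^ 2 / (M + N) := by
  have hM : 1 ≤ M := hN.trans hMN
  haveI : NeZero M := ⟨by omega⟩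
  haveI : NeZero N := ⟨by omega⟩
  have hN0 : (0:ℝ) < N := by positivity
  have hMN' : (N:ℝ) ≤ M := by exact_mod_cast hMN
  have l1 : 0 ≤ c * N := by positivity
  have l2 : 0 ≤ c * N / 2 := by positivity
  have l3 : 0 ≤ c * (M - N : ℝ) / 2 := by have : (0:ℝ) ≤ M - N := by linarith
                                          positivity
  have s1 : ∀ (j : ℕ) (e : Fin j → Fin M × Fin M), N * g + Po (c * N / 2) (De q β e) ≤ Po (c * N) (Be q N β e) := by
    intro j e
    obtain ⟨L, hL, h⟩ := exists_e (q := q) hN hβ hc e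
    have := mul_le_mul_of_nonneg_left (hg L hL) hN0.le
    linarith
  have s2 : ∀ j : ℕ, N * g + Po (c * N / 2) (fun K => Den (Fin M) q β (j + K)) ≤ Po (c * N) (fun n => Bf M N q β j 0 n) := by
    intro j
    have := Finset.expect_le_expect fun e (_ : e ∈ (Finset.univ : Finset (Fin j → Fin M × Fin M))) => s1 j e
    rw [Finset.expect_add_distrib, Fintype.expect_const, Po_expect l2 _ (fun e => De_LB hβ e), Po_expect l1 _ (fun e => Be_LB hβ e)] at this
    simpa only [De_avg, Be_avg] using this
  have hLB2 : LB2 (fun j K => Den (Fin M) q β (j + K)) := by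
    obtain ⟨C, hC⟩ := Den_LB (V := Fin M) (q := q) hβ
    refine ⟨C, fun j l => (hC _).trans (le_of_eq ?_)⟩
    push_cast; ring
  have hLB3 : LB2 (fun j n => Bf M N q β j 0 n) :=
    ⟨Real.log (Fintype.card (Fin M ⊕ Fin N → Fin q)) + β, fun j l => (Bf_bound hN hMN hβ j 0 l).trans (le_of_eq (by simp))⟩
  have s3 := Po_mono l3 ((LB.const (N * g)).add (hLB2.po l2)) (hLB3.po l1) s2
  rw [Po_add l3 (LB.const _) (hLB2.po l2), Po_const, Den_split hN hMN hβ hc] at s3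
  have := Bf_final (q := q) hN hMN hβ hc
  linarith

lemma p_le [NeZero q] (hN : 1 ≤ N) {β c : ℝ} (hβ : 0 ≤ β) (hc : 0 ≤ c) : potts.p q N β c ≤ Real.log q := by
  have hN0 : (0:ℝ) < N := by positivity
  haveI : Nonempty (Fin N) := ⟨⟨0, hN⟩⟩
  have h := Po_mono (l := c * N / 2) (by positivity) (Den_LB (V := Fin N) (q := q) hβ) (LB.const (N * Real.log q)) (fun k => by
    refine Finset.expect_le Finset.univ_nonempty fun e _ => ((lz_bound (eds_nonneg hβ e) (eds_le hβ e)).2).trans (le_of_eq ?_)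
    simp)
  rw [Po_const, ← p_eq hN hβ hc] at h
  exact le_of_mul_le_mul_left h hN0

end B

theorem statement8 (q : ℕ) (hq : 2 ≤ q) (β c : ℝ) (hβ : 0 ≤ β) (hc : 0 ≤ c) :
    ∃ P : ℝ,
      Filter.Tendsto (fun N => potts.p q N β c) Filter.atTop (nhds P) ∧
      Filter.Tendsto (fun N =>
          ⨅ L : {L : Measure (SpinStruct q) // IsRSS q L},
            (G1 q N β c L.1 - G2 q N β c L.1))
        Filter.atTop (nhds P) := by
  haveI : NeZero q := ⟨by omega⟩
  haveI : Nonempty {L : Measure (SpinStruct q) // IsRSS q L} := by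
    obtain ⟨L, hL, -⟩ := exists_RSS q 1 (fun _ => 0)
    exact ⟨⟨L, hL⟩⟩
  refine limit_arg _ _ (β * c) (Real.log q) (by positivity) (fun N hN => p_le hN hβ hc)
    (fun N hN => le_ciInf fun L => partA hN L.2 hβ hc) (fun N M hN hMN => ?_)
  refine partB hN hMN hβ hc _ fun L hL => ?_
  exact ciInf_le (⟨potts.p q N β c, by rintro _ ⟨L, rfl⟩; exact partA hN L.2 hβ hc⟩ :
    BddBelow (Set.range fun L : {L : Measure (SpinStruct q) // IsRSS q L} => G1 q N β c L.1 - G2 q N β c L.1)) ⟨L, hL⟩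
end
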